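/- arXiv:2106.09615 — 5 statements merged into one kernel-verified Lean document; each statement's English description precedes it below -/
import Mathlib

section
/- There exist absolute constants c > 0, K ≥ 1 and c0 > 0 such that for every prime p and every finite set A ⊆ F_p with |A| < sqrt(p), one has max{ Sid^+_K(A), Sid^×_K(A) } ≥ c0·|A|^{1/2 + c}. -/
/-
Call `u` popular for a set `D` of about `n` elements if `D ∩ u • D` (or `D ∩ (u +ᵥ D)`) has at least
`n ^ (1 - δ)` elements. If `D` has only `n ^ (2 / 5)` popular differences, then the alteration
method, applied to a random subset of density about `n ^ (c - 1 / 2)`, leaves a Sidon set of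
`n ^ (1 / 2 + c)` elements; likewise for popular ratios and multiplicative Sidon sets.

It remains to show that popular ratios and popular differences cannot both abound. If `A` has many
popular ratios, dependent random choice produces a large set `Γ` of ratios and a large `B ⊆ A` with
`B * Γ ^ i` not much larger than `B` for all bounded `i`. Pigeonholing the popular differences of
`B * Γ ^ j` over `j`, and using dependent random choice again, one finds a set `U` of popular
differences for which `U - U` and all `γ • U`, `γ ∈ Γ`, lie in a common set not much larger than
`U`. Hence many `x = γ / γ'` satisfy `#(U + x • U) ≲ #U`. This property survives field operations,
so if `X` consists of such `x`, then so does `(X - X) / (X - X)`, which is therefore not all of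
`ZMod p` and omits some `ξ + 1` with `ξ ∈ (X - X) / (X - X)`. Then `X + (ξ + 1) * X` has `#X ^ 2`
elements, all with the same property; doing this twice gives `#X ^ 4` of them, more than the `≲ #U`
that a second moment count allows.
-/

open scoped BigOperators

/-- The number of pairs `(x, y) ∈ S × S` with `x = lam * y`. -/
noncomputable def mulPairCount {F : Type*} [Mul F] (lam : F) (S : Finset F) : ℕ :=
  Set.ncard {q : F × F | q.1 ∈ S ∧ q.2 ∈ S ∧ q.1 = lam * q.2}

/-- `S` is multiplicatively `K`-Sidon. -/
def IsMulSidon {F : Type*} [MulOneClass F] (K : ℝ) (S : Finset F) : Prop :=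
  ∀ lam : F, lam ≠ 1 → (mulPairCount lam S : ℝ) ≤ K

/-- The number of pairs `(x, y) ∈ S × S` with `x - y = mu`. -/
noncomputable def subPairCount {F : Type*} [Sub F] (mu : F) (S : Finset F) : ℕ :=
  Set.ncard {q : F × F | q.1 ∈ S ∧ q.2 ∈ S ∧ q.1 - q.2 = mu}

/-- `S` is additively `K`-Sidon. -/
def IsAddSidon {F : Type*} [SubtractionMonoid F] (K : ℝ) (S : Finset F) : Prop :=
  ∀ mu : F, mu ≠ 0 → (subPairCount mu S : ℝ) ≤ K

section

open Finset
open scoped Pointwise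

section ProbabilisticMethod

lemma card_sub_card_le_card_sdiff_image {α β : Type*} [DecidableEq α] (s : Finset α)
    (t : Finset β) (g : β → α) : (#s : ℝ) - #t ≤ #(s \ t.image g) := by
  have h : #s ≤ #(s \ t.image g) + #t :=
    Nat.sub_le_iff_le_add.1 ((Nat.sub_le_sub_left card_image_le _).trans (le_card_sdiff _ _))
  exact sub_le_iff_le_add.2 (mod_cast h)

lemma sum_powerset_superset_pow_mul_pow {V R : Type*} [DecidableEq V] [CommRing R]
    {A e : Finset V} (he : e ⊆ A) (q : R) :
    ∑ W ∈ A.powerset with e ⊆ W, q ^ #W * (1 - q) ^ (#A - #W) = q ^ #e := by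
  have hsplit : A.powerset.filter (e ⊆ ·) = (A \ e).powerset.image (e ∪ ·) := by
    rw [← Icc_eq_image_powerset he]
    ext W
    simp only [mem_filter, mem_powerset, mem_Icc, and_comm]
  have hdisj : ∀ W ∈ (A \ e).powerset, Disjoint e W := fun W hW =>
    disjoint_sdiff.mono_right (mem_powerset.1 hW)
  rw [hsplit, sum_image fun W hW W' hW' h => by
    rw [← union_sdiff_cancel_left (hdisj W hW), h, union_sdiff_cancel_left (hdisj W' hW')]]
  calc ∑ W ∈ (A \ e).powerset, q ^ #(e ∪ W) * (1 - q) ^ (#A - #(e ∪ W))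
      = ∑ W ∈ (A \ e).powerset, q ^ #e * (q ^ #W * (1 - q) ^ (#(A \ e) - #W)) :=
        sum_congr rfl fun W hW => by
          rw [card_union_of_disjoint (hdisj W hW), card_sdiff_of_subset he, pow_add, mul_assoc,
            Nat.sub_sub]
    _ = q ^ #e := by
        rw [← mul_sum, sum_pow_mul_eq_add_pow, add_sub_cancel, one_pow, mul_one]

lemma sum_powerset_pow_mul_pow_mul_card_filter {V R : Type*} [DecidableEq V] [CommRing R]
    {A : Finset V} {E : Finset (Finset V)} (hE : ∀ e ∈ E, e ⊆ A) (q : R) :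
    ∑ W ∈ A.powerset, q ^ #W * (1 - q) ^ (#A - #W) * #{e ∈ E | e ⊆ W} = ∑ e ∈ E, q ^ #e := by
  simp only [card_filter, Nat.cast_sum, mul_sum, Nat.cast_ite, Nat.cast_one, Nat.cast_zero,
    mul_ite, mul_one, mul_zero]
  rw [sum_comm]
  exact sum_congr rfl fun e he => by
    rw [← sum_filter, sum_powerset_superset_pow_mul_pow (hE e he)]

lemma sum_powerset_pow_mul_pow_mul_card {V R : Type*} [CommRing R] (A : Finset V) (q : R) :
    ∑ W ∈ A.powerset, q ^ #W * (1 - q) ^ (#A - #W) * #W = q * #A := by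
  classical
  have h := sum_powerset_pow_mul_pow_mul_card_filter
    (A := A) (E := A.map ⟨_, singleton_injective⟩) (by simp) q
  simp only [sum_map, Function.Embedding.coeFn_mk, card_singleton, pow_one, sum_const,
    nsmul_eq_mul, filter_map, card_map, Function.comp_def, singleton_subset_iff,
    filter_mem_eq_inter] at h
  rw [mul_comm, ← h]
  exact sum_congr rfl fun W hW => by rw [inter_eq_right.2 (mem_powerset.1 hW)]

lemma exists_subset_sub_sum_pow_le_card {V : Type*} {A : Finset V} {E : Finset (Finset V)}
    (hE : ∀ e ∈ E, e ⊆ A ∧ e.Nonempty) {q : ℝ} (hq0 : 0 ≤ q) (hq1 : q ≤ 1) :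
    ∃ S ⊆ A, (∀ e ∈ E, ¬ e ⊆ S) ∧ q * #A - ∑ e ∈ E, q ^ #e ≤ #S := by
  classical
  set w : Finset V → ℝ := fun W => q ^ #W * (1 - q) ^ (#A - #W) with hw
  have hw0 : ∀ W ∈ A.powerset, 0 ≤ w W := fun W _ =>
    mul_nonneg (pow_nonneg hq0 _) (pow_nonneg (sub_nonneg.2 hq1) _)
  have hw1 : ∑ W ∈ A.powerset, w W = 1 := by
    rw [hw, sum_pow_mul_eq_add_pow, add_sub_cancel, one_pow]
  obtain ⟨W, hWA, hW⟩ := (convexOn_id convex_univ).exists_ge_of_centerMass hw0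
    (hw1 ▸ one_pos) (p := fun W => (#W : ℝ) - #{e ∈ E | e ⊆ W}) (fun _ _ => Set.mem_univ _)
  rw [centerMass_eq_of_sum_1 _ _ hw1] at hW
  simp only [smul_eq_mul, mul_sub, sum_sub_distrib, hw,
    sum_powerset_pow_mul_pow_mul_card,
    sum_powerset_pow_mul_pow_mul_card_filter fun e he => (hE e he).1, id] at hW
  choose g hg using fun e : ({e ∈ E | e ⊆ W} : Finset _) => (hE e (mem_filter.1 e.2).1).2
  refine ⟨W \ univ.image g, sdiff_subset.trans (mem_powerset.1 hWA), fun e he hsub => ?_, ?_⟩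
  · have heW : e ∈ ({e ∈ E | e ⊆ W} : Finset _) := mem_filter.2 ⟨he, hsub.trans sdiff_subset⟩
    exact (mem_sdiff.1 (hsub (hg ⟨e, heW⟩))).2 (mem_image_of_mem g (mem_univ _))
  · refine hW.trans (le_trans ?_ (card_sub_card_le_card_sdiff_image _ _ _))
    rw [card_univ, Fintype.card_coe]

lemma sum_card_filter_forall_mem_pow {α β : Type*} [DecidableEq β] {D : Finset β} {U : Finset α}
    {t : α → Finset β} (ht : ∀ u ∈ U, t u ⊆ D) (s : ℕ) :
    ∑ f ∈ Fintype.piFinset fun _ : Fin s => D, #{u ∈ U | ∀ i, f i ∈ t u} =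
      ∑ u ∈ U, #(t u) ^ s := by
  simp only [card_filter]
  rw [sum_comm]
  refine sum_congr rfl fun u hu => ?_
  rw [← card_filter, ← Fintype.card_fin s, ← card_univ, ← prod_const, ← Fintype.card_piFinset,
    card_univ, Fintype.card_fin]
  congr 1
  ext f
  simpa only [mem_filter, Fintype.mem_piFinset, and_iff_right_iff_imp] using
    fun hf i => ht u hu (hf i)

lemma exists_forall_mem_sub_le {α γ β : Type*} [DecidableEq β] {D : Finset β} {U : Finset α}
    {V : Finset γ} {t : α → Finset β} {r : γ → Finset β} (ht : ∀ u ∈ U, t u ⊆ D)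
    (hr : ∀ v ∈ V, r v ⊆ D) (hD : D.Nonempty) (s : ℕ) :
    ∃ f : Fin s → β, ∑ u ∈ U, (#(t u) : ℝ) ^ s - ∑ v ∈ V, (#(r v) : ℝ) ^ s ≤
      (#{u ∈ U | ∀ i, f i ∈ t u} - #{v ∈ V | ∀ i, f i ∈ r v} : ℝ) * (#D : ℝ) ^ s := by
  have hpos : (0 : ℝ) < (#D : ℝ) ^ s := by positivity [hD.card_pos]
  obtain ⟨f, -, hf⟩ : ∃ f ∈ Fintype.piFinset fun _ : Fin s => D,
      (∑ u ∈ U, (#(t u) : ℝ) ^ s - ∑ v ∈ V, (#(r v) : ℝ) ^ s) / (#D : ℝ) ^ s ≤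
        (#{u ∈ U | ∀ i, f i ∈ t u} : ℝ) - #{v ∈ V | ∀ i, f i ∈ r v} := by
    refine exists_le_of_sum_le (Fintype.piFinset_nonempty.2 fun _ => hD) (le_of_eq ?_)
    rw [sum_const, nsmul_eq_mul, Fintype.card_piFinset_const, Nat.cast_pow,
      mul_div_cancel₀ _ hpos.ne', sum_sub_distrib]
    exact_mod_cast congrArg₂ (fun a b : ℕ => (a - b : ℝ))
      (sum_card_filter_forall_mem_pow ht s).symm (sum_card_filter_forall_mem_pow hr s).symm
  exact ⟨f, (div_le_iff₀ hpos).1 hf⟩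

lemma exists_subset_le_card_inter {α β : Type*} [DecidableEq β] {D : Finset β}
    {U : Finset α} {t : α → Finset β} (ht : ∀ u ∈ U, t u ⊆ D) (hD : D.Nonempty) {τ τ' : ℝ}
    (hτ : 0 ≤ τ) (hτ' : 0 ≤ τ') (htτ : ∀ u ∈ U, τ ≤ #(t u)) {s : ℕ}
    (hs : 2 * #U * τ' ^ s ≤ τ ^ s) :
    ∃ U' ⊆ U, (∀ x ∈ U', ∀ y ∈ U', τ' ≤ #(t x ∩ t y)) ∧ #U * τ ^ s ≤ 2 * #U' * (#D : ℝ) ^ s := by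
  classical
  set bad : Finset (α × α) := {q ∈ U ×ˢ U | (#(t q.1 ∩ t q.2) : ℝ) < τ'}
  have hgood_sum : #U * τ ^ s ≤ ∑ u ∈ U, (#(t u) : ℝ) ^ s := by
    rw [← nsmul_eq_mul]
    exact card_nsmul_le_sum _ _ _ fun u hu => pow_le_pow_left₀ hτ (htτ u hu) s
  have hbad_sum : ∑ q ∈ bad, (#(t q.1 ∩ t q.2) : ℝ) ^ s ≤ #U * τ ^ s / 2 := by
    calc ∑ q ∈ bad, (#(t q.1 ∩ t q.2) : ℝ) ^ s
        ≤ #bad * τ' ^ s := by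
          rw [← nsmul_eq_mul]
          exact sum_le_card_nsmul _ _ _ fun q hq =>
            pow_le_pow_left₀ (Nat.cast_nonneg _) (mem_filter.1 hq).2.le s
      _ ≤ (#U * #U : ℝ) * τ' ^ s := by
          gcongr
          exact mod_cast (card_filter_le _ _).trans (card_product _ _).le
      _ ≤ #U * τ ^ s / 2 := by
          linarith [mul_le_mul_of_nonneg_left hs (Nat.cast_nonneg (α := ℝ) #U)]
  obtain ⟨f, hf⟩ := exists_forall_mem_sub_le ht (V := bad) (r := fun q => t q.1 ∩ t q.2)
    (fun q hq => inter_subset_left.trans (ht _ (mem_product.1 (mem_filter.1 hq).1).1)) hD s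
  refine ⟨{u ∈ U | ∀ i, f i ∈ t u} \ {q ∈ bad | ∀ i, f i ∈ t q.1 ∩ t q.2}.image Prod.fst,
    sdiff_subset.trans (filter_subset _ _), fun x hx y hy => ?_, ?_⟩
  · by_contra! hlt
    rw [mem_sdiff, mem_filter] at hx hy
    refine hx.2 (mem_image.2 ⟨(x, y), mem_filter.2 ⟨?_, fun i => ?_⟩, rfl⟩)
    · exact mem_filter.2 ⟨mk_mem_product hx.1.1 hy.1.1, hlt⟩
    · exact mem_inter.2 ⟨hx.1.2 i, hy.1.2 i⟩
  · have hcard := mul_le_mul_of_nonneg_right (card_sub_card_le_card_sdiff_image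
      {u ∈ U | ∀ i, f i ∈ t u} {q ∈ bad | ∀ i, f i ∈ t q.1 ∩ t q.2} Prod.fst)
      (pow_nonneg (Nat.cast_nonneg (α := ℝ) #D) s)
    linarith

lemma mul_card_le_card_filter_of_le_sum {ι : Type*} {s : Finset ι} {f : ι → ℝ} {M ε : ℝ}
    (hM : 0 < M) (hε : 0 ≤ ε) (hf : ∀ i ∈ s, f i ≤ M) (hsum : 2 * ε * M * #s ≤ ∑ i ∈ s, f i) :
    ε * #s ≤ #{i ∈ s | ε * M ≤ f i} := by
  have hle : ∑ i ∈ s, f i ≤ #{i ∈ s | ε * M ≤ f i} * M + #s * (ε * M) := by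
    rw [← sum_filter_add_sum_filter_not s (ε * M ≤ f ·), ← nsmul_eq_mul, ← nsmul_eq_mul]
    refine add_le_add (sum_le_card_nsmul _ _ _ fun i hi => hf i (mem_filter.1 hi).1)
      ((sum_le_card_nsmul _ _ _ fun i hi => (not_le.1 (mem_filter.1 hi).2).le).trans ?_)
    gcongr
    exact filter_subset _ _
  nlinarith

lemma sum_card_eq_sum_card_filter_mem {ι β : Type*} [DecidableEq β] {s : Finset ι}
    {t : ι → Finset β} {W : Finset β} (ht : ∀ i ∈ s, t i ⊆ W) :
    ∑ i ∈ s, #(t i) = ∑ w ∈ W, #{i ∈ s | w ∈ t i} := by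
  simp only [card_filter]
  rw [sum_comm]
  exact sum_congr rfl fun i hi => by
    rw [← card_filter, filter_mem_eq_inter, inter_eq_right.2 (ht i hi)]

lemma sq_sum_card_le_card_mul_sum_card_inter {ι β : Type*} [DecidableEq β] {s : Finset ι}
    {t : ι → Finset β} {W : Finset β} (ht : ∀ i ∈ s, t i ⊆ W) :
    (∑ i ∈ s, #(t i)) ^ 2 ≤ #W * ∑ i ∈ s, ∑ j ∈ s, #(t i ∩ t j) := by
  have hpairs : ∑ i ∈ s, ∑ j ∈ s, #(t i ∩ t j) = ∑ w ∈ W, #{i ∈ s | w ∈ t i} ^ 2 := by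
    rw [← sum_product', sum_card_eq_sum_card_filter_mem fun q hq =>
      inter_subset_left.trans (ht _ (mem_product.1 hq).1)]
    exact sum_congr rfl fun w _ => by
      simp only [mem_inter]
      rw [filter_product (w ∈ t ·) (w ∈ t ·), card_product, sq]
  rw [hpairs, sum_card_eq_sum_card_filter_mem ht]
  exact sq_sum_le_card_mul_sum_sq

lemma exists_card_le_mul_card_filter_card_inter {ι β : Type*} [DecidableEq β] {s : Finset ι}
    {t : ι → Finset β} {W : Finset β} {m : ℕ} {C : ℝ} (hs : s.Nonempty) (ht : ∀ i ∈ s, t i ⊆ W)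
    (hm : ∀ i ∈ s, #(t i) = m) (hm0 : 0 < m) (hC : 0 < C) (hW : #W ≤ C * m) :
    ∃ j ∈ s, #s ≤ 2 * C * #{i ∈ s | m ≤ 2 * C * #(t i ∩ t j)} := by
  have hm0' : (0 : ℝ) < m := Nat.cast_pos.2 hm0
  have hcs : (#s * m : ℝ) ^ 2 ≤ C * m * ∑ j ∈ s, ∑ i ∈ s, (#(t j ∩ t i) : ℝ) := by
    have h := sq_sum_card_le_card_mul_sum_card_inter ht
    rw [sum_congr rfl hm, sum_const, smul_eq_mul] at h
    have h' : (#s * m : ℝ) ^ 2 ≤ #W * ∑ j ∈ s, ∑ i ∈ s, (#(t j ∩ t i) : ℝ) := mod_cast h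
    exact h'.trans (by gcongr)
  obtain ⟨j, hj, hsum⟩ : ∃ j ∈ s, #s * m / C ≤ ∑ i ∈ s, (#(t j ∩ t i) : ℝ) := by
    refine exists_le_of_sum_le hs ?_
    rw [sum_const, nsmul_eq_mul, ← mul_div_assoc, div_le_iff₀ hC]
    refine le_of_mul_le_mul_left ?_ hm0'
    linarith
  refine ⟨j, hj, ?_⟩
  have h := mul_card_le_card_filter_of_le_sum (s := s) (f := fun i => (#(t i ∩ t j) : ℝ))
    (ε := 1 / (2 * C)) hm0' (by positivity)
    (fun i hi => Nat.cast_le.2 ((card_le_card inter_subset_left).trans_eq (hm i hi))) ?_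
  · simpa only [one_div_mul_eq_div, div_le_iff₀' (mul_pos two_pos hC)] using h
  · simp only [inter_comm _ (t j)]
    refine le_of_eq_of_le ?_ hsum
    field_simp

lemma exists_succ_le_mul {u : ℕ → ℝ} {x : ℝ} {J : ℕ} (hx : 0 ≤ x) (hu : u J < x ^ J * u 0) :
    ∃ j < J, u (j + 1) ≤ x * u j := by
  by_contra! h
  exact hu.not_ge (geom_le hx J fun j hj => (h j hj).le)

end ProbabilisticMethod

section Group

variable {G : Type*} [Group G] [DecidableEq G]

/-- The quotients `u` with at least `τ` representations `u = x / y`, `x, y ∈ A`. The number of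
representations of `u` is encoded as `#(A ∩ u • A)`. -/
@[to_additive /-- The differences `u` with at least `τ` representations `u = x - y`, `x, y ∈ A`.
The number of representations of `u` is encoded as `#(A ∩ (u +ᵥ A))`. -/]
noncomputable def popularDiv (A : Finset G) (τ : ℝ) : Finset G :=
  {u ∈ A / A | τ ≤ #(A ∩ u • A)}

@[to_additive]
lemma mem_div_of_inter_smul_nonempty {A : Finset G} {u : G} (h : (A ∩ u • A).Nonempty) :
    u ∈ A / A := by
  obtain ⟨x, hx⟩ := h
  obtain ⟨hxA, y, hyA, rfl⟩ := (mem_inter.1 hx).imp_right mem_smul_finset.1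
  exact mem_div.2 ⟨_, hxA, y, hyA, mul_div_cancel_right u y⟩

@[to_additive]
lemma mem_popularDiv {A : Finset G} {τ : ℝ} (hτ : 0 < τ) {u : G} :
    u ∈ popularDiv A τ ↔ τ ≤ #(A ∩ u • A) :=
  mem_filter.trans <| and_iff_right_of_imp fun h =>
    mem_div_of_inter_smul_nonempty <| card_pos.1 <| Nat.cast_pos.1 (hτ.trans_le h)

@[to_additive]
lemma popularDiv_mono {A B : Finset G} (hAB : A ⊆ B) {σ τ : ℝ} (hστ : σ ≤ τ) :
    popularDiv A τ ⊆ popularDiv B σ := by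
  intro u hu
  obtain ⟨huA, hu⟩ := mem_filter.1 hu
  have hsub : A ∩ u • A ⊆ B ∩ u • B := by gcongr
  exact mem_filter.2 ⟨div_subset_div hAB hAB huA,
    hστ.trans (hu.trans (Nat.cast_le.2 (card_le_card hsub)))⟩

@[to_additive]
lemma sum_card_inter_smul (A : Finset G) : ∑ u ∈ A / A, #(A ∩ u • A) = #A ^ 2 := by
  rw [sq, ← card_product, card_eq_sum_card_fiberwise (s := A ×ˢ A) (f := fun q => q.1 / q.2)
    fun q hq => div_mem_div (mem_product.1 hq).1 (mem_product.1 hq).2]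
  exact sum_congr rfl fun u _ => by rw [card_inter_smul, card_div_eq]

@[to_additive]
lemma sum_card_inter_smul_le (A T : Finset G) : ∑ u ∈ T, #(A ∩ u • A) ≤ #A ^ 2 := by
  rw [← sum_card_inter_smul, ← sum_filter_of_ne (p := (· ∈ A / A)) fun u _ hu =>
    mem_div_of_inter_smul_nonempty (card_pos.1 (Nat.pos_of_ne_zero hu))]
  exact sum_le_sum_of_subset fun u hu => (mem_filter.1 hu).2

@[to_additive mul_card_popularSub_le]
lemma mul_card_popularDiv_le (A : Finset G) (τ : ℝ) :
    τ * #(popularDiv A τ) ≤ (#A : ℝ) ^ 2 := by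
  calc τ * #(popularDiv A τ)
      ≤ ∑ u ∈ popularDiv A τ, (#(A ∩ u • A) : ℝ) := by
        rw [mul_comm, ← nsmul_eq_mul]
        exact card_nsmul_le_sum _ _ _ fun u hu => (mem_filter.1 hu).2
    _ ≤ (#A : ℝ) ^ 2 := mod_cast sum_card_inter_smul_le A _

@[to_additive sum_card_inter_vadd_pow_le]
lemma sum_card_inter_smul_pow_le (A : Finset G) {τ : ℝ} (hτ : 0 ≤ τ) (k : ℕ) :
    ∑ u ∈ A / A, (#(A ∩ u • A) : ℝ) ^ (k + 1) ≤
      #(popularDiv A τ) * (#A : ℝ) ^ (k + 1) + (#A : ℝ) ^ 2 * τ ^ k := by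
  rw [← sum_filter_add_sum_filter_not (A / A) fun u => τ ≤ #(A ∩ u • A)]
  refine add_le_add ?_ ?_
  · rw [← nsmul_eq_mul]
    refine sum_le_card_nsmul _ _ _ fun u _ => pow_le_pow_left₀ (Nat.cast_nonneg _) ?_ _
    exact mod_cast card_le_card inter_subset_left
  · calc ∑ u ∈ A / A with ¬ τ ≤ #(A ∩ u • A), (#(A ∩ u • A) : ℝ) ^ (k + 1)
        ≤ ∑ u ∈ A / A with ¬ τ ≤ #(A ∩ u • A), (#(A ∩ u • A) : ℝ) * τ ^ k := by
          refine sum_le_sum fun u hu => ?_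
          rw [pow_succ']
          gcongr
          exact (not_le.1 (mem_filter.1 hu).2).le
      _ ≤ ∑ u ∈ A / A, (#(A ∩ u • A) : ℝ) * τ ^ k :=
          sum_le_sum_of_subset_of_nonneg (filter_subset _ _) fun _ _ _ => by positivity
      _ = (#A : ℝ) ^ 2 * τ ^ k := by
          rw [← sum_mul]
          exact_mod_cast congrArg (fun m : ℕ => (m : ℝ) * τ ^ k) (sum_card_inter_smul A)

@[to_additive]
lemma exists_subset_disjoint_smul (R : Finset G) {u : G} (hu : u ≠ 1) :
    ∃ B ⊆ R, #R ≤ 3 * #B ∧ Disjoint B (u • B) := by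
  obtain ⟨B, hB, hmax⟩ := exists_max_image {B ∈ R.powerset | Disjoint B (u • B)} card ⟨∅, by simp⟩
  obtain ⟨hBR, hdisj⟩ := (mem_filter.1 hB).imp_left mem_powerset.1
  refine ⟨B, hBR, ?_, hdisj⟩
  have hcover : R ⊆ B ∪ u • B ∪ u⁻¹ • B := fun a ha => by
    by_contra! hn
    simp only [mem_union, not_or, mem_inv_smul_finset_iff] at hn
    have hins : Disjoint (insert a B) (u • insert a B) := by
      rw [smul_finset_insert, disjoint_insert_left, disjoint_insert_right, mem_insert, not_or]
      exact ⟨⟨by simpa [eq_comm] using hu, hn.1.2⟩, hn.2, hdisj⟩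
    have := hmax _ (mem_filter.2 ⟨mem_powerset.2 (insert_subset ha hBR), hins⟩)
    rw [card_insert_of_notMem hn.1.1] at this
    lia
  calc #R ≤ #B + #(u • B) + #(u⁻¹ • B) :=
        (card_le_card hcover).trans ((card_union_le _ _).trans (by gcongr; exact card_union_le _ _))
    _ = 3 * #B := by rw [card_smul_finset, card_smul_finset]; ring

@[to_additive]
lemma exists_subset_forall_card_inter_smul_lt (A : Finset G) {k : ℕ} (hk : 1 ≤ k) {q : ℝ}
    (hq0 : 0 ≤ q) (hq1 : q ≤ 1) :
    ∃ S ⊆ A, (∀ u : G, u ≠ 1 → #(S ∩ u • S) < 3 * k) ∧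
      q * #A - q ^ (2 * k) * ∑ u ∈ A / A, (#(A ∩ u • A) : ℝ) ^ k ≤ #S := by
  set P : Finset (Σ _ : G, Finset G) := {p ∈ (A / A).sigma fun u => powersetCard k (A ∩ u • A) |
    Disjoint p.2 (p.1⁻¹ • p.2)} with hP
  set E := P.image fun p => p.2 ∪ p.1⁻¹ • p.2 with hE
  have hEprop : ∀ e ∈ E, e ⊆ A ∧ #e = 2 * k := by
    simp only [hE, hP, mem_image, mem_filter, mem_sigma, mem_powersetCard]
    rintro _ ⟨⟨u, B⟩, ⟨⟨-, hBA, hBk⟩, hdisj⟩, rfl⟩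
    refine ⟨union_subset (hBA.trans inter_subset_left) ?_, ?_⟩
    · exact smul_finset_subset_iff.2 ((inv_inv u).symm ▸ hBA.trans inter_subset_right)
    · rw [card_union_of_disjoint hdisj, card_smul_finset, hBk, two_mul]
  have hEcard : (#E : ℝ) ≤ ∑ u ∈ A / A, (#(A ∩ u • A) : ℝ) ^ k := by
    have : #E ≤ ∑ u ∈ A / A, #(A ∩ u • A) ^ k := by
      refine card_image_le.trans ((card_filter_le _ _).trans ?_)
      rw [card_sigma]
      exact sum_le_sum fun u _ => (card_powersetCard _ _).trans_le (Nat.choose_le_pow _ _)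
    exact_mod_cast this
  obtain ⟨S, hSA, hS, hScard⟩ := exists_subset_sub_sum_pow_le_card (fun e he =>
    ⟨(hEprop e he).1, card_pos.1 ((hEprop e he).2 ▸ by lia)⟩) hq0 hq1
  refine ⟨S, hSA, fun u hu => ?_, le_trans ?_ hScard⟩
  · by_contra! hle
    obtain ⟨B, hBS, hBcard, hdisj⟩ := exists_subset_disjoint_smul (S ∩ u • S) (inv_ne_one.2 hu)
    obtain ⟨C, hCB, hCk⟩ := exists_subset_card_eq (show k ≤ #B by lia)
    have hCS := hCB.trans hBS
    have hCA := hCS.trans (inter_subset_inter hSA (smul_finset_subset_smul_finset hSA))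
    refine hS (C ∪ u⁻¹ • C) (mem_image.2 ⟨⟨u, C⟩, mem_filter.2
      ⟨mem_sigma.2 ⟨?_, mem_powersetCard.2 ⟨hCA, hCk⟩⟩, ?_⟩, rfl⟩) ?_
    · exact mem_div_of_inter_smul_nonempty ((card_pos.1 (by lia)).mono hCA)
    · exact hdisj.mono hCB (smul_finset_subset_smul_finset hCB)
    · exact union_subset (hCS.trans inter_subset_left)
        (smul_finset_subset_iff.2 ((inv_inv u).symm ▸ hCS.trans inter_subset_right))
  · have hsum : ∑ e ∈ E, q ^ #e = q ^ (2 * k) * #E := by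
      rw [mul_comm, ← nsmul_eq_mul]
      exact sum_eq_card_nsmul fun e he => by rw [(hEprop e he).2]
    rw [hsum]
    gcongr

@[to_additive sum_card_inter_vadd_pow_le_two_mul_rpow]
lemma sum_card_inter_smul_pow_le_two_mul_rpow {A : Finset G} {n d α : ℝ} {l : ℕ} (hn : 1 ≤ n)
    (hα : 0 ≤ α) (hd : 1 ≤ d * l) (hA : #A ≤ n) (hP : #(popularDiv A (n ^ (1 - d))) ≤ n ^ α) :
    ∑ u ∈ A / A, (#(A ∩ u • A) : ℝ) ^ (l + 1) ≤ 2 * n ^ (l + 1 + α) := by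
  have hn0 : 0 < n := by linarith
  calc ∑ u ∈ A / A, (#(A ∩ u • A) : ℝ) ^ (l + 1)
      ≤ n ^ α * n ^ (l + 1) + n ^ 2 * (n ^ (1 - d)) ^ l :=
        (sum_card_inter_smul_pow_le A (by positivity) l).trans <| add_le_add
          (mul_le_mul hP (pow_le_pow_left₀ (Nat.cast_nonneg _) hA _) (by positivity)
            (by positivity))
          (mul_le_mul_of_nonneg_right (pow_le_pow_left₀ (Nat.cast_nonneg _) hA 2)
            (by positivity))
    _ = n ^ (l + 1 + α) + n ^ (2 + (1 - d) * l) := by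
        rw [Real.rpow_add hn0 2, Real.rpow_mul hn0.le, Real.rpow_natCast, Real.rpow_two,
          Real.rpow_add hn0, mul_comm, ← Nat.cast_add_one, Real.rpow_natCast]
    _ ≤ n ^ (l + 1 + α) + n ^ (l + 1 + α) :=
        add_le_add le_rfl (Real.rpow_le_rpow_of_exponent_le hn (by linarith))
    _ = 2 * n ^ (l + 1 + α) := by ring

@[to_additive]
lemma exists_subset_rpow_le_card_of_card_popularDiv_le {A : Finset G} {n c d α : ℝ} {l : ℕ}
    (hn : 1 ≤ n) (hα : 0 ≤ α) (hd : 1 ≤ d * l) (hc : c * (4 * l + 3) ≤ 1 / 2 - α)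
    (hA1 : n ^ (1 - c) ≤ #A) (hA2 : #A ≤ n) (hP : #(popularDiv A (n ^ (1 - d))) ≤ n ^ α) :
    ∃ S ⊆ A, (∀ u : G, u ≠ 1 → #(S ∩ u • S) < 3 * (l + 1)) ∧ n ^ (1 / 2 + c) / 8 ≤ #S := by
  have hn0 : 0 < n := by linarith
  have hc4 : c ≤ 1 / 4 := by by_contra!; nlinarith [Nat.cast_nonneg (α := ℝ) l]
  set q : ℝ := n ^ (2 * c - 1 / 2) / 4 with hq
  have hq0 : 0 < q := by positivity
  have hq1 : q ≤ 1 := by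
    have := Real.rpow_le_one_of_one_le_of_nonpos hn (show 2 * c - 1 / 2 ≤ 0 by linarith)
    linarith
  have hqA : q * n ^ (1 - c) = n ^ (1 / 2 + c) / 4 := by
    rw [hq, div_mul_eq_mul_div, ← Real.rpow_add hn0]
    ring_nf
  have hqpow : q ^ (2 * l + 1) * (2 * n ^ (l + 1 + α)) ≤ n ^ (1 - c) / 2 := by
    calc q ^ (2 * l + 1) * (2 * n ^ (l + 1 + α))
        ≤ (n ^ (2 * c - 1 / 2)) ^ (2 * l + 1) / 4 * (2 * n ^ (l + 1 + α)) := by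
          rw [hq, div_pow]
          gcongr
          exact le_self_pow₀ (by norm_num) (by simp)
      _ = n ^ ((2 * c - 1 / 2) * (2 * l + 1 : ℕ) + (l + 1 + α)) / 2 := by
          rw [Real.rpow_add hn0 ((2 * c - 1 / 2) * _), Real.rpow_mul hn0.le, Real.rpow_natCast]
          ring
      _ ≤ n ^ (1 - c) / 2 := by
          gcongr
          push_cast
          linarith
  obtain ⟨S, hSA, hS, hScard⟩ :=
    exists_subset_forall_card_inter_smul_lt A (Nat.le_add_left 1 l) hq0.le hq1
  refine ⟨S, hSA, hS, le_trans ?_ hScard⟩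
  have hmain : q * n ^ (1 - c) ≤ q * #A := by gcongr
  have hedges : q ^ (2 * (l + 1)) * ∑ u ∈ A / A, (#(A ∩ u • A) : ℝ) ^ (l + 1) ≤
      q * (n ^ (1 - c) / 2) := by
    rw [show 2 * (l + 1) = 2 * l + 1 + 1 by ring, pow_succ', mul_assoc]
    gcongr
    refine le_trans ?_ hqpow
    gcongr
    exact sum_card_inter_smul_pow_le_two_mul_rpow hn hα hd hA2 hP
  linarith

@[to_additive]
lemma card_inter_inv_smul (D : Finset G) (u : G) : #(D ∩ u⁻¹ • D) = #(D ∩ u • D) := by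
  rw [← card_smul_finset u (D ∩ u⁻¹ • D), smul_finset_inter, smul_inv_smul, inter_comm]

@[to_additive]
lemma card_smul_inter_smul_self (D : Finset G) (u v : G) :
    #(u • D ∩ v • D) = #(D ∩ (u⁻¹ * v) • D) := by
  rw [← card_smul_finset u⁻¹, smul_finset_inter, inv_smul_smul, smul_smul]

@[to_additive]
lemma one_mem_popularDiv {D : Finset G} {τ : ℝ} (hτ : 0 < τ) (hD : τ ≤ #D) :
    1 ∈ popularDiv D τ :=
  (mem_popularDiv hτ).2 (by rwa [one_smul, inter_self])

@[to_additive]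
lemma exists_subset_popularDiv {D : Finset G} (hD : D.Nonempty) {τ τ' : ℝ} (hτ : 0 ≤ τ)
    (hτ' : 0 < τ') {s : ℕ} (hs : 2 * #(popularDiv D τ) * τ' ^ s ≤ τ ^ s) :
    ∃ L ⊆ popularDiv D τ, L / L ⊆ popularDiv D τ' ∧
      #(popularDiv D τ) * τ ^ s ≤ 2 * #L * (#D : ℝ) ^ s := by
  obtain ⟨L, hL, hinter, hcard⟩ := exists_subset_le_card_inter
    (t := fun u : G => D ∩ u⁻¹ • D) (fun _ _ => inter_subset_left) hD hτ hτ'.le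
    (fun u hu => (mem_filter.1 hu).2.trans_eq (by rw [card_inter_inv_smul])) hs
  refine ⟨L, hL, div_subset_iff.2 fun x hx y hy => (mem_popularDiv hτ').2 ?_, hcard⟩
  have hxy := card_smul_inter_smul_self D x⁻¹ y⁻¹
  rw [inv_inv, ← div_eq_mul_inv] at hxy
  rw [← hxy]
  exact (hinter x hx y hy).trans
    (mod_cast card_le_card (inter_subset_inter inter_subset_right inter_subset_right))

@[to_additive]
lemma card_popularDiv_rpow_le {D : Finset G} {n a b : ℝ} (hn : 0 < n) (hD : #D ≤ n ^ (1 + b)) :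
    #(popularDiv D (n ^ (1 - a))) ≤ n ^ (1 + a + 2 * b) := by
  refine le_of_mul_le_mul_left ?_ (Real.rpow_pos_of_pos hn (1 - a))
  calc n ^ (1 - a) * #(popularDiv D (n ^ (1 - a)))
      ≤ (#D : ℝ) ^ 2 := mul_card_popularDiv_le D _
    _ ≤ (n ^ (1 + b)) ^ 2 := by gcongr
    _ = n ^ (1 - a) * n ^ (1 + a + 2 * b) := by
      rw [← Real.rpow_mul_natCast hn.le, ← Real.rpow_add hn]
      ring_nf

@[to_additive]
lemma exists_subset_popularDiv_rpow {D : Finset G} {n η δ δ' : ℝ} (hD : D.Nonempty) (hn : 1 ≤ n)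
    (hη1 : η ≤ 1) (hnη : 2 ≤ n ^ η) (hδ' : 0 < δ') (hδ'1 : δ' ≤ 1)
    (hδ : 14 * δ = η * δ') (hDcard : #D ≤ n ^ (1 + δ)) :
    ∃ L ⊆ popularDiv D (n ^ (1 - δ)), L / L ⊆ popularDiv D (n ^ (1 - δ')) ∧
      #(popularDiv D (n ^ (1 - δ))) ≤ (n ^ η) ^ 2 * #L := by
  have hn0 : 0 < n := by linarith
  have hη0 : 0 < η := by
    by_contra! h
    linarith [Real.rpow_le_one_of_one_le_of_nonpos hn h]
  have hδ0 : 0 < δ := by nlinarith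
  obtain ⟨s, hs6, hs7⟩ : ∃ s : ℕ, 6 ≤ δ' * s ∧ δ' * s ≤ 7 := by
    refine ⟨⌈6 / δ'⌉₊, (div_le_iff₀' hδ').1 (Nat.le_ceil _), ?_⟩
    have := mul_lt_mul_of_pos_left (Nat.ceil_lt_add_one (by positivity : 0 ≤ 6 / δ')) hδ'
    rw [mul_add, mul_div_cancel₀ _ hδ'.ne'] at this
    linarith
  have hδs : 14 * (δ * s) = η * (δ' * s) := by rw [← mul_assoc, hδ, mul_assoc]
  obtain ⟨L, hL, hLL, hcard⟩ := exists_subset_popularDiv hD (τ := n ^ (1 - δ))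
    (τ' := n ^ (1 - δ')) (by positivity) (by positivity) (s := s) <| by
    calc 2 * #(popularDiv D (n ^ (1 - δ))) * (n ^ (1 - δ')) ^ s
        ≤ n ^ η * n ^ (1 + δ + 2 * δ) * (n ^ (1 - δ')) ^ s := by
          gcongr
          exact card_popularDiv_rpow_le hn0 hDcard
      _ = n ^ (η + (1 + δ + 2 * δ) + (1 - δ') * s) := by
          rw [← Real.rpow_mul_natCast hn0.le, ← Real.rpow_add hn0, ← Real.rpow_add hn0]
      _ ≤ n ^ ((1 - δ) * s) := Real.rpow_le_rpow_of_exponent_le hn (by nlinarith)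
      _ = (n ^ (1 - δ)) ^ s := Real.rpow_mul_natCast hn0.le _ _
  refine ⟨L, hL, hLL, le_of_mul_le_mul_right ?_ (show 0 < (n ^ (1 - δ)) ^ s by positivity)⟩
  calc #(popularDiv D (n ^ (1 - δ))) * (n ^ (1 - δ)) ^ s
      ≤ 2 * #L * (n ^ (1 + δ)) ^ s := hcard.trans (by gcongr)
    _ = 2 * #L * (n ^ (2 * (δ * s)) * (n ^ (1 - δ)) ^ s) := by
        rw [← Real.rpow_mul_natCast hn0.le, ← Real.rpow_mul_natCast hn0.le, ← Real.rpow_add hn0]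
        ring_nf
    _ ≤ n ^ η * #L * (n ^ η * (n ^ (1 - δ)) ^ s) := by
        gcongr
        nlinarith
    _ = (n ^ η) ^ 2 * #L * (n ^ (1 - δ)) ^ s := by ring

/-- The number of levels of the chain of popularity thresholds `n ^ (1 - chainExponent η j)`:
enough for a quantity between `1` and `n ^ 2` to grow by a factor at most `n ^ η` at some level. -/
noncomputable def chainLength (η : ℝ) : ℕ := ⌈2 / η⌉₊

/-- The exponents `δ₀ < ⋯ < δ_J = η`, with `J = chainLength η`, determined by
`14 * δ_j = η * δ_{j+1}`. -/
noncomputable def chainExponent (η : ℝ) (j : ℕ) : ℝ := η * (η / 14) ^ (chainLength η - j)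

lemma two_le_mul_chainLength {η : ℝ} (hη : 0 < η) : 2 ≤ η * chainLength η :=
  (div_le_iff₀' hη).1 (Nat.le_ceil _)

lemma chainExponent_pos {η : ℝ} (hη : 0 < η) (j : ℕ) : 0 < chainExponent η j :=
  mul_pos hη (by positivity)

lemma mul_chainExponent {η : ℝ} {j : ℕ} (hj : j < chainLength η) :
    14 * chainExponent η j = η * chainExponent η (j + 1) := by
  rw [chainExponent, chainExponent, ← Nat.succ_pred_eq_of_pos (Nat.sub_pos_of_lt hj), pow_succ,
    Nat.pred_eq_sub_one, Nat.sub_sub]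
  ring

lemma chainExponent_le {η : ℝ} (hη : 0 ≤ η) (hη1 : η ≤ 1) (j : ℕ) : chainExponent η j ≤ η :=
  mul_le_of_le_one_right hη (pow_le_one₀ (by positivity) (by linarith))

lemma chainExponent_zero_le {η : ℝ} (hη : 0 ≤ η) (hη1 : η ≤ 1) (j : ℕ) :
    chainExponent η 0 ≤ chainExponent η j :=
  mul_le_mul_of_nonneg_left (pow_le_pow_of_le_one (by positivity) (by linarith) (by lia)) hη

@[to_additive]
lemma card_popularDiv_rpow_chainExponent_le {D : Finset G} {n η : ℝ} (hn : 1 ≤ n) (hη : 0 ≤ η)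
    (hη1 : η ≤ 1) (hD : #D ≤ n ^ (1 + chainExponent η 0)) (j : ℕ) :
    #(popularDiv D (n ^ (1 - chainExponent η j))) ≤ n * (n ^ η) ^ 3 := by
  have hn0 : 0 < n := by linarith
  calc (#(popularDiv D (n ^ (1 - chainExponent η j))) : ℝ)
      ≤ n ^ (1 + chainExponent η j + 2 * chainExponent η 0) := card_popularDiv_rpow_le hn0 hD
    _ ≤ n ^ (1 + η * (3 : ℕ)) := Real.rpow_le_rpow_of_exponent_le hn (by
        push_cast
        linarith [chainExponent_le hη hη1 j, chainExponent_le hη hη1 0])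
    _ = n * (n ^ η) ^ 3 := by
        rw [Real.rpow_one_add' hn0.le (by positivity), Real.rpow_mul_natCast hn0.le]

@[to_additive]
lemma exists_popularDiv_chain {D : ℕ → Finset G} {n η : ℝ} (hD : Monotone D) (hn : 1 ≤ n)
    (hη0 : 0 < η) (hη1 : η ≤ 1 / 4) (hnη : 2 ≤ n ^ η)
    (hD0 : n ^ (1 - chainExponent η 0) ≤ #(D 0))
    (hDcard : ∀ j ≤ chainLength η, #(D j) ≤ n ^ (1 + chainExponent η 0)) :
    ∃ j < chainLength η, ∃ L ⊆ popularDiv (D j) (n ^ (1 - chainExponent η j)),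
      L / L ⊆ popularDiv (D (j + 1)) (n ^ (1 - chainExponent η (j + 1))) ∧
      #(popularDiv (D (j + 1)) (n ^ (1 - chainExponent η (j + 1)))) ≤ (n ^ η) ^ 3 * #L ∧
      #(popularDiv (D 0) (n ^ (1 - chainExponent η 0))) ≤ (n ^ η) ^ 2 * #L := by
  have hn0 : 0 < n := by linarith
  have hn1 : 1 < n := hn.lt_of_ne fun h => by norm_num [← h] at hnη
  have hη : η ≤ 1 := by linarith
  have hle := chainExponent_zero_le hη0.le hη
  set U : ℕ → Finset G := fun j => popularDiv (D j) (n ^ (1 - chainExponent η j))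
  obtain ⟨j, hj, hUj⟩ : ∃ j < chainLength η, (#(U (j + 1)) : ℝ) ≤ n ^ η * #(U j) := by
    refine exists_succ_le_mul (u := fun j => (#(U j) : ℝ)) (by positivity) ?_
    calc (#(U (chainLength η)) : ℝ)
        ≤ n ^ (1 + chainExponent η (chainLength η) + 2 * chainExponent η 0) :=
          card_popularDiv_rpow_le hn0 (hDcard _ le_rfl)
      _ < n ^ (η * chainLength η) := by
          refine Real.rpow_lt_rpow_of_exponent_lt hn1 ?_
          linarith [two_le_mul_chainLength hη0, chainExponent_le hη0.le hη (chainLength η),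
            chainExponent_le hη0.le hη 0]
      _ = (n ^ η) ^ chainLength η := Real.rpow_mul_natCast hn0.le _ _
      _ ≤ (n ^ η) ^ chainLength η * #(U 0) :=
          le_mul_of_one_le_right (by positivity) <| Nat.one_le_cast.2 <|
            card_pos.2 ⟨1, one_mem_popularDiv (by positivity) hD0⟩
  have hDne : (D j).Nonempty := by
    have : 0 < #(D 0) := Nat.cast_pos.1 (lt_of_lt_of_le (by positivity) hD0)
    exact (card_pos.1 this).mono (hD (Nat.zero_le j))
  obtain ⟨L, hL, hLL, hLcard⟩ := exists_subset_popularDiv_rpow hDne hn hη hnη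
    (chainExponent_pos hη0 (j + 1)) ((chainExponent_le hη0.le hη _).trans hη)
    (mul_chainExponent hj) ((hDcard j hj.le).trans (by gcongr; exact hle j))
  refine ⟨j, hj, L, hL, hLL.trans (popularDiv_mono (hD j.le_succ) le_rfl), ?_, ?_⟩
  · calc (#(U (j + 1)) : ℝ) ≤ n ^ η * ((n ^ η) ^ 2 * #L) := hUj.trans (by gcongr)
      _ = (n ^ η) ^ 3 * #L := by ring
  · refine le_trans (Nat.cast_le.2 (card_le_card ?_)) hLcard
    exact popularDiv_mono (hD (Nat.zero_le j))
      (Real.rpow_le_rpow_of_exponent_le hn (by linarith [hle j]))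

end Group

section CommGroup

variable {G : Type*} [CommGroup G] [DecidableEq G]

lemma card_mul_div_pow_le {L : Finset G} (hL : L.Nonempty) {K : ℝ} (hK : #(L / L) ≤ K * #L)
    (i : ℕ) : #(L * (L / L) ^ i) ≤ K ^ (2 * i + 1) * #L := by
  have hLpos : (0 : ℝ) < #L := Nat.cast_pos.2 hL.card_pos
  have hpow : L * (L / L) ^ i = L ^ (i + 1) / L ^ i := by rw [div_pow, ← mul_div_assoc, ← pow_succ']
  have hplu := (NNRat.cast_le (K := ℝ)).2
    (pluennecke_ruzsa_inequality_pow_div_pow_div hL L (i + 1) i)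
  push_cast at hplu
  rw [hpow]
  refine hplu.trans ?_
  rw [show i + 1 + i = 2 * i + 1 by ring]
  gcongr
  exact (div_le_iff₀ hLpos).2 hK

lemma mul_card_mul_le {A B L : Finset G} {m : ℝ} (hm : ∀ b ∈ B, m ≤ #{l ∈ L | b ∈ l • A})
    (H : Finset G) : m * #(B * H) ≤ #A * #(L * H) := by
  have h := card_nsmul_le_card_nsmul (s := B * H) (t := A ×ˢ (L * H)) (m := m) (n := (1 : ℝ))
    (fun w q => q.1 * q.2 = w) (fun w hw => ?_) (fun q _ => ?_)
  · rw [card_product] at h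
    simpa [mul_comm] using h
  · obtain ⟨b, hb, h, hh, rfl⟩ := mem_mul.1 hw
    refine (hm b hb).trans (Nat.cast_le.2 ?_)
    refine card_le_card_of_injOn (fun l => (b / l, l * h)) (fun l hl => ?_) fun l _ l' _ h => ?_
    · obtain ⟨hlL, a, ha, rfl⟩ := (mem_filter.1 hl).imp_right mem_smul_finset.1
      refine mem_filter.2 ⟨mem_product.2 ⟨?_, mul_mem_mul hlL hh⟩, ?_⟩
      · simpa using ha
      · simp [mul_left_comm, mul_assoc]
    · exact mul_right_cancel (congrArg Prod.snd h)
  · refine Nat.cast_le_one.2 (card_le_one.2 fun w hw w' hw' => ?_)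
    exact (mem_filter.1 hw).2.symm.trans (mem_filter.1 hw').2

lemma exists_subset_forall_le_card_filter_mem_smul {A L : Finset G} {ε : ℝ} (hε : 0 ≤ ε)
    (hL : L.Nonempty) (hAL : ∀ l ∈ L, 2 * ε * #A ≤ #(A ∩ l • A)) :
    ∃ B ⊆ A, ε * #A ≤ #B ∧ ∀ b ∈ B, ε * #L ≤ #{l ∈ L | b ∈ l • A} := by
  refine ⟨{a ∈ A | ε * #L ≤ #{l ∈ L | a ∈ l • A}}, filter_subset _ _,
    mul_card_le_card_filter_of_le_sum (Nat.cast_pos.2 hL.card_pos) hε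
      (fun a _ => Nat.cast_le.2 (card_filter_le _ _)) ?_, fun b hb => (mem_filter.1 hb).2⟩
  have hsum : ∑ l ∈ L, #(A ∩ l • A) = ∑ a ∈ A, #{l ∈ L | a ∈ l • A} := by
    rw [sum_card_eq_sum_card_filter_mem fun _ _ => inter_subset_left]
    exact sum_congr rfl fun a ha => by simp only [mem_inter, ha, true_and]
  calc 2 * ε * #L * #A = #L • (2 * ε * #A) := by rw [nsmul_eq_mul]; ring
    _ ≤ ∑ l ∈ L, (#(A ∩ l • A) : ℝ) := card_nsmul_le_sum _ _ _ hAL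
    _ = ∑ a ∈ A, (#{l ∈ L | a ∈ l • A} : ℝ) := mod_cast hsum

lemma card_mul_div_pow_le_rpow {A B L : Finset G} {n η : ℝ} (hA : #A = n) (hn : 0 < n)
    (hη : 0 ≤ η) (hL : L.Nonempty) (hLL : #(L / L) ≤ (n ^ η) ^ 3 * #L)
    (hB : ∀ b ∈ B, n ^ (-2 * η) * #L ≤ #{l ∈ L | b ∈ l • A}) (i : ℕ) :
    #(B * (L / L) ^ i) ≤ n ^ (1 + (6 * i + 5) * η) := by
  have hLpos : (0 : ℝ) < #L := Nat.cast_pos.2 hL.card_pos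
  refine le_of_mul_le_mul_left ?_ (mul_pos (Real.rpow_pos_of_pos hn (-2 * η)) hLpos)
  calc n ^ (-2 * η) * #L * #(B * (L / L) ^ i)
      ≤ #A * #(L * (L / L) ^ i) := mul_card_mul_le hB _
    _ ≤ n * (((n ^ η) ^ 3) ^ (2 * i + 1) * #L) := by
        rw [hA]
        gcongr
        exact card_mul_div_pow_le hL hLL i
    _ = n ^ (-2 * η) * #L * n ^ (1 + (6 * i + 5) * η) := by
        rw [← pow_mul, ← Real.rpow_mul_natCast hn.le, mul_right_comm, ← Real.rpow_add hn,
          ← mul_assoc, ← Real.rpow_one_add' hn.le (by positivity)]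
        push_cast
        ring_nf

lemma exists_subset_card_mul_pow_le {A : Finset G} {n η : ℝ} (hA : #A = n) (hn : 1 ≤ n)
    (hη0 : 0 < η) (hη1 : η ≤ 1 / 4) (hnη : 2 ≤ n ^ η) :
    ∃ B ⊆ A, ∃ Γ : Finset G, 1 ∈ Γ ∧ n ^ (1 - 2 * η) ≤ #B ∧
      #(popularDiv A (n ^ (1 - chainExponent η 0))) ≤ (n ^ η) ^ 2 * #Γ ∧
      ∀ i : ℕ, #(B * Γ ^ i) ≤ n ^ (1 + (6 * i + 5) * η) := by
  have hn0 : 0 < n := by linarith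
  have hδ0 := chainExponent_pos hη0 0
  have hAτ : n ^ (1 - chainExponent η 0) ≤ #A := by
    rw [hA]
    exact Real.rpow_le_self_of_one_le hn (by linarith)
  obtain ⟨j, -, L, hLP, hLL, hLcard, hPcard⟩ := exists_popularDiv_chain (D := fun _ => A)
    monotone_const hn hη0 hη1 hnη hAτ
    (fun _ _ => hA.trans_le (Real.self_le_rpow_of_one_le hn (by linarith)))
  have hL : L.Nonempty := by
    have hP := card_pos.2 ⟨1, one_mem_popularDiv (by positivity) hAτ⟩
    have hpos := (Nat.cast_pos.2 hP).trans_le hPcard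
    exact card_pos.1 (Nat.cast_pos.1 (pos_of_mul_pos_right hpos (by positivity)))
  obtain ⟨B, hBA, hBcard, hB⟩ := exists_subset_forall_le_card_filter_mem_smul (A := A)
    (ε := n ^ (-2 * η)) (by positivity) hL fun l hl => by
    calc 2 * n ^ (-2 * η) * #A ≤ n ^ η * n ^ (-2 * η) * n ^ (1 : ℝ) := by
          rw [hA, Real.rpow_one]
          gcongr
      _ = n ^ (1 - η) := by
          rw [← Real.rpow_add hn0, ← Real.rpow_add hn0]
          ring_nf
      _ ≤ n ^ (1 - chainExponent η j) := by
          gcongr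
          exact chainExponent_le hη0.le (by linarith) j
      _ ≤ #(A ∩ l • A) := (mem_filter.1 (hLP hl)).2
  refine ⟨B, hBA, L / L, hL.one_mem_div, ?_, ?_, card_mul_div_pow_le_rpow hA hn0 hη0.le hL
    ((Nat.cast_le.2 (card_le_card hLL)).trans hLcard) hB⟩
  · refine le_of_eq_of_le ?_ hBcard
    rw [hA, sub_eq_neg_add, Real.rpow_add_one hn0.ne', neg_mul]
  · exact hPcard.trans (mul_le_mul_of_nonneg_left
      (Nat.cast_le.2 (card_le_card_div_right hL)) (by positivity))

end CommGroup

section Field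

variable {F : Type*} [Field F] [DecidableEq F] {U : Finset F} {x y : F} {B B₁ B₂ B₃ : ℝ}

/-- `x` is a `B`-good multiplier of `U` if `U + x • U` has at most `B * #U` elements. The good
multipliers of a set behave like an approximate subfield: up to a polynomial loss in `B` they are
closed under the field operations. -/
def GoodMultiplier (B : ℝ) (U : Finset F) (x : F) : Prop := (#(U + x • U) : ℝ) ≤ B * #U

lemma GoodMultiplier.mono (h : GoodMultiplier B₁ U x) (hB : B₁ ≤ B₂) : GoodMultiplier B₂ U x :=
  h.trans (by gcongr)

lemma GoodMultiplier.one_le (h : GoodMultiplier B U x) (hU : U.Nonempty) : 1 ≤ B := by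
  have hcard : (#U : ℝ) ≤ #(U + x • U) :=
    Nat.cast_le.2 (card_le_card_add_right hU.smul_finset)
  exact le_of_mul_le_mul_right ((one_mul (#U : ℝ)).trans_le (hcard.trans h))
    (Nat.cast_pos.2 hU.card_pos)

lemma goodMultiplier_neg_one : GoodMultiplier B U (-1) ↔ #(U - U) ≤ B * #U := by
  rw [GoodMultiplier, neg_smul_finset, one_smul, sub_eq_add_neg]

lemma goodMultiplier_zero (hU : U.Nonempty) (hB : 1 ≤ B) : GoodMultiplier B U 0 := by
  rw [GoodMultiplier, zero_smul_finset hU, add_zero]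
  exact le_mul_of_one_le_left (Nat.cast_nonneg _) hB

lemma GoodMultiplier.inv (h : GoodMultiplier B U x) : GoodMultiplier B U x⁻¹ := by
  obtain rfl | hx := eq_or_ne x 0
  · rwa [inv_zero]
  · rwa [GoodMultiplier, ← card_smul_finset₀ hx, smul_add, smul_inv_smul₀ hx, add_comm]

lemma GoodMultiplier.mul (hx : GoodMultiplier B₁ U x) (hy : GoodMultiplier B₂ U y)
    (hU : U.Nonempty) : GoodMultiplier (B₁ * B₂) U (x * y) := by
  obtain rfl | hx0 := eq_or_ne x 0
  · rw [zero_mul]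
    exact goodMultiplier_zero hU (one_le_mul_of_one_le_of_one_le (hx.one_le hU) (hy.one_le hU))
  have hruzsa := ruzsa_triangle_inequality_add_add_add U (x • U) ((x * y) • U)
  rw [mul_smul, ← smul_add, card_smul_finset₀ hx0, card_smul_finset₀ hx0, ← mul_smul] at hruzsa
  have hUpos : (0 : ℝ) < #U := Nat.cast_pos.2 hU.card_pos
  refine le_of_mul_le_mul_right ?_ hUpos
  calc (#(U + (x * y) • U) : ℝ) * #U ≤ #(U + x • U) * #(U + y • U) := mod_cast hruzsa
    _ ≤ (B₁ * #U) * (B₂ * #U) :=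
        mul_le_mul hx hy (Nat.cast_nonneg _) ((Nat.cast_nonneg _).trans hx)
    _ = B₁ * B₂ * #U * #U := by ring

lemma GoodMultiplier.add (h1 : GoodMultiplier B₁ U 1) (hx : GoodMultiplier B₂ U x)
    (hy : GoodMultiplier B₃ U y) (hU : U.Nonempty) :
    GoodMultiplier ((B₁ + B₂ + B₃) ^ 3) U (x + y) := by
  set V := (1 : F) • U ∪ x • U ∪ y • U with hV
  have hUV : #(U + V) ≤ (B₁ + B₂ + B₃) * #U := by
    have hcard : (#(U + V) : ℝ) ≤ #(U + (1 : F) • U) + #(U + x • U) + #(U + y • U) := by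
      rw [hV, add_union, add_union]
      exact_mod_cast (card_union_le _ _).trans (by gcongr; exact card_union_le _ _)
    exact hcard.trans (by linarith [show _ ≤ _ from h1, show _ ≤ _ from hx, show _ ≤ _ from hy])
  have hsub : U + (x + y) • U ⊆ 3 • V := by
    have hxy : (x + y) • U ⊆ x • U + y • U := image_subset_iff.2 fun u hu =>
      (add_smul x y u).symm ▸ add_mem_add (smul_mem_smul_finset hu) (smul_mem_smul_finset hu)
    rw [succ_nsmul, two_nsmul, add_assoc]
    refine add_subset_add ?_ (hxy.trans (add_subset_add ?_ ?_))
    · exact (one_smul F U).symm.subset.trans (subset_union_left.trans subset_union_left)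
    · exact subset_union_right.trans subset_union_left
    · exact subset_union_right
  have hplu := (NNRat.cast_le (K := ℝ)).2 (pluennecke_ruzsa_inequality_nsmul_add hU V 3)
  push_cast at hplu
  calc (#(U + (x + y) • U) : ℝ) ≤ #(3 • V) := Nat.cast_le.2 (card_le_card hsub)
    _ ≤ (#(U + V) / #U : ℝ) ^ 3 * #U := hplu
    _ ≤ (B₁ + B₂ + B₃) ^ 3 * #U := by
        gcongr
        exact (div_le_iff₀ (Nat.cast_pos.2 hU.card_pos)).2 hUV

lemma GoodMultiplier.add_pow {b : ℝ} {k l : ℕ} (h1 : GoodMultiplier b U 1)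
    (hx : GoodMultiplier (b ^ k) U x) (hy : GoodMultiplier (b ^ l) U y) (hU : U.Nonempty)
    (hb : 3 ≤ b) (hl : 1 ≤ l) (hkl : k ≤ l) : GoodMultiplier (b ^ (3 * (l + 1))) U (x + y) := by
  refine (h1.add hx hy hU).mono ?_
  have hb1 : b ≤ b ^ l := le_self_pow₀ (by linarith) (by lia)
  have hbk : b ^ k ≤ b ^ l := pow_le_pow_right₀ (by linarith) hkl
  calc (b + b ^ k + b ^ l) ^ 3 ≤ (b ^ l * b) ^ 3 := by
        gcongr
        nlinarith
    _ = b ^ (3 * (l + 1)) := by ring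

lemma GoodMultiplier.card_pow_three_le (hx : GoodMultiplier B U x) (hU : U.Nonempty) :
    (#U : ℝ) ^ 3 ≤ B * ∑ b ∈ U, ∑ c ∈ U, (#(U ∩ (x * (c - b) +ᵥ U)) : ℝ) := by
  have hsub : ∀ b ∈ U, x * b +ᵥ U ⊆ U + x • U := fun b hb => by
    rw [add_comm]
    exact vadd_finset_subset_add (smul_mem_smul_finset hb)
  have hcs := sq_sum_card_le_card_mul_sum_card_inter hsub
  simp only [card_vadd_finset, card_vadd_inter_vadd_self, sum_const, smul_eq_mul,
    neg_add_eq_sub, ← mul_sub] at hcs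
  have hcs' : (#U * #U : ℝ) ^ 2 ≤ #(U + x • U) *
    ∑ b ∈ U, ∑ c ∈ U, (#(U ∩ (x * (c - b) +ᵥ U)) : ℝ) := mod_cast hcs
  refine le_of_mul_le_mul_left ?_ (Nat.cast_pos (α := ℝ).2 hU.card_pos)
  calc (#U : ℝ) * #U ^ 3 = (#U * #U) ^ 2 := by ring
    _ ≤ B * #U * ∑ b ∈ U, ∑ c ∈ U, (#(U ∩ (x * (c - b) +ᵥ U)) : ℝ) :=
        hcs'.trans (by gcongr; exact hx)
    _ = #U * (B * ∑ b ∈ U, ∑ c ∈ U, (#(U ∩ (x * (c - b) +ᵥ U)) : ℝ)) := by ring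

lemma sum_card_inter_mul_vadd_le (X U : Finset F) :
    ∑ x ∈ X, ∑ b ∈ U, ∑ c ∈ U, #(U ∩ (x * (c - b) +ᵥ U)) ≤ #X * #U ^ 2 + #U ^ 4 := by
  have hterm : ∀ b ∈ U, ∀ c ∈ U, ∑ x ∈ X, #(U ∩ (x * (c - b) +ᵥ U)) ≤
      (if c = b then #X * #U else 0) + #U ^ 2 := fun b _ c _ => by
    split_ifs with hcb
    · simp [hcb]
    · rw [zero_add, ← sum_image (s := X) (g := (· * (c - b))) (f := fun u => #(U ∩ (u +ᵥ U)))
        ((mul_left_injective₀ (sub_ne_zero.2 hcb)).injOn)]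
      exact sum_card_inter_vadd_le U _
  rw [sum_comm]
  calc ∑ b ∈ U, ∑ x ∈ X, ∑ c ∈ U, #(U ∩ (x * (c - b) +ᵥ U))
      = ∑ b ∈ U, ∑ c ∈ U, ∑ x ∈ X, #(U ∩ (x * (c - b) +ᵥ U)) :=
        sum_congr rfl fun _ _ => sum_comm
    _ ≤ ∑ b ∈ U, ∑ c ∈ U, ((if c = b then #X * #U else 0) + #U ^ 2) :=
        sum_le_sum fun b hb => sum_le_sum fun c hc => hterm b hb c hc
    _ = ∑ b ∈ U, (#X * #U + #U * #U ^ 2) := sum_congr rfl fun b hb => by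
        rw [sum_add_distrib, sum_ite_eq' U b, if_pos hb, sum_const, smul_eq_mul]
    _ = #X * #U ^ 2 + #U ^ 4 := by
        rw [sum_const, smul_eq_mul]
        ring

lemma card_le_of_forall_goodMultiplier {X : Finset F} (hX : ∀ x ∈ X, GoodMultiplier B U x)
    (hU : U.Nonempty) (hB0 : 0 ≤ B) (hB : 2 * B ≤ #U) : #X ≤ 2 * B * #U := by
  have hUpos : (0 : ℝ) < #U := Nat.cast_pos.2 hU.card_pos
  have hcount : #X * (#U : ℝ) ^ 3 ≤ B * (#X * (#U : ℝ) ^ 2 + (#U : ℝ) ^ 4) := by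
    calc #X * (#U : ℝ) ^ 3 = ∑ _x ∈ X, (#U : ℝ) ^ 3 := by rw [sum_const, nsmul_eq_mul]
      _ ≤ ∑ x ∈ X, B * ∑ b ∈ U, ∑ c ∈ U, (#(U ∩ (x * (c - b) +ᵥ U)) : ℝ) :=
          sum_le_sum fun x hx => (hX x hx).card_pow_three_le hU
      _ ≤ B * (#X * (#U : ℝ) ^ 2 + (#U : ℝ) ^ 4) := by
          rw [← mul_sum]
          exact mul_le_mul_of_nonneg_left (mod_cast sum_card_inter_mul_vadd_le X U) hB0
  have hhalf : #X * (#U : ℝ) ^ 2 * (2 * B) ≤ #X * (#U : ℝ) ^ 2 * #U := by gcongr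
  refine le_of_mul_le_mul_left ?_ (pow_pos hUpos 3)
  linarith

lemma GoodMultiplier.div_of_le_card_inter {γ γ' : F} (hγ : γ ≠ 0) (hγ' : γ' ≠ 0) {M : ℝ}
    (h1 : GoodMultiplier B U 1) (hU : U.Nonempty) (hM : #U ≤ M * #(γ • U ∩ γ' • U)) :
    GoodMultiplier (M * B ^ 2) U (γ / γ') := by
  set W := γ • U ∩ γ' • U with hW
  have h1' : (#(U + U) : ℝ) ≤ B * #U := by simpa only [GoodMultiplier, one_smul] using h1
  have hruzsa : #(U + (γ / γ') • U) * #W ≤ #(U + U) * #(U + U) := by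
    rw [← card_smul_finset₀ hγ' (U + (γ / γ') • U), smul_add, smul_smul, mul_div_cancel₀ _ hγ']
    refine (ruzsa_triangle_inequality_add_add_add (γ' • U) W (γ • U)).trans (Nat.mul_le_mul ?_ ?_)
    · rw [← card_smul_finset₀ hγ' (U + U), smul_add]
      exact card_le_card (add_subset_add_left inter_subset_right)
    · rw [← card_smul_finset₀ hγ (U + U), smul_add]
      exact card_le_card (add_subset_add_right inter_subset_left)
  have hUpos : (0 : ℝ) < #U := Nat.cast_pos.2 hU.card_pos
  have hWpos : (0 : ℝ) < #W := by
    refine (Nat.cast_nonneg _).lt_of_ne fun h => ?_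
    rw [← h, mul_zero] at hM
    linarith
  refine le_of_mul_le_mul_right ?_ hWpos
  calc (#(U + (γ / γ') • U) : ℝ) * #W ≤ #(U + U) * #(U + U) := mod_cast hruzsa
    _ ≤ (B * #U) * (B * #U) :=
        mul_le_mul h1' h1' (Nat.cast_nonneg _) ((Nat.cast_nonneg _).trans h1')
    _ = B ^ 2 * #U * #U := by ring
    _ ≤ B ^ 2 * #U * (M * #W) := by gcongr
    _ = M * B ^ 2 * #U * #W := by ring

lemma GoodMultiplier.one_of_neg_one (h : GoodMultiplier B U (-1)) (hU : U.Nonempty) :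
    GoodMultiplier (B ^ 2) U 1 := by
  have hmul := h.mul h hU
  rwa [neg_mul_neg, one_mul, ← sq] at hmul

lemma exists_goodMultipliers_of_smul_subset {Γ : Finset Fˣ} {V : Finset F} {C : ℝ}
    (hΓ : Γ.Nonempty) (hU : U.Nonempty) (hV : ∀ γ ∈ Γ, γ • U ⊆ V) (hVcard : #V ≤ C * #U)
    (h1 : GoodMultiplier B U 1) :
    ∃ X : Finset F, (∀ x ∈ X, GoodMultiplier (2 * C * B ^ 2) U x) ∧ #Γ ≤ 2 * C * #X := by
  have hC : 0 < C := by
    obtain ⟨γ, hγ⟩ := hΓ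
    have hVpos : 0 < #V := (hU.smul_finset.mono (hV γ hγ)).card_pos
    exact pos_of_mul_pos_left ((Nat.cast_pos.2 hVpos).trans_le hVcard) (Nat.cast_nonneg _)
  obtain ⟨γ', -, hγ'⟩ := exists_card_le_mul_card_filter_card_inter hΓ hV
    (fun γ _ => card_smul_finset γ U) hU.card_pos hC hVcard
  refine ⟨{γ ∈ Γ | (#U : ℝ) ≤ 2 * C * #(γ • U ∩ γ' • U)}.image fun γ : Fˣ => (γ : F) / γ',
    ?_, ?_⟩
  · refine forall_mem_image.2 fun γ hγ => ?_
    exact h1.div_of_le_card_inter γ.ne_zero γ'.ne_zero hU (mem_filter.1 hγ).2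
  · rwa [card_image_of_injective _ fun a b hab => Units.ext ((div_left_inj' γ'.ne_zero).1 hab)]

lemma card_image_add_mul {X : Finset F} {ξ : F} (hξ : ξ ∉ (X - X) / (X - X)) :
    #((X ×ˢ X).image fun q => q.1 + ξ * q.2) = #X ^ 2 := by
  rw [card_image_of_injOn, card_product, sq]
  rintro ⟨a, b⟩ hab ⟨c, d⟩ hcd h
  obtain ⟨ha, hb⟩ := mem_product.1 hab
  obtain ⟨hc, hd⟩ := mem_product.1 hcd
  obtain rfl | hbd := eq_or_ne b d
  · exact Prod.ext (add_right_cancel h) rfl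
  · refine absurd (mem_div.2 ⟨_, sub_mem_sub hc ha, _, sub_mem_sub hb hd, ?_⟩) hξ
    rw [div_eq_iff (sub_ne_zero.2 hbd)]
    linear_combination -h

lemma GoodMultiplier.of_mem_sub_div_sub {X : Finset F} {b : ℝ}
    (hX : ∀ x ∈ X, GoodMultiplier b U x) (h1 : GoodMultiplier b U 1)
    (hneg : GoodMultiplier b U (-1)) (hU : U.Nonempty) (hb : 3 ≤ b) {r : F}
    (hr : r ∈ (X - X) / (X - X)) : GoodMultiplier (b ^ 18) U r := by
  have hsub : ∀ d ∈ X - X, GoodMultiplier (b ^ 9) U d := fun d hd => by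
    obtain ⟨x, hx, y, hy, rfl⟩ := mem_sub.1 hd
    rw [sub_eq_add_neg, ← neg_one_mul]
    exact h1.add_pow (k := 1) (l := 2) (by simpa using hX x hx)
      (by simpa only [sq] using hneg.mul (hX y hy) hU) hU hb one_le_two one_le_two
  obtain ⟨d, hd, e, he, rfl⟩ := mem_div.1 hr
  rw [div_eq_mul_inv, show b ^ 18 = b ^ 9 * b ^ 9 by ring]
  exact (hsub d hd).mul (hsub e he).inv hU

end Field

section PrimeField

variable {p : ℕ} [Fact p.Prime] {U X : Finset (ZMod p)} {b : ℝ}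

lemma eq_univ_of_zero_mem_of_add_one_mem {R : Finset (ZMod p)} (h0 : 0 ∈ R)
    (h1 : ∀ x ∈ R, x + 1 ∈ R) : R = univ := by
  have hnat : ∀ k : ℕ, (k : ZMod p) ∈ R := fun k => by
    induction k with
    | zero => rwa [Nat.cast_zero]
    | succ k ih => exact Nat.cast_succ (R := ZMod p) k ▸ h1 _ ih
  exact eq_univ_iff_forall.2 fun z => ZMod.natCast_zmod_val z ▸ hnat z.val

lemma exists_goodMultipliers_card_eq_sq (hX : ∀ x ∈ X, GoodMultiplier b U x)
    (h1 : GoodMultiplier b U 1) (hneg : GoodMultiplier b U (-1)) (hU : U.Nonempty) (hb : 3 ≤ b)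
    (hbU : 2 * b ^ 18 ≤ #U) (hp : 2 * b ^ 18 * #U < p) (hX2 : 1 < #X) :
    ∃ X' : Finset (ZMod p), (∀ x ∈ X', GoodMultiplier (b ^ 177) U x) ∧ #X' = #X ^ 2 := by
  have hquot := fun r => GoodMultiplier.of_mem_sub_div_sub (r := r) hX h1 hneg hU hb
  have hne : (X - X) / (X - X) ≠ univ := fun h => by
    have hcard := card_le_of_forall_goodMultiplier (fun r => hquot r) hU (by positivity) hbU
    rw [h, card_univ, ZMod.card] at hcard
    exact hp.not_ge hcard
  have hzero : 0 ∈ (X - X) / (X - X) := by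
    obtain ⟨x, hx, y, hy, -⟩ := one_lt_card.1 hX2
    exact mem_div.2 ⟨0, sub_self x ▸ sub_mem_sub hx hx, x - y, sub_mem_sub hx hy, zero_div _⟩
  obtain ⟨ξ, hξ, hξ1⟩ : ∃ ξ ∈ (X - X) / (X - X), ξ + 1 ∉ (X - X) / (X - X) := by
    by_contra! h
    exact hne (eq_univ_of_zero_mem_of_add_one_mem hzero h)
  have hξgood : GoodMultiplier (b ^ 57) U (ξ + 1) := by
    rw [add_comm]
    exact h1.add_pow (k := 1) (by simpa using h1) (hquot ξ hξ) hU hb (by simp) (by simp)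
  refine ⟨_, forall_mem_image.2 fun q hq => ?_, card_image_add_mul hξ1⟩
  obtain ⟨hq1, hq2⟩ := mem_product.1 hq
  exact h1.add_pow (k := 1) (l := 58) (by simpa using hX _ hq1)
    (by simpa only [pow_succ] using hξgood.mul (hX _ hq2) hU) hU hb (by simp) (by simp)

lemma card_pow_four_le_of_forall_goodMultiplier (hX : ∀ x ∈ X, GoodMultiplier b U x)
    (h1 : GoodMultiplier b U 1) (hneg : GoodMultiplier b U (-1)) (hU : U.Nonempty) (hb : 3 ≤ b)
    (hbU : 2 * (b ^ 177) ^ 177 ≤ #U) (hp : 2 * (b ^ 177) ^ 177 * #U < p) :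
    (#X : ℝ) ^ 4 ≤ 2 * (b ^ 177) ^ 177 * #U := by
  have hb1 : 1 ≤ b := by linarith
  have hUpos : (1 : ℝ) ≤ #U := Nat.one_le_cast.2 hU.card_pos
  obtain hX1 | hX2 := le_or_gt #X 1
  · calc (#X : ℝ) ^ 4 ≤ 1 := pow_le_one₀ (Nat.cast_nonneg _) (Nat.cast_le_one.2 hX1)
      _ ≤ 2 * (b ^ 177) ^ 177 * #U := by
        nlinarith [hUpos, one_le_pow₀ (one_le_pow₀ hb1 (n := 177)) (n := 177)]
  have hb177 : b ≤ b ^ 177 := le_self_pow₀ hb1 (by simp)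
  have hpow : b ^ 18 ≤ (b ^ 177) ^ 177 := by
    rw [← pow_mul]
    exact pow_le_pow_right₀ hb1 (by simp)
  have hpow' : (b ^ 177) ^ 18 ≤ (b ^ 177) ^ 177 :=
    pow_le_pow_right₀ (hb1.trans hb177) (by simp)
  obtain ⟨X', hX', hcard'⟩ := exists_goodMultipliers_card_eq_sq hX h1 hneg hU hb
    (by linarith) (lt_of_le_of_lt (by gcongr) hp) hX2
  obtain ⟨X'', hX'', hcard''⟩ := exists_goodMultipliers_card_eq_sq hX' (h1.mono hb177)
    (hneg.mono hb177) hU (hb.trans hb177) (by linarith) (lt_of_le_of_lt (by gcongr) hp)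
    (hcard' ▸ one_lt_pow₀ hX2 two_ne_zero)
  have hcount := card_le_of_forall_goodMultiplier hX'' hU (by positivity) hbU
  rw [hcard'', hcard', ← pow_mul] at hcount
  exact_mod_cast hcount

lemma card_pow_four_le_of_smul_subset {Γ : Finset (ZMod p)ˣ} {V : Finset (ZMod p)} {C : ℝ}
    (hC : 2 ≤ C) (hΓ : Γ.Nonempty) (hU : U.Nonempty) (hV : ∀ γ ∈ Γ, γ • U ⊆ V)
    (hUV : U - U ⊆ V) (hVcard : #V ≤ C * #U) (hCU : 2 * ((C ^ 6) ^ 177) ^ 177 ≤ #U)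
    (hp : 2 * ((C ^ 6) ^ 177) ^ 177 * #U < p) :
    (#Γ : ℝ) ^ 4 ≤ (2 * C) ^ 4 * (2 * ((C ^ 6) ^ 177) ^ 177 * #U) := by
  have hneg : GoodMultiplier C U (-1) :=
    goodMultiplier_neg_one.2 ((Nat.cast_le.2 (card_le_card hUV)).trans hVcard)
  have h1 := hneg.one_of_neg_one hU
  have hC1 : 1 ≤ C := by linarith
  obtain ⟨X, hX, hΓX⟩ := exists_goodMultipliers_of_smul_subset hΓ hU hV hVcard h1
  have hgood : ∀ x ∈ X, GoodMultiplier (C ^ 6) U x := fun x hx => (hX x hx).mono <| by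
    calc 2 * C * (C ^ 2) ^ 2 ≤ C * C * (C ^ 2) ^ 2 := by gcongr
      _ = C ^ 6 := by ring
  have hX4 := card_pow_four_le_of_forall_goodMultiplier hgood
    (h1.mono (pow_le_pow_right₀ hC1 (by simp))) (hneg.mono (le_self_pow₀ hC1 (by simp))) hU
    (by nlinarith [pow_le_pow_left₀ zero_le_two hC 6]) hCU hp
  calc (#Γ : ℝ) ^ 4 ≤ (2 * C * #X) ^ 4 := by gcongr
    _ = (2 * C) ^ 4 * (#X : ℝ) ^ 4 := mul_pow _ _ _
    _ ≤ _ := by gcongr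

end PrimeField

section DistribMulAction

variable {G M : Type*} [Group G] [AddGroup M] [DistribMulAction G M] [DecidableEq M]

lemma card_inter_vadd_le_of_smul_subset {D E : Finset M} {g : G} (h : g • D ⊆ E) (u : M) :
    #(D ∩ (u +ᵥ D)) ≤ #(E ∩ (g • u +ᵥ E)) := by
  rw [← card_smul_finset g (D ∩ (u +ᵥ D))]
  refine card_le_card (image_subset_iff.2 fun x hx => ?_)
  obtain ⟨hxD, hxu⟩ := mem_inter.1 hx
  obtain ⟨y, hy, rfl⟩ := mem_vadd_finset.1 hxu
  refine mem_inter.2 ⟨h (smul_mem_smul_finset hxD), ?_⟩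
  rw [vadd_eq_add, smul_add]
  exact vadd_mem_vadd_finset (h (smul_mem_smul_finset hy))

lemma smul_popularSub_subset {D E : Finset M} {g : G} {σ τ : ℝ} (h : g • D ⊆ E) (hσ : 0 < σ)
    (hστ : σ ≤ τ) : g • popularSub D τ ⊆ popularSub E σ := by
  refine image_subset_iff.2 fun u hu => (mem_popularSub hσ).2 ?_
  exact (hστ.trans ((mem_popularSub (hσ.trans_le hστ)).1 hu)).trans
    (Nat.cast_le.2 (card_inter_vadd_le_of_smul_subset h u))

end DistribMulAction

section PrimeField

variable {p : ℕ} [Fact p.Prime] {Γ : Finset (ZMod p)ˣ} {U V : Finset (ZMod p)} {q n : ℝ}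

lemma card_pow_four_le_mul_pow (hq : 2 ≤ q) (hn : 0 ≤ n) (hV : ∀ γ ∈ Γ, γ • U ⊆ V)
    (hUV : U - U ⊆ V) (hVcard : #V ≤ q ^ 3 * #U) (hUn : #U ≤ n * q ^ 3)
    (hqU : q ^ 600000 ≤ #U) (hp : n * q ^ 600000 < p) : (#Γ : ℝ) ^ 4 ≤ n * q ^ 600000 := by
  have hq1 : 1 ≤ q := one_le_two.trans hq
  obtain rfl | hΓ := Γ.eq_empty_or_nonempty
  · rw [card_empty, Nat.cast_zero, zero_pow four_ne_zero]
    positivity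
  have hU : U.Nonempty :=
    card_pos.1 (Nat.cast_pos.1 ((pow_pos (zero_lt_one.trans_le hq1) _).trans_le hqU))
  have hpow : ∀ {k : ℕ}, k ≤ 600000 → q ^ k ≤ q ^ 600000 := fun hk => pow_le_pow_right₀ hq1 hk
  have hloss : 2 * (((q ^ 3) ^ 6) ^ 177) ^ 177 ≤ q ^ 563923 := by
    calc 2 * (((q ^ 3) ^ 6) ^ 177) ^ 177 = 2 * q ^ 563922 := by rw [← pow_mul, ← pow_mul, ← pow_mul]
      _ ≤ q * q ^ 563922 := by gcongr
      _ = q ^ 563923 := (pow_succ' q 563922).symm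
  have hlossU : 2 * (((q ^ 3) ^ 6) ^ 177) ^ 177 * #U ≤ n * q ^ 563926 := by
    calc 2 * (((q ^ 3) ^ 6) ^ 177) ^ 177 * #U ≤ q ^ 563923 * (n * q ^ 3) := by gcongr
      _ = n * q ^ 563926 := by rw [mul_left_comm, ← pow_add]
  have hΓcard := card_pow_four_le_of_smul_subset (hq.trans (le_self_pow₀ hq1 three_ne_zero)) hΓ hU
    hV hUV hVcard ((hloss.trans (hpow (by simp))).trans hqU)
    ((hlossU.trans (mul_le_mul_of_nonneg_left (hpow (by simp)) hn)).trans_lt hp)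
  calc (#Γ : ℝ) ^ 4 ≤ (2 * q ^ 3) ^ 4 * (n * q ^ 563926) := hΓcard.trans (by gcongr)
    _ ≤ (q * q ^ 3) ^ 4 * (n * q ^ 563926) := by gcongr
    _ = n * q ^ 563942 := by rw [← pow_succ', ← pow_mul, mul_left_comm, ← pow_add]
    _ ≤ n * q ^ 600000 := mul_le_mul_of_nonneg_left (hpow (by simp)) hn

lemma card_popularSub_rpow_le_of_smul_subset {D : ℕ → Finset (ZMod p)} {η ε : ℝ}
    (hD : Monotone D) (hΓD : ∀ γ ∈ Γ, ∀ j, γ • D j ⊆ D (j + 1)) (hn : 1 ≤ n) (hη : 0 < η)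
    (hηε : 1000000 * η ≤ ε) (hε : ε ≤ 1 / 10) (hnη : 2 ≤ n ^ η) (hp : n ^ (1 + ε) ≤ p)
    (hΓ : n ^ (7 / 20 : ℝ) ≤ #Γ) (hD0 : n ^ (1 - chainExponent η 0) ≤ #(D 0))
    (hDcard : ∀ j ≤ chainLength η, #(D j) ≤ n ^ (1 + chainExponent η 0)) :
    #(popularSub (D 0) (n ^ (1 - chainExponent η 0))) ≤ n ^ (2 / 5 : ℝ) := by
  by_contra! hpop
  have hn0 : 0 < n := by positivity
  have hn1 : 1 < n := hn.lt_of_ne fun h => by norm_num [← h] at hnη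
  have hη1 : η ≤ 1 := by linarith
  obtain ⟨j, hj, L, hL, hLL, hcard, hcard0⟩ :=
    exists_popularSub_chain hD hn hη (by linarith) hnη hD0 hDcard
  have hexp : chainExponent η j ≤ chainExponent η (j + 1) := by
    nlinarith [mul_chainExponent hj, chainExponent_pos hη (j + 1)]
  have hLn : #L ≤ n * (n ^ η) ^ 3 := (Nat.cast_le.2 (card_le_card hL)).trans
    (card_popularSub_rpow_chainExponent_le hn hη.le hη1 (hDcard j hj.le) j)
  have hqL : (n ^ η) ^ 600000 ≤ #L := by
    refine le_of_mul_le_mul_left ?_ (pow_pos (Real.rpow_pos_of_pos hn0 η) 2)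
    calc (n ^ η) ^ 2 * (n ^ η) ^ 600000 = n ^ (η * (600002 : ℕ)) := by
          rw [← pow_add, Real.rpow_mul_natCast hn0.le]
      _ ≤ n ^ (2 / 5 : ℝ) := Real.rpow_le_rpow_of_exponent_le hn (by
          push_cast
          linarith)
      _ ≤ (n ^ η) ^ 2 * #L := hpop.le.trans hcard0
  have hnε : n * (n ^ η) ^ 600000 < n ^ (1 + ε) := by
    rw [← Real.rpow_mul_natCast hn0.le, ← Real.rpow_one_add' hn0.le (by positivity)]
    refine Real.rpow_lt_rpow_of_exponent_lt hn1 ?_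
    push_cast
    linarith
  have hΓ4 := card_pow_four_le_mul_pow hnη hn0.le
    (fun γ hγ => (smul_finset_subset_smul_finset hL).trans
      (smul_popularSub_subset (hΓD γ hγ j) (by positivity) (by gcongr)))
    hLL hcard hLn hqL (hnε.trans_le hp)
  refine (hΓ4.trans_lt hnε).not_ge ?_
  calc n ^ (1 + ε) ≤ n ^ (7 / 20 * (4 : ℕ) : ℝ) := Real.rpow_le_rpow_of_exponent_le hn (by
        push_cast
        linarith)
    _ ≤ (#Γ : ℝ) ^ 4 := by
        rw [Real.rpow_mul_natCast hn0.le]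
        gcongr

end PrimeField

section Sidon

variable {K : ℕ}

lemma isAddSidon_of_forall_card_inter_vadd_le {G : Type*} [AddGroup G] [DecidableEq G]
    {S : Finset G} (hS : ∀ u : G, u ≠ 0 → #(S ∩ (u +ᵥ S)) ≤ K) : IsAddSidon K S := by
  refine fun u hu => Nat.cast_le.2 (le_trans ?_ (hS u hu))
  rw [subPairCount, ← Set.ncard_coe_finset]
  refine Set.ncard_le_ncard_of_injOn Prod.fst ?_ ?_ (Finset.finite_toSet _)
  · rintro ⟨x, y⟩ ⟨hx, hy, hxy⟩
    exact mem_inter.2 ⟨hx, mem_vadd_finset.2 ⟨y, hy, (eq_add_of_sub_eq hxy).symm⟩⟩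
  · rintro ⟨x, y⟩ ⟨-, -, hxy⟩ ⟨x', y'⟩ ⟨-, -, hxy'⟩ (rfl : x = x')
    exact Prod.ext rfl (sub_right_injective (hxy.trans hxy'.symm))

lemma IsAddSidon.mono {G : Type*} [AddGroup G] {S : Finset G} {K L : ℝ} (hS : IsAddSidon K S)
    (hKL : K ≤ L) : IsAddSidon L S :=
  fun u hu => (hS u hu).trans hKL

lemma isMulSidon_image_val_of_forall_card_inter_smul_le {F : Type*} [Field F] [DecidableEq F]
    {S : Finset Fˣ} (hS : ∀ u : Fˣ, u ≠ 1 → #(S ∩ u • S) ≤ K) :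
    IsMulSidon K (S.image Units.val) := by
  refine fun x hx => Nat.cast_le.2 ?_
  obtain rfl | hx0 := eq_or_ne x 0
  · suffices hempty : mulPairCount 0 (S.image Units.val) = 0 from hempty.trans_le (Nat.zero_le K)
    refine (congrArg _ (Set.eq_empty_iff_forall_notMem.2 ?_)).trans (Set.ncard_empty (F × F))
    rintro ⟨_, y⟩ ⟨ha, -, hay⟩
    obtain ⟨a, -, rfl⟩ := mem_image.1 ha
    exact a.ne_zero (hay.trans (zero_mul y))
  lift x to Fˣ using hx0.isUnit
  refine le_trans ?_ (hS x (by simpa using hx))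
  rw [mulPairCount, ← card_image_of_injective _ Units.val_injective, ← Set.ncard_coe_finset]
  refine Set.ncard_le_ncard_of_injOn Prod.fst ?_ ?_ (Finset.finite_toSet _)
  · rintro ⟨_, _⟩ ⟨ha, hb, hab⟩
    obtain ⟨a, haS, rfl⟩ := mem_image.1 ha
    obtain ⟨b, hbS, rfl⟩ := mem_image.1 hb
    exact mem_image_of_mem _
      (mem_inter.2 ⟨haS, mem_smul_finset.2 ⟨b, hbS, (Units.ext hab).symm⟩⟩)
  · rintro ⟨a, b⟩ ⟨-, -, hab⟩ ⟨a', b'⟩ ⟨-, -, hab'⟩ (rfl : a = a')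
    exact Prod.ext rfl (mul_right_injective₀ x.ne_zero (hab.symm.trans hab'))

lemma exists_isAddSidon_rpow_le_of_card_le {G : Type*} [AddGroup G] {A : Finset G}
    {M e : ℝ} (hK : 1 ≤ K) (he : 0 < e) (hA : #A ≤ M) :
    ∃ S ⊆ A, IsAddSidon K S ∧ (#A : ℝ) ^ e ≤ M ^ e * #S := by
  classical
  have hSidon : ∀ S : Finset G, #S ≤ 1 → IsAddSidon K S := fun S hS =>
    isAddSidon_of_forall_card_inter_vadd_le fun u _ =>
      (card_le_card inter_subset_left).trans (hS.trans hK)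
  obtain rfl | ⟨a, ha⟩ := A.eq_empty_or_nonempty
  · refine ⟨∅, Subset.rfl, hSidon ∅ zero_le_one, ?_⟩
    rw [card_empty, Nat.cast_zero, Real.zero_rpow he.ne', mul_zero]
  · refine ⟨{a}, singleton_subset_iff.2 ha, hSidon {a} (card_singleton a).le, ?_⟩
    rw [card_singleton, Nat.cast_one, mul_one]
    gcongr

lemma exists_sidon_parameters {d : ℝ} (hd : 0 < d) :
    ∃ (l : ℕ) (c : ℝ), 0 < c ∧ 1 ≤ d * l ∧ c * (4 * l + 3) ≤ 1 / 2 - 2 / 5 := by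
  obtain ⟨l, hl⟩ := exists_nat_ge (1 / d)
  refine ⟨l, 1 / (10 * (4 * l + 3)), by positivity, ?_, le_of_eq ?_⟩
  · rwa [div_le_iff₀' hd] at hl
  · field_simp
    norm_num

end Sidon

section PrimeField

variable {p : ℕ} [Fact p.Prime]

lemma exists_subset_card_popularSub_image_val_le {A : Finset (ZMod p)ˣ} {n η η' ε : ℝ}
    (hA : #A = n) (hn : 1 ≤ n) (hη : 0 < η) (hηε : 1000000 * η ≤ ε) (hε : ε ≤ 1 / 10)
    (hη' : 0 < η') (hηη' : (6 * chainLength η + 5) * η' ≤ chainExponent η 0) (hnη' : 2 ≤ n ^ η')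
    (hp : n ^ (1 + ε) ≤ p)
    (hpop : n ^ (2 / 5 : ℝ) ≤ #(popularDiv A (n ^ (1 - chainExponent η' 0)))) :
    ∃ B ⊆ A, n ^ (1 - 2 * η') ≤ #B ∧
      #(popularSub (B.image Units.val) (n ^ (1 - chainExponent η 0))) ≤ n ^ (2 / 5 : ℝ) := by
  have hn0 : 0 < n := by linarith
  have hη'5 : 5 * η' ≤ chainExponent η 0 :=
    hηη'.trans' (by gcongr; linarith [Nat.cast_nonneg (α := ℝ) (chainLength η)])
  have hη'η : 5 * η' ≤ η := hη'5.trans (chainExponent_le hη.le (by linarith) 0)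
  obtain ⟨B, hBA, Γ, hΓ1, hB, hΓ, hBΓ⟩ :=
    exists_subset_card_mul_pow_le hA hn hη' (by linarith) hnη'
  have hcard : ∀ T : Finset (ZMod p)ˣ, #(T.image Units.val) = #T :=
    fun T => card_image_of_injective T Units.val_injective
  have hΓcard : n ^ (7 / 20 : ℝ) ≤ #Γ := by
    refine le_of_mul_le_mul_left ?_ (pow_pos (Real.rpow_pos_of_pos hn0 η') 2)
    refine le_trans ?_ (hpop.trans hΓ)
    rw [← Real.rpow_mul_natCast hn0.le, ← Real.rpow_add hn0]
    exact Real.rpow_le_rpow_of_exponent_le hn (by push_cast; linarith)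
  refine ⟨B, hBA, hB, ?_⟩
  have hpopB := card_popularSub_rpow_le_of_smul_subset (Γ := Γ) (n := n)
    (D := fun j => (B * Γ ^ j).image Units.val) (η := η) (ε := ε) ?_ ?_ hn hη hηε hε ?_ hp hΓcard
    ?_ ?_
  · simpa only [pow_zero, mul_one] using hpopB
  · intro i j hij
    exact image_subset_image (mul_subset_mul_left (pow_subset_pow_right hΓ1 hij))
  · refine fun γ hγ j => image_subset_iff.2 (forall_mem_image.2 fun x hx => ?_)
    refine mem_image.2 ⟨x * γ, ?_, ?_⟩
    · rw [pow_succ, ← mul_assoc]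
      exact mul_mem_mul hx hγ
    · exact mul_comm (x : ZMod p) γ
  · exact hnη'.trans (Real.rpow_le_rpow_of_exponent_le hn (by linarith))
  · rw [hcard, pow_zero, mul_one]
    exact hB.trans' (Real.rpow_le_rpow_of_exponent_le hn (by linarith))
  · intro j hj
    rw [hcard]
    refine (hBΓ j).trans (Real.rpow_le_rpow_of_exponent_le hn (add_le_add_right ?_ 1))
    exact hηη'.trans' (by gcongr)

lemma exists_add_sidon_subset_units {ε : ℝ} (hε0 : 0 < ε) (hε1 : ε ≤ 1 / 10) :
    ∃ (c η : ℝ) (K : ℕ), 0 < c ∧ 0 < η ∧ ∀ (p : ℕ) [Fact p.Prime] (A : Finset (ZMod p)ˣ) (n : ℝ),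
      #A = n → 1 ≤ n → 2 ≤ n ^ η → n ^ (1 + ε) ≤ p →
      n ^ (2 / 5 : ℝ) ≤ #(popularDiv A (n ^ (1 - chainExponent η 0))) →
        ∃ S ⊆ A, IsAddSidon K (S.image Units.val) ∧ n ^ (1 / 2 + c) / 8 ≤ #S := by
  have hη : 0 < ε / 1000000 := by positivity
  have hδ := chainExponent_pos hη 0
  obtain ⟨l, c, hc, hl, hcl⟩ := exists_sidon_parameters hδ
  set J := chainLength (ε / 1000000)
  set δ := chainExponent (ε / 1000000) 0
  obtain ⟨η, hη0, hηc, hηδ⟩ : ∃ η : ℝ, 0 < η ∧ 2 * η ≤ c ∧ (6 * J + 5) * η ≤ δ := by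
    refine ⟨min (c / 2) (δ / (6 * J + 5)), by positivity, ?_, ?_⟩
    · linarith [min_le_left (c / 2) (δ / (6 * J + 5))]
    · rw [← le_div_iff₀' (by positivity)]
      exact min_le_right _ _
  refine ⟨c, η, 3 * (l + 1), hc, hη0, fun p _ A n hA hn hnη hp hpop => ?_⟩
  obtain ⟨B, hBA, hB, hpopB⟩ := exists_subset_card_popularSub_image_val_le hA hn hη
    (by linarith) hε1 hη0 hηδ hnη hp hpop
  have hcard : ∀ T : Finset (ZMod p)ˣ, #(T.image Units.val) = #T :=
    fun T => card_image_of_injective T Units.val_injective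
  obtain ⟨S', hS'B, hS', hcard'⟩ := exists_subset_rpow_le_card_of_card_popularSub_le hn
    (by norm_num) hl hcl (hcard B ▸ hB.trans' (by gcongr))
    (hcard B ▸ hA ▸ Nat.cast_le.2 (card_le_card hBA)) hpopB
  obtain ⟨S, hSB, rfl⟩ := subset_image_iff.1 hS'B
  exact ⟨S, hSB.trans hBA, isAddSidon_of_forall_card_inter_vadd_le fun u hu => (hS' u hu).le,
    hcard S ▸ hcard'⟩

lemma exists_sidon_subset_units {ε : ℝ} (hε0 : 0 < ε) (hε1 : ε ≤ 1 / 10) :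
    ∃ (c η : ℝ) (K : ℕ), 0 < c ∧ 0 < η ∧ 1 ≤ K ∧
      ∀ (p : ℕ) [Fact p.Prime] (A : Finset (ZMod p)ˣ) (n : ℝ), #A = n → 1 ≤ n → 2 ≤ n ^ η →
        n ^ (1 + ε) ≤ p → ∃ S ⊆ A,
        (IsAddSidon K (S.image Units.val) ∨ IsMulSidon K (S.image Units.val)) ∧
          n ^ (1 / 2 + c) / 8 ≤ #S := by
  obtain ⟨c, η, K, hc, hη, hadd⟩ := exists_add_sidon_subset_units hε0 hε1
  obtain ⟨l, c', hc', hl, hcl⟩ := exists_sidon_parameters (chainExponent_pos hη 0)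
  refine ⟨min c c', η, max K (3 * (l + 1)), lt_min hc hc', hη, le_max_of_le_right (by lia),
    fun p _ A n hA hn hnη hp => ?_⟩
  have hmin : ∀ {x}, min c c' ≤ x → n ^ (1 / 2 + min c c') / 8 ≤ n ^ (1 / 2 + x) / 8 :=
    fun hx => by gcongr
  obtain hpop | hpop := le_total (#(popularDiv A (n ^ (1 - chainExponent η 0))) : ℝ)
    (n ^ (2 / 5 : ℝ))
  · obtain ⟨S, hSA, hS, hcard⟩ := exists_subset_rpow_le_card_of_card_popularDiv_le hn
      (by norm_num) hl hcl (hA.symm ▸ Real.rpow_le_self_of_one_le hn (by linarith)) hA.le hpop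
    refine ⟨S, hSA, Or.inr ?_, (hmin (min_le_right c c')).trans hcard⟩
    exact isMulSidon_image_val_of_forall_card_inter_smul_le fun u hu =>
      (hS u hu).le.trans (le_max_right K _)
  · obtain ⟨S, hSA, hS, hcard⟩ := hadd p A n hA hn hnη hp hpop
    exact ⟨S, hSA, Or.inl (hS.mono (Nat.cast_le.2 (le_max_left K _))),
      (hmin (min_le_left c c')).trans hcard⟩

lemma card_le_card_preimage_val_add_one {F : Type*} [Field F] (A : Finset F) :
    #A ≤ #(A.preimage Units.val Units.val_injective.injOn) + 1 := by
  classical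
  have hsub : A ⊆ insert 0 ((A.preimage Units.val Units.val_injective.injOn).image Units.val) := by
    intro x hx
    obtain rfl | hx0 := eq_or_ne x 0
    · exact mem_insert_self _ _
    · lift x to Fˣ using hx0.isUnit
      exact mem_insert_of_mem (mem_image_of_mem _ (mem_preimage.2 hx))
  exact (card_le_card hsub).trans ((card_insert_le _ _).trans (Nat.succ_le_succ card_image_le))

lemma exists_sidon_subset {ε : ℝ} (hε0 : 0 < ε) (hε1 : ε ≤ 1 / 10) :
    ∃ (c M : ℝ) (K : ℕ), 0 < c ∧ 0 < M ∧ 1 ≤ K ∧ ∀ (p : ℕ) [Fact p.Prime] (A : Finset (ZMod p)),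
      (#A : ℝ) ^ (1 + ε) ≤ p → ∃ S ⊆ A, (IsAddSidon K S ∨ IsMulSidon K S) ∧
        (#A : ℝ) ^ (1 / 2 + c) ≤ M * #S := by
  obtain ⟨c, η, K, hc, hη, hK, hunits⟩ := exists_sidon_subset_units hε0 hε1
  set n₀ : ℝ := 2 ^ (1 / η) with hn₀
  have hn₀1 : 1 ≤ n₀ := Real.one_le_rpow one_le_two (by positivity)
  have hn₀η : n₀ ^ η = 2 := by
    rw [hn₀, ← Real.rpow_mul zero_le_two, one_div_mul_cancel hη.ne', Real.rpow_one]
  refine ⟨c, 8 * (2 * n₀) ^ (1 / 2 + c), K, hc, by positivity, hK, fun p _ A hp => ?_⟩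
  obtain hA | hA := le_or_gt (#A : ℝ) (2 * n₀)
  · obtain ⟨S, hSA, hS, hcard⟩ := exists_isAddSidon_rpow_le_of_card_le hK
      (show 0 < 1 / 2 + c by positivity) hA
    refine ⟨S, hSA, Or.inl hS, hcard.trans ?_⟩
    gcongr
    exact le_mul_of_one_le_left (by positivity) (by norm_num)
  set B := A.preimage Units.val Units.val_injective.injOn
  have hAB : (#A : ℝ) ≤ #B + 1 := mod_cast card_le_card_preimage_val_add_one A
  have hBA : B.image Units.val ⊆ A := image_subset_iff.2 fun _ hx => mem_preimage.1 hx
  have hBA' : #B ≤ #A := card_image_of_injective B Units.val_injective ▸ card_le_card hBA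
  have hn₀B : n₀ ≤ #B := by linarith
  obtain ⟨S, hSB, hS, hcard⟩ := hunits p B #B rfl (hn₀1.trans hn₀B) (hn₀η ▸ by gcongr)
    (hp.trans' (by gcongr))
  refine ⟨S.image Units.val, (image_subset_image hSB).trans hBA, hS, ?_⟩
  rw [card_image_of_injective S Units.val_injective]
  calc (#A : ℝ) ^ (1 / 2 + c) ≤ (2 * n₀ * #B) ^ (1 / 2 + c) := by
        gcongr
        nlinarith
    _ = 8 * (2 * n₀) ^ (1 / 2 + c) * (#B ^ (1 / 2 + c) / 8) := by
        rw [Real.mul_rpow (by positivity) (by positivity)]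
        ring
    _ ≤ 8 * (2 * n₀) ^ (1 / 2 + c) * #S := by gcongr

end PrimeField

end

theorem stmt12_general {θ : ℝ} (hθ : θ < 1) :
    ∃ c K c0 : ℝ, 0 < c ∧ 1 ≤ K ∧ 0 < c0 ∧
      ∀ (p : ℕ) [Fact p.Prime],
        ∀ A : Finset (ZMod p), (A.card : ℝ) ≤ (p : ℝ) ^ θ →
          ∃ S : Finset (ZMod p), S ⊆ A ∧ (IsAddSidon K S ∨ IsMulSidon K S) ∧
            c0 * (A.card : ℝ) ^ ((1 : ℝ) / 2 + c) ≤ S.card := by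
  have hε0 : 0 < min (1 / 10) (1 - θ) := lt_min (by norm_num) (sub_pos.2 hθ)
  have hεθ := min_le_right (1 / 10) (1 - θ)
  obtain ⟨c, M, K, hc, hM, hK, hSidon⟩ := exists_sidon_subset hε0 (min_le_left _ _)
  set ε := min (1 / 10) (1 - θ)
  refine ⟨c, K, M⁻¹, hc, Nat.one_le_cast.2 hK, inv_pos.2 hM, fun p hp A hA => ?_⟩
  have hp1 : (1 : ℝ) ≤ p := Nat.one_le_cast.2 hp.out.one_lt.le
  obtain ⟨S, hSA, hS, hcard⟩ := hSidon p A <| by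
    calc (A.card : ℝ) ^ (1 + ε) ≤ ((p : ℝ) ^ θ) ^ (1 + ε) := by gcongr
      _ = (p : ℝ) ^ (θ * (1 + ε)) := (Real.rpow_mul (Nat.cast_nonneg p) _ _).symm
      _ ≤ p := Real.rpow_le_self_of_one_le hp1 (by nlinarith)
  exact ⟨S, hSA, hS, (inv_mul_le_iff₀ hM).2 hcard⟩

theorem stmt12 :
    ∃ c K c0 : ℝ, 0 < c ∧ 1 ≤ K ∧ 0 < c0 ∧
      ∀ (p : ℕ) [Fact p.Prime],
        ∀ A : Finset (ZMod p), (A.card : ℝ) < Real.sqrt p →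
          ∃ S : Finset (ZMod p), S ⊆ A ∧ (IsAddSidon K S ∨ IsMulSidon K S) ∧
            c0 * (A.card : ℝ) ^ ((1 : ℝ) / 2 + c) ≤ S.card := by
  obtain ⟨c, K, c0, hc, hK, hc0, h⟩ := stmt12_general one_half_lt_one
  exact ⟨c, K, c0, hc, hK, hc0, fun p _ A hA => h p A (Real.sqrt_eq_rpow p ▸ hA.le)⟩
end

section
/- Let G be an abelian group, let B, C ⊆ G be finite nonempty sets, let A = B + C, and let k ≥ 1 be an integer. Then Sid_k(A) ≤ min{ |C|·sqrt(k·|B|) + |B|, |B|·sqrt(k·|C|) + |C| }. -/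
open scoped BigOperators Pointwise

/-- `r_{S-S}(x)`: the number of pairs `(a, a') ∈ S × S` with `a - a' = x`. -/
noncomputable def rsub {G : Type*} [AddCommGroup G] (S : Finset G) (x : G) : ℕ :=
  Set.ncard {q : G × G | q.1 ∈ S ∧ q.2 ∈ S ∧ q.1 - q.2 = x}

/-- `S` is `g`-Sidon: every nonzero `z` has at most `g` representations `x - y`
with `x, y ∈ S`. -/
def IsSidon {G : Type*} [AddCommGroup G] (g : ℕ) (S : Finset G) : Prop :=
  ∀ z : G, z ≠ 0 → rsub S z ≤ g

/-!
Fix a decomposition `s = b s + c s` with `b s ∈ B`, `c s ∈ C` for each `s ∈ S`. By Cauchy–Schwarz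
over the values of `b`, many pairs of elements of `S` have the same component in `B`. If `s ≠ t` is
such a pair, then `c s ≠ c t` and `s - t = c s - c t`, so the Sidon property allows at most `k` such
pairs `(s, t)` for each pair `(c s, c t)` of distinct elements of `C`. Hence
`#S ^ 2 ≤ #B * (#S + k * #C ^ 2)`, a quadratic inequality in `#S`.
-/

section

open Finset

section Fibers

variable {α β : Type*} [DecidableEq β] {f : α → β} {s : Finset α} {t : Finset β}

theorem card_product_filter_eq_sum_sq_card_fiber (hf : Set.MapsTo f s t) :
    #{p ∈ s ×ˢ s | f p.1 = f p.2} = ∑ b ∈ t, #{a ∈ s | f a = b} ^ 2 := by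
  have fst_mapsTo : Set.MapsTo (fun p : α × α => f p.1)
      ({p ∈ s ×ˢ s | f p.1 = f p.2} : Finset (α × α)) t := fun p hp =>
    hf (mem_product.1 (mem_filter.1 hp).1).1
  rw [card_eq_sum_card_fiberwise fst_mapsTo]
  refine sum_congr rfl fun b _ => ?_
  rw [sq, ← card_product]
  congr 1
  ext p
  simp only [mem_filter, mem_product]
  grind

theorem card_product_filter_eq_card_add_card_offDiag_filter (f : α → β) (s : Finset α) :
    #{p ∈ s ×ˢ s | f p.1 = f p.2} = #s + #{p ∈ s.offDiag | f p.1 = f p.2} := by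
  classical
  have diag_collides : ∀ p ∈ s.diag, f p.1 = f p.2 := fun p hp => by rw [(mem_diag.1 hp).2]
  rw [← diag_union_offDiag, filter_union,
    card_union_of_disjoint (disjoint_filter_filter s.disjoint_diag_offDiag),
    filter_true_of_mem diag_collides, diag_card]

theorem sq_card_le_card_mul_card_add_card_offDiag_filter (hf : Set.MapsTo f s t) :
    #s ^ 2 ≤ #t * (#s + #{p ∈ s.offDiag | f p.1 = f p.2}) :=
  calc
    #s ^ 2 = (∑ b ∈ t, #{a ∈ s | f a = b}) ^ 2 := by rw [← card_eq_sum_card_fiberwise hf]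
    _ ≤ #t * ∑ b ∈ t, #{a ∈ s | f a = b} ^ 2 := sq_sum_le_card_mul_sum_sq
    _ = #t * (#s + #{p ∈ s.offDiag | f p.1 = f p.2}) := by
      rw [← card_product_filter_eq_sum_sq_card_fiber hf,
        card_product_filter_eq_card_add_card_offDiag_filter]

end Fibers

theorem le_sqrt_add_of_sq_le_mul_add {x b c : ℝ} (hb : 0 ≤ b) (h : x ^ 2 ≤ b * x + c) :
    x ≤ √c + b := by
  obtain hxb | hbx := le_total x b
  · linarith [Real.sqrt_nonneg c]
  · have hsq : (x - b) ^ 2 ≤ c :=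
      calc
        (x - b) ^ 2 = x ^ 2 - b * x - b * (x - b) := by ring
        _ ≤ c := by linarith [mul_nonneg hb (sub_nonneg.2 hbx)]
    linarith [Real.le_sqrt_of_sq_le hsq]

section Sidon

variable {G : Type*} [AddCommGroup G] {k : ℕ} {B C S : Finset G}

theorem rsub_eq_card_filter [DecidableEq G] (S : Finset G) (z : G) :
    rsub S z = #{p ∈ S ×ˢ S | p.1 - p.2 = z} := by
  rw [rsub, ← Set.ncard_coe_finset]
  congr 1
  ext p
  simp [and_assoc]

namespace IsSidon

theorem card_le_mul_card_of_sub_eq_sub (hS : IsSidon k S) {P T : Finset (G × G)}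
    (hP : P ⊆ S ×ˢ S) (hT : ∀ q ∈ T, q.1 ≠ q.2) {φ : G × G → G × G} (hφ : Set.MapsTo φ P T)
    (hsub : ∀ p ∈ P, p.1 - p.2 = (φ p).1 - (φ p).2) : #P ≤ k * #T := by
  classical
  refine card_le_mul_card_image_of_maps_to hφ k fun q hq => ?_
  have fiber_subset : {p ∈ P | φ p = q} ⊆ {p ∈ S ×ˢ S | p.1 - p.2 = q.1 - q.2} := by
    intro p hp
    obtain ⟨hpP, rfl⟩ := mem_filter.1 hp
    exact mem_filter.2 ⟨hP hpP, hsub p hpP⟩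
  calc
    #{p ∈ P | φ p = q} ≤ rsub S (q.1 - q.2) := by
      rw [rsub_eq_card_filter]
      exact card_le_card fiber_subset
    _ ≤ k := hS _ (sub_ne_zero.2 (hT q hq))

theorem card_offDiag_filter_le [DecidableEq G] (hS : IsSidon k S) {f : G → G}
    (hf : ∀ s ∈ S, s - f s ∈ C) :
    #{p ∈ S.offDiag | f p.1 = f p.2} ≤ k * #C.offDiag := by
  have collisions_subset : {p ∈ S.offDiag | f p.1 = f p.2} ⊆ S ×ˢ S := fun p hp => by
    obtain ⟨h₁, h₂, -⟩ := mem_offDiag.1 (mem_filter.1 hp).1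
    exact mem_product.2 ⟨h₁, h₂⟩
  refine hS.card_le_mul_card_of_sub_eq_sub (φ := fun p => (p.1 - f p.1, p.2 - f p.2))
    collisions_subset (fun q hq => (mem_offDiag.1 hq).2.2) ?mapsTo ?sub_eq_sub
  case mapsTo =>
    intro p hp
    obtain ⟨hp, heq⟩ := mem_filter.1 hp
    obtain ⟨h₁, h₂, hne⟩ := mem_offDiag.1 hp
    refine mem_offDiag.2 ⟨hf _ h₁, hf _ h₂, ?_⟩
    simpa only [heq, ne_eq, sub_left_inj] using hne
  case sub_eq_sub =>
    intro p hp
    simp only [(mem_filter.1 hp).2, sub_sub_sub_cancel_right]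

theorem sq_card_le_of_subset_add [DecidableEq G] (hS : IsSidon k S) (hSBC : S ⊆ B + C) :
    #S ^ 2 ≤ #B * (#S + k * #C ^ 2) := by
  choose! b hb c hc hbc using fun s (hs : s ∈ S) => mem_add.1 (hSBC hs)
  have sub_mem : ∀ s ∈ S, s - b s ∈ C := fun s hs => by
    rw [← eq_sub_of_add_eq' (hbc s hs)]
    exact hc s hs
  calc
    #S ^ 2 ≤ #B * (#S + #{p ∈ S.offDiag | b p.1 = b p.2}) :=
      sq_card_le_card_mul_card_add_card_offDiag_filter hb
    _ ≤ #B * (#S + k * #C.offDiag) := by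
      gcongr
      exact hS.card_offDiag_filter_le sub_mem
    _ ≤ #B * (#S + k * #C ^ 2) := by
      gcongr
      rw [offDiag_card, sq]
      exact Nat.sub_le _ _

theorem card_le_of_subset_add [DecidableEq G] (hS : IsSidon k S) (hSBC : S ⊆ B + C) :
    (#S : ℝ) ≤ #C * √(k * #B) + #B := by
  have hsq : (#S : ℝ) ^ 2 ≤ #B * #S + #C ^ 2 * (k * #B) := by
    have h : (#S : ℝ) ^ 2 ≤ #B * (#S + k * #C ^ 2) := mod_cast hS.sq_card_le_of_subset_add hSBC
    linarith
  calc
    (#S : ℝ) ≤ √(#C ^ 2 * (k * #B)) + #B := le_sqrt_add_of_sq_le_mul_add (Nat.cast_nonneg _) hsq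
    _ = #C * √(k * #B) + #B := by
      rw [Real.sqrt_mul (sq_nonneg _), Real.sqrt_sq (Nat.cast_nonneg _)]

end IsSidon

end Sidon

end

theorem stmt14 {G : Type*} [AddCommGroup G] [DecidableEq G]
    (B C : Finset G) (hB : B.Nonempty) (hC : C.Nonempty)
    (A : Finset G) (hA : A = B + C) (k : ℕ) (hk : 1 ≤ k)
    (S : Finset G) (hS : S ⊆ A) (hSid : IsSidon k S) :
    (S.card : ℝ) ≤
      min ((C.card : ℝ) * Real.sqrt ((k : ℝ) * B.card) + B.card)
        ((B.card : ℝ) * Real.sqrt ((k : ℝ) * C.card) + C.card) := by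
  subst hA
  exact le_min (hSid.card_le_of_subset_add hS) (hSid.card_le_of_subset_add (add_comm B C ▸ hS))
end

section
/- Let G be a group, let k ≥ 2 be an even integer, and let f_1, …, f_{2k} : G → ℝ_{≥0} be finitely supported nonnegative functions. Then T_k(f_1, …, f_{2k})^{2k} ≤ Π_{j=1}^{2k} T_k(f_j, …, f_j). -/
open scoped BigOperators

/-- Alternating product `g 0 * (g 1)⁻¹ * g 2 * (g 3)⁻¹ * ⋯` of a tuple in a group. -/
def altp {G : Type*} [Group G] (m : ℕ) (g : Fin m → G) : G :=
  (((List.finRange m).map (fun i : Fin m => if (i : ℕ) % 2 = 0 then g i else (g i)⁻¹)).prod)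

/-- `Tfun k F` is the sum of `Π_j F j (a_j)` over all `2k`-tuples `a ∈ G^{2k}` with
`a_1 a_2⁻¹ ⋯ a_{k-1} a_k⁻¹ = a_{k+1} a_{k+2}⁻¹ ⋯ a_{2k-1} a_{2k}⁻¹` (for even `k`). -/
noncomputable def Tfun {G : Type*} [Group G] (k : ℕ) (F : Fin (2 * k) → G → ℝ) : ℝ :=
  ∑' a : {a : Fin (2 * k) → G //
      altp k (fun i : Fin k => a ⟨i.val, by have := i.isLt; omega⟩) =
        altp k (fun i : Fin k => a ⟨k + i.val, by have := i.isLt; omega⟩)},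
    ∏ j : Fin (2 * k), F j (a.val j)

/-
View finitely supported functions as elements of the real group algebra and let `τ` be the
coefficient at `1`, a positive trace. Then `T_k` is `τ (w * star w')` for two alternating words
`x₁ x₂* x₃ ⋯` of length `k`. By Cauchy–Schwarz, the square of the trace of a cyclic word of length
`2k`, cut into two halves, is at most the product of the traces of the two words obtained by
reflecting one half. Give each letter `x` the weight `τ ((x x*)^k)` and divide the `2k`-th power of
the trace of a word by the product of the weights of its letters. Among the words in finitely many
letters, those maximising this quotient are stable under rotations and reflections, which lead to
an alternating word `x x* x x* ⋯`, where the quotient is at most `1`. Letters of weight `0` are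
covered by adding `ε > 0` to every weight and letting `ε → 0`.
-/

section Words

variable {α : Type*} {σ : α → α} {n : ℕ}

lemma iterate_append_reverse_map_iterate (hσ : Function.Involutive σ) (a : α) (n : ℕ) :
    List.iterate σ a n ++ ((List.iterate σ a n).map σ).reverse = List.iterate σ a (2 * n) := by
  induction n generalizing a with
  | zero => rfl
  | succ n ih =>
    have hlast : List.iterate σ a (2 * n + 1 + 1) = List.iterate σ a (2 * n + 1) ++ [σ a] := by
      rw [List.iterate_add, hσ.iterate_odd (odd_two_mul_add_one n)]
      rfl
    rw [mul_add_one, hlast, List.iterate, List.iterate, ← ih (σ a)]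
    simp

lemma map_iterate_eq_replicate {β : Type*} {f : α → β} (hf : ∀ a, f (σ a) = f a) (a : α) (n : ℕ) :
    (List.iterate σ a n).map f = List.replicate n (f a) := by
  induction n generalizing a with
  | zero => rfl
  | succ n ih => rw [List.iterate, List.map_cons, ih, hf, List.replicate_succ]

-- Rotate a word starting with an alternating block of length `r` so that the block ends at the
-- midpoint; reflecting in the midpoint then doubles the block.
lemma exists_iterate_prefix_of_rotate_of_reflect (hσ : Function.Involutive σ) {P : List α → Prop}
    (hlen : ∀ l, P l → l.length = 2 * n) (hrot : ∀ l m, P (l ++ m) → P (m ++ l))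
    (hrefl : ∀ l m, l.length = n → m.length = n → P (l ++ m) → P (l ++ (l.map σ).reverse))
    {l : List α} (hl : P l) {r : ℕ} (hr : 1 ≤ r) (hrn : r ≤ n) :
    ∃ a t, P (List.iterate σ a r ++ t) := by
  induction r, hr using Nat.le_induction with
  | base =>
    obtain ⟨a, t, rfl⟩ := List.exists_cons_of_length_pos (l := l) (by rw [hlen l hl]; lia)
    exact ⟨a, t, hl⟩
  | succ r hr ih =>
    obtain ⟨a, t, ht⟩ := ih (by lia)
    obtain ⟨m, p, rfl, hm⟩ : ∃ m p, t = m ++ p ∧ m.length = n := by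
      have htlen := hlen _ ht
      simp only [List.length_append, List.length_iterate] at htlen
      exact ⟨t.take n, t.drop n, (List.take_append_drop n t).symm, by simp; lia⟩
    have hp : (p ++ List.iterate σ a r).length = n := by
      have := hlen _ ht
      simp only [List.length_append, List.length_iterate] at this ⊢
      lia
    have hmid : P ((p ++ List.iterate σ a r) ++ m) := by
      simpa using hrot (List.iterate σ a r ++ m) p (by simpa using ht)
    have hdouble : P (List.iterate σ a (2 * r) ++ ((p.map σ).reverse ++ p)) := by
      have hreflected := hrefl _ _ hp hm hmid
      rw [List.append_assoc] at hreflected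
      rw [← iterate_append_reverse_map_iterate hσ]
      simpa using hrot p _ hreflected
    obtain ⟨s, hs⟩ : ∃ s, 2 * r = r + 1 + s := ⟨r - 1, by lia⟩
    rw [hs, List.iterate_add, List.append_assoc] at hdouble
    exact ⟨a, _, hdouble⟩

lemma exists_iterate_of_rotate_of_reflect (hσ : Function.Involutive σ) {P : List α → Prop}
    (hn : n ≠ 0) (hlen : ∀ l, P l → l.length = 2 * n) (hrot : ∀ l m, P (l ++ m) → P (m ++ l))
    (hrefl : ∀ l m, l.length = n → m.length = n → P (l ++ m) → P (l ++ (l.map σ).reverse))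
    {l : List α} (hl : P l) : ∃ a, P (List.iterate σ a (2 * n)) := by
  obtain ⟨a, t, ht⟩ := exists_iterate_prefix_of_rotate_of_reflect hσ hlen hrot hrefl hl
    (Nat.one_le_iff_ne_zero.mpr hn) le_rfl
  have htn : t.length = n := by
    have := hlen _ ht
    simp only [List.length_append, List.length_iterate] at this
    lia
  refine ⟨a, ?_⟩
  rw [← iterate_append_reverse_map_iterate hσ]
  exact hrefl _ t (List.length_iterate σ a n) htn ht

lemma finite_setOf_length_eq_and_forall_mem {s : Set α} (hs : s.Finite) (n : ℕ) :
    {l : List α | l.length = n ∧ ∀ a ∈ l, a ∈ s}.Finite := by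
  have := hs.to_subtype
  refine ((List.finite_length_eq s n).image (List.map (↑))).subset ?_
  rintro l ⟨hlen, hmem⟩
  lift l to List s using hmem
  exact ⟨l, by simpa using hlen, rfl⟩

theorem chessboard_estimate (hσ : Function.Involutive σ) {s : Set α} (hs : s.Finite)
    (hσs : Set.MapsTo σ s s) (hn : n ≠ 0) {W : List α → ℝ} (hnonneg : ∀ l, 0 ≤ W l)
    (hrot : ∀ l m, W (l ++ m) = W (m ++ l))
    (hrefl : ∀ l m, l.length = n → m.length = n →
      W (l ++ m) ^ 2 ≤ W (l ++ (l.map σ).reverse) * W ((m.map σ).reverse ++ m))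
    (halt : ∀ a, W (List.iterate σ a (2 * n)) ≤ 1)
    {l : List α} (hl : l.length = 2 * n) (hls : ∀ a ∈ l, a ∈ s) : W l ≤ 1 := by
  set words : Set (List α) := {l | l.length = 2 * n ∧ ∀ a ∈ l, a ∈ s}
  obtain ⟨w, hw, hmax⟩ := words.exists_max_image W
    (finite_setOf_length_eq_and_forall_mem hs (2 * n)) ⟨l, hl, hls⟩
  refine (hmax l ⟨hl, hls⟩).trans ?_
  have hrefl_max (l m : List α) (hln : l.length = n) (hmn : m.length = n)
      (hlm : l ++ m ∈ words ∧ W (l ++ m) = W w) :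
      l ++ (l.map σ).reverse ∈ words ∧ W (l ++ (l.map σ).reverse) = W w := by
    obtain ⟨⟨-, hmem⟩, hW⟩ := hlm
    have hl' : l ++ (l.map σ).reverse ∈ words := by
      refine ⟨by simp; lia, ?_⟩
      simp only [List.mem_append, List.mem_reverse, List.mem_map] at hmem ⊢
      rintro _ (ha | ⟨a, ha, rfl⟩)
      exacts [hmem _ (.inl ha), hσs (hmem _ (.inl ha))]
    have hm' : (m.map σ).reverse ++ m ∈ words := by
      refine ⟨by simp; lia, ?_⟩
      simp only [List.mem_append, List.mem_reverse, List.mem_map] at hmem ⊢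
      rintro _ (⟨a, ha, rfl⟩ | ha)
      exacts [hσs (hmem _ (.inr ha)), hmem _ (.inr ha)]
    have hsq := hrefl l m hln hmn
    rw [hW] at hsq
    refine ⟨hl', (hmax _ hl').antisymm ?_⟩
    nlinarith [hmax _ hl', hmax _ hm', hnonneg w, hnonneg (l ++ (l.map σ).reverse)]
  obtain ⟨a, -, ha⟩ := exists_iterate_of_rotate_of_reflect hσ
    (P := fun l ↦ l ∈ words ∧ W l = W w) hn (fun l hl ↦ hl.1.1)
    (fun l m ⟨⟨hlen, hmem⟩, hW⟩ ↦
      ⟨⟨by simpa [add_comm] using hlen, by simpa [or_comm] using hmem⟩, hrot l m ▸ hW⟩)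
    hrefl_max ⟨hw, rfl⟩
  exact ha ▸ halt a

end Words

section StarMul

/-- The word `x 0, star (x 1), x 2, star (x 3), …`, whose product is the analogue of `altp` with
`star` in place of inversion. -/
def altWord {R : Type*} [Star R] {n : ℕ} (x : Fin n → R) : List R :=
  List.ofFn fun i ↦ star^[i] (x i)

lemma altWord_const {R : Type*} [Star R] (x : R) (n : ℕ) :
    altWord (fun _ : Fin n ↦ x) = List.iterate star x n := by
  apply List.ext_getElem <;> simp [altWord]

variable {R : Type*} [Monoid R] [StarMul R]

lemma star_list_prod_eq (l : List R) : star l.prod = (l.map star).reverse.prod := by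
  induction l with
  | nil => simp
  | cons a l ih => simp [ih]

lemma prod_iterate_star (x : R) (n : ℕ) :
    (List.iterate star x (2 * n)).prod = (x * star x) ^ n := by
  induction n with
  | zero => simp
  | succ n ih => simp [mul_add_one, pow_succ', List.iterate, ih, mul_assoc]

lemma prod_altWord_const_mul_star (x : R) (n : ℕ) :
    (altWord fun _ : Fin n ↦ x).prod * star (altWord fun _ : Fin n ↦ x).prod =
      (x * star x) ^ n := by
  rw [altWord_const, star_list_prod_eq, ← List.prod_append,
    iterate_append_reverse_map_iterate star_involutive, prod_iterate_star]

end StarMul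

/-- A positive trace on a real star algebra: a star-invariant linear functional `τ` with
`τ (x * y) = τ (y * x)` and `0 ≤ τ (x * star x)`. -/
structure IsPositiveTrace {R : Type*} [Ring R] [StarRing R] [Algebra ℝ R]
    (τ : R →ₗ[ℝ] ℝ) : Prop where
  map_mul_comm (x y : R) : τ (x * y) = τ (y * x)
  map_star (x : R) : τ (star x) = τ x
  map_mul_star_nonneg (x : R) : 0 ≤ τ (x * star x)

namespace IsPositiveTrace

variable {R : Type*} [Ring R] [StarRing R] [Algebra ℝ R] {τ : R →ₗ[ℝ] ℝ}

lemma sq_map_mul_le [StarModule ℝ R] (hτ : IsPositiveTrace τ) (x y : R) :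
    τ (x * y) ^ 2 ≤ τ (x * star x) * τ (star y * y) := by
  let B : LinearMap.BilinForm ℝ R := LinearMap.mk₂ ℝ (fun x y ↦ τ (x * star y))
    (by simp [add_mul]) (by simp) (by simp [mul_add]) (by simp)
  have hsymm : LinearMap.IsSymm B := ⟨fun x y ↦ by simpa [B] using (hτ.map_star (x * star y)).symm⟩
  simpa [B] using B.apply_sq_le_of_symm hτ.map_mul_star_nonneg hsymm x (star y)

lemma map_mul_pow_comm (hτ : IsPositiveTrace τ) (x y : R) (n : ℕ) :
    τ ((x * y) ^ n) = τ ((y * x) ^ n) := by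
  cases n with
  | zero => simp
  | succ n =>
    rw [pow_succ, ← mul_assoc, mul_pow_mul, hτ.map_mul_comm, ← mul_assoc, pow_succ']

lemma map_mul_star_pow_nonneg (hτ : IsPositiveTrace τ) (x : R) (n : ℕ) :
    0 ≤ τ ((x * star x) ^ n) :=
  prod_altWord_const_mul_star x n ▸ hτ.map_mul_star_nonneg _

lemma pow_map_prod_le_of_pos [StarModule ℝ R] (hτ : IsPositiveTrace τ) {k : ℕ} {c : R → ℝ}
    (hc : ∀ x, 0 < c x) (hc_star : ∀ x, c (star x) = c x)
    (hτc : ∀ x, τ ((x * star x) ^ k) ≤ c x) {l : List R} (hl : l.length = 2 * k) :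
    τ l.prod ^ (2 * k) ≤ (l.map c).prod := by
  rcases eq_or_ne k 0 with rfl | hk
  · simp [List.length_eq_zero_iff.mp hl]
  have hprod (m : List R) : 0 < (m.map c).prod := List.prod_pos (by simpa using fun x _ ↦ hc x)
  have hprod_refl (m : List R) : ((m.map star).reverse.map c).prod = (m.map c).prod := by
    simp [List.prod_reverse, Function.comp_def, hc_star]
  refine (div_le_one (hprod l)).mp ?_
  refine chessboard_estimate (W := fun m ↦ τ m.prod ^ (2 * k) / (m.map c).prod) (n := k)
    (s := {x | x ∈ l} ∪ star '' {x | x ∈ l}) star_involutive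
    (l.finite_toSet.union (l.finite_toSet.image _)) ?_ hk
    (fun m ↦ div_nonneg ((even_two_mul k).pow_nonneg _) (hprod m).le) ?_ ?_ ?_ hl
    (fun x hx ↦ .inl hx)
  · rintro _ (hx | ⟨x, hx, rfl⟩)
    · exact .inr ⟨_, hx, rfl⟩
    · exact .inl (by simpa using hx)
  · intro m m'
    simp [hτ.map_mul_comm m.prod, mul_comm (m.map c).prod]
  · intro m m' _ _
    simp only [List.map_append, List.prod_append, hprod_refl, ← star_list_prod_eq]
    rw [div_pow, div_mul_div_comm, ← mul_pow, pow_right_comm, mul_mul_mul_comm, ← sq]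
    gcongr
    exact hτ.sq_map_mul_le _ _
  · intro x
    rw [prod_iterate_star, map_iterate_eq_replicate hc_star, List.prod_replicate]
    exact div_le_one_of_le₀ (pow_le_pow_left₀ (hτ.map_mul_star_pow_nonneg x k) (hτc x) _)
      (pow_nonneg (hc x).le _)

theorem pow_map_prod_le [StarModule ℝ R] (hτ : IsPositiveTrace τ) {k : ℕ} {l : List R}
    (hl : l.length = 2 * k) :
    τ l.prod ^ (2 * k) ≤ (l.map fun x ↦ τ ((x * star x) ^ k)).prod := by
  have hε (ε : ℝ) (hε : 0 < ε) :
      τ l.prod ^ (2 * k) ≤ (l.map fun x ↦ τ ((x * star x) ^ k) + ε).prod :=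
    hτ.pow_map_prod_le_of_pos (fun x ↦ add_pos_of_nonneg_of_pos (hτ.map_mul_star_pow_nonneg x k) hε)
      (fun x ↦ by rw [star_star, hτ.map_mul_pow_comm]) (fun x ↦ le_add_of_nonneg_right hε.le) hl
  have hcont : Continuous fun ε : ℝ ↦ (l.map fun x ↦ τ ((x * star x) ^ k) + ε).prod :=
    continuous_list_prod l fun x _ ↦ by fun_prop
  have hlim := (hcont.tendsto 0).mono_left (nhdsWithin_le_nhds (s := Set.Ioi 0))
  simp only [add_zero] at hlim
  exact ge_of_tendsto hlim (Filter.eventually_of_mem self_mem_nhdsWithin hε)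

theorem pow_map_prod_altWord_le [StarModule ℝ R] (hτ : IsPositiveTrace τ) {k : ℕ}
    (x y : Fin k → R) :
    τ ((altWord x).prod * star (altWord y).prod) ^ (2 * k) ≤
      (∏ i, τ ((x i * star (x i)) ^ k)) * ∏ i, τ ((y i * star (y i)) ^ k) := by
  set N : R → ℝ := fun x ↦ τ ((x * star x) ^ k) with hN
  have hN_star (x : R) : N (star x) = N x := by
    simp only [hN, star_star, hτ.map_mul_pow_comm (star x)]
  have hword (z : Fin k → R) : ((altWord z).map N).prod = ∏ i, N (z i) := by
    rw [altWord, List.map_ofFn, List.prod_ofFn]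
    exact Fintype.prod_congr _ _ fun i ↦ by
      simpa using (Function.Semiconj.iterate_right (gb := id) hN_star i).eq (z i)
  have hword_star (z : Fin k → R) : (((altWord z).map star).reverse.map N).prod = ∏ i, N (z i) := by
    rw [List.map_reverse, List.prod_reverse, List.map_map, ← hword]
    exact congrArg (fun f ↦ ((altWord z).map f).prod) (funext hN_star)
  have hholder := hτ.pow_map_prod_le (k := k) (l := altWord x ++ ((altWord y).map star).reverse)
    (by simp [altWord, two_mul])
  rwa [List.prod_append, ← star_list_prod_eq, List.map_append, List.prod_append, hword,
    hword_star] at hholder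

end IsPositiveTrace

section GroupAlgebra

lemma prod_ofFn_single {R M : Type*} [CommSemiring R] [Monoid M] {n : ℕ}
    (g : Fin n → M) (r : Fin n → R) :
    (List.ofFn fun i ↦ MonoidAlgebra.single (g i) (r i)).prod =
      MonoidAlgebra.single (List.ofFn g).prod (∏ i, r i) := by
  induction n with
  | zero => simp [MonoidAlgebra.one_def]
  | succ n ih => simp [List.ofFn_succ, ih, Fin.prod_univ_succ]

variable {R G : Type*} [Group G]

/-- The usual involution of the group algebra, `star (∑ r_g g) = ∑ (star r_g) g⁻¹`. -/
noncomputable instance groupAlgebraStarRing [Semiring R] [StarRing R] :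
    StarRing (MonoidAlgebra R G) where
  star x := (x.map (starAddEquiv : R ≃+ R).toAddMonoidHom).mapDomain (·⁻¹)
  star_involutive x := by
    induction x using MonoidAlgebra.induction_linear with
    | zero => simp
    | add x y hx hy => simp_all [MonoidAlgebra.map_add, MonoidAlgebra.mapDomain_add]
    | single g r => simp
  star_add x y := by rw [MonoidAlgebra.map_add, MonoidAlgebra.mapDomain_add]
  star_mul x y := by
    induction x using MonoidAlgebra.induction_linear with
    | zero => simp
    | add x x' hx hx' =>
      simp_all [MonoidAlgebra.map_add, MonoidAlgebra.mapDomain_add, add_mul, mul_add]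
    | single g r =>
      induction y using MonoidAlgebra.induction_linear with
      | zero => simp
      | add y y' hy hy' =>
        simp_all [MonoidAlgebra.map_add, MonoidAlgebra.mapDomain_add, add_mul, mul_add]
      | single h s => simp

lemma star_single [Semiring R] [StarRing R] (g : G) (r : R) :
    star (MonoidAlgebra.single g r) = MonoidAlgebra.single g⁻¹ (star r) := by
  simp [star]

lemma coeff_star_apply [Semiring R] [StarRing R] (x : MonoidAlgebra R G) (g : G) :
    (star x).coeff g = star (x.coeff g⁻¹) := by
  induction x using MonoidAlgebra.induction_linear with
  | zero => simp
  | add x y hx hy => simp [hx, hy]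
  | single h r =>
    classical
    simp [star_single, Finsupp.single_apply, inv_eq_iff_eq_inv, apply_ite star]

instance groupAlgebraStarModule [CommSemiring R] [StarRing R] :
    StarModule R (MonoidAlgebra R G) where
  star_smul r x := by ext g; simp [coeff_star_apply]

/-- The canonical trace `∑ r_g g ↦ r_1` of the real group algebra. -/
noncomputable def groupAlgebraTrace (G : Type*) [Group G] : MonoidAlgebra ℝ G →ₗ[ℝ] ℝ :=
  Finsupp.lapply 1 ∘ₗ (MonoidAlgebra.coeffLinearEquiv ℝ).toLinearMap

lemma groupAlgebraTrace_apply (x : MonoidAlgebra ℝ G) : groupAlgebraTrace G x = x.coeff 1 := rfl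

lemma isPositiveTrace_groupAlgebraTrace : IsPositiveTrace (groupAlgebraTrace G) where
  map_mul_comm x y := by
    simp only [groupAlgebraTrace_apply]
    rw [MonoidAlgebra.coeff_mul_apply_left, MonoidAlgebra.coeff_mul_apply_right]
    simp [mul_comm]
  map_star x := by simp [groupAlgebraTrace_apply, coeff_star_apply]
  map_mul_star_nonneg x := by
    rw [groupAlgebraTrace_apply, MonoidAlgebra.coeff_mul_apply_left]
    exact Finset.sum_nonneg fun g _ ↦ by simp [coeff_star_apply, mul_self_nonneg]

lemma prod_altWord_single [CommSemiring R] [StarRing R] [TrivialStar R] {n : ℕ} (g : Fin n → G)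
    (r : Fin n → R) :
    (altWord fun i ↦ MonoidAlgebra.single (g i) (r i)).prod =
      MonoidAlgebra.single (altp n g) (∏ i, r i) := by
  have hletter (i : Fin n) : star^[i] (MonoidAlgebra.single (g i) (r i)) =
      MonoidAlgebra.single (if (i : ℕ) % 2 = 0 then g i else (g i)⁻¹) (r i) := by
    rcases Nat.even_or_odd i with hi | hi
    · simp [star_involutive.iterate_even hi, Nat.even_iff.mp hi]
    · simp [star_involutive.iterate_odd hi, Nat.odd_iff.mp hi, star_single]
  simp only [altWord, hletter]
  rw [prod_ofFn_single, altp, List.ofFn_eq_map]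

end GroupAlgebra

section Expansion

lemma prod_ofFn_sum {R κ : Type*} [Semiring R] {n : ℕ} (t : Fin n → Finset κ)
    (f : Fin n → κ → R) :
    (List.ofFn fun i ↦ ∑ j ∈ t i, f i j).prod =
      ∑ p ∈ Fintype.piFinset t, (List.ofFn fun i ↦ f i (p i)).prod := by
  induction n with
  | zero => simp
  | succ n ih =>
    rw [List.ofFn_succ, List.prod_cons, ih, Finset.sum_mul_sum, ← Finset.sum_product']
    refine Finset.sum_equiv (Fin.consEquiv fun _ ↦ κ) ?_ ?_
    · simp [Fin.forall_fin_succ]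
    · simp [List.ofFn_succ]

lemma prod_altWord_sum {R κ : Type*} [Semiring R] [StarRing R] {n : ℕ} (t : Fin n → Finset κ)
    (f : Fin n → κ → R) :
    (altWord fun i ↦ ∑ j ∈ t i, f i j).prod =
      ∑ p ∈ Fintype.piFinset t, (altWord fun i ↦ f i (p i)).prod := by
  have hsum (m : ℕ) (s : Finset κ) (f : κ → R) :
      star^[m] (∑ j ∈ s, f j) = ∑ j ∈ s, star^[m] (f j) := by
    rcases Nat.even_or_odd m with hm | hm
    · simp [star_involutive.iterate_even hm]
    · simp [star_involutive.iterate_odd hm]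
  simp only [altWord, hsum, prod_ofFn_sum]

end Expansion

section Halves

variable {k : ℕ}

/-- The embedding of `Fin k` as the first half of `Fin (2 * k)`. -/
def firstHalf (i : Fin k) : Fin (2 * k) := ⟨i, by lia⟩

/-- The embedding of `Fin k` as the second half of `Fin (2 * k)`. -/
def secondHalf (i : Fin k) : Fin (2 * k) := ⟨k + i, by lia⟩

lemma prod_eq_prod_firstHalf_mul_prod_secondHalf {M : Type*} [CommMonoid M] (f : Fin (2 * k) → M) :
    ∏ j, f j = (∏ i, f (firstHalf i)) * ∏ i, f (secondHalf i) := by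
  rw [← (finCongr (two_mul k).symm).prod_comp, Fin.prod_univ_add]
  rfl

/-- A tuple indexed by `Fin (2 * k)` is a pair of tuples indexed by `Fin k`. -/
def halvesEquiv (k : ℕ) (α : Type*) : (Fin k → α) × (Fin k → α) ≃ (Fin (2 * k) → α) :=
  (Fin.appendEquiv k k).trans ((finCongr (two_mul k).symm).arrowCongr (Equiv.refl α))

lemma halvesEquiv_firstHalf {α : Type*} (p : (Fin k → α) × (Fin k → α)) (i : Fin k) :
    halvesEquiv k α p (firstHalf i) = p.1 i :=
  Fin.append_left p.1 p.2 i

lemma halvesEquiv_secondHalf {α : Type*} (p : (Fin k → α) × (Fin k → α)) (i : Fin k) :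
    halvesEquiv k α p (secondHalf i) = p.2 i :=
  Fin.append_right p.1 p.2 i

end Halves

section Tfun

variable {G : Type*} [Group G] {k : ℕ}

open Classical in
lemma Tfun_eq_sum {F : Fin (2 * k) → G → ℝ} {t : Fin (2 * k) → Finset G}
    (ht : ∀ j, Function.support (F j) ⊆ t j) :
    Tfun k F = ∑ a ∈ Fintype.piFinset fun i ↦ t (firstHalf i),
      ∑ b ∈ Fintype.piFinset fun i ↦ t (secondHalf i),
        if altp k a = altp k b then
          (∏ i, F (firstHalf i) (a i)) * ∏ i, F (secondHalf i) (b i) else 0 := by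
  calc Tfun k F
    _ = ∑' a : Fin (2 * k) → G,
          if altp k (fun i ↦ a (firstHalf i)) = altp k (fun i ↦ a (secondHalf i)) then
            ∏ j, F j (a j) else 0 := by
      exact tsum_subtype {a : Fin (2 * k) → G |
          altp k (fun i ↦ a (firstHalf i)) = altp k (fun i ↦ a (secondHalf i))}
        (fun a ↦ ∏ j, F j (a j))
    _ = ∑' p : (Fin k → G) × (Fin k → G), if altp k p.1 = altp k p.2 then
          (∏ i, F (firstHalf i) (p.1 i)) * ∏ i, F (secondHalf i) (p.2 i) else 0 := by
      rw [← (halvesEquiv k G).tsum_eq]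
      simp only [prod_eq_prod_firstHalf_mul_prod_secondHalf, halvesEquiv_firstHalf,
        halvesEquiv_secondHalf]
    _ = _ := by
      rw [← Finset.sum_product']
      refine tsum_eq_sum fun p hp ↦ ?_
      contrapose! hp
      simp only [ne_eq, ite_eq_right_iff, Classical.not_imp, mul_eq_zero, not_or,
        Finset.prod_eq_zero_iff, not_exists, Finset.mem_univ, true_and] at hp
      simpa using ⟨fun i ↦ ht _ (hp.2.1 i), fun i ↦ ht _ (hp.2.2 i)⟩

theorem Tfun_eq_groupAlgebraTrace (u : Fin (2 * k) → MonoidAlgebra ℝ G) :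
    Tfun k (fun j ↦ (u j).coeff) = groupAlgebraTrace G
      ((altWord fun i ↦ u (firstHalf i)).prod * star (altWord fun i ↦ u (secondHalf i)).prod) := by
  have hexpand (v : Fin k → MonoidAlgebra ℝ G) : (altWord v).prod =
      ∑ a ∈ Fintype.piFinset fun i ↦ (v i).coeff.support,
        MonoidAlgebra.single (altp k a) (∏ i, (v i).coeff (a i)) := by
    conv_lhs => rw [← funext fun i ↦ MonoidAlgebra.sum_coeff_single (v i)]
    simp only [Finsupp.sum, prod_altWord_sum, prod_altWord_single]
  classical
  rw [Tfun_eq_sum (t := fun j ↦ (u j).coeff.support) (by simp), hexpand, hexpand]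
  simp only [star_sum, star_single, star_trivial, Finset.sum_mul_sum,
    MonoidAlgebra.single_mul_single, map_sum, groupAlgebraTrace_apply,
    MonoidAlgebra.coeff_single, Finsupp.single_apply, mul_inv_eq_one]

end Tfun

theorem stmt15_general {G : Type*} [Group G] (k : ℕ) (F : Fin (2 * k) → G → ℝ)
    (hfin : ∀ j, (Function.support (F j)).Finite) :
    Tfun k F ^ (2 * k) ≤ ∏ j : Fin (2 * k), Tfun k (fun _ => F j) := by
  obtain ⟨u, rfl⟩ : ∃ u : Fin (2 * k) → MonoidAlgebra ℝ G, F = fun j ↦ ⇑(u j).coeff :=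
    ⟨fun j ↦ .ofCoeff (Finsupp.ofSupportFinite (F j) (hfin j)), rfl⟩
  have hconst (j : Fin (2 * k)) : Tfun k (fun _ ↦ (u j).coeff) =
      groupAlgebraTrace G ((u j * star (u j)) ^ k) := by
    rw [Tfun_eq_groupAlgebraTrace fun _ ↦ u j, prod_altWord_const_mul_star]
  simp only [hconst, Tfun_eq_groupAlgebraTrace, prod_eq_prod_firstHalf_mul_prod_secondHalf]
  exact isPositiveTrace_groupAlgebraTrace.pow_map_prod_altWord_le _ _

theorem stmt15 {G : Type*} [Group G] (k : ℕ) (hk : 2 ≤ k) (hke : Even k)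
    (F : Fin (2 * k) → G → ℝ) (hnn : ∀ j x, 0 ≤ F j x)
    (hfin : ∀ j, (Function.support (F j)).Finite) :
    Tfun k F ^ (2 * k) ≤ ∏ j : Fin (2 * k), Tfun k (fun _ => F j) :=
  stmt15_general k F hfin
end

section
/- There exist absolute constants C ≥ 1 and c > 0 such that the following holds. Let G be an abelian group, A ⊆ G a finite set with |A| ≥ 2, and δ, ε ∈ (0,1] with ε ≤ δ. Then at least one of the following is true: (i) there is an integer k with 2 ≤ k ≤ C/ε such that E_k(A) ≤ |A|^{k+δ}; (ii) there exist a subset A' ⊆ A with |A'| ≥ c·|A|^{1−ε} and a finite set P ⊆ G with |P| ≥ |A|^δ / (C·(log(2|A|))^C) such that r_{A−P}(x) ≥ c·|P|·|A|^{−ε} for every x ∈ A'. -/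
open scoped BigOperators Pointwise

/-- `r_{A-P}(x)`: the number of pairs `(a, q) ∈ A × P` with `a - q = x`. -/
noncomputable def rsubAP {G : Type*} [AddCommGroup G] (A P : Finset G) (x : G) : ℕ :=
  Set.ncard {q : G × G | q.1 ∈ A ∧ q.2 ∈ P ∧ q.1 - q.2 = x}

/-- `E_k(A) = Σ_x r_{A-A}(x)^k` (the summand vanishes outside `A - A`). -/
noncomputable def Ek {G : Type*} [AddCommGroup G] [DecidableEq G]
    (k : ℕ) (A : Finset G) : ℕ :=
  ∑ x ∈ A - A, (rsubAP A A x) ^ k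

/-!
Write `N = |A|` and call `x` popular if `r_{A-A}(x) ≥ N^{1-ε} / 2`. As `Σ_x r_{A-A}(x) = N²`, the
unpopular differences contribute at most `(N^{1-ε} / 2)^{k-1} N²` to `E_k(A)`, which is at most
`N^{k+δ} / 2` once `(k - 1) ε ≥ 1 - δ`. Each popular difference contributes at most `N^k`, so if
`E_k(A) > N^{k+δ}` then the set `P` of popular differences has at least `N^δ / 2` elements. Double
counting gives `Σ_{x ∈ A} r_{A-P}(x) = Σ_{q ∈ P} r_{A-A}(q) ≥ |P| N^{1-ε} / 2`, so by averaging
`r_{A-P}` is large at many points of `A`. One threshold replaces dyadic pigeonholing, so no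
logarithm is lost.
-/

lemma half_rpow_pow_mul_sq_le {N δ ε : ℝ} (hN : 1 ≤ N) {m : ℕ} (hm : m ≠ 0)
    (hδε : 1 - δ ≤ m * ε) :
    (N ^ (1 - ε) / 2) ^ m * N ^ 2 ≤ N ^ δ / 2 * N ^ (m + 1) := by
  have hN0 : 0 < N := zero_lt_one.trans_le hN
  have hpow : (N ^ (1 - ε)) ^ m * N ^ 2 ≤ N ^ δ * N ^ (m + 1) := by
    simp only [← Real.rpow_natCast, ← Real.rpow_mul hN0.le, ← Real.rpow_add hN0]
    refine Real.rpow_le_rpow_of_exponent_le hN ?_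
    push_cast
    linarith
  calc (N ^ (1 - ε) / 2) ^ m * N ^ 2
      = (N ^ (1 - ε)) ^ m * N ^ 2 / 2 ^ m := by rw [div_pow, div_mul_eq_mul_div]
    _ ≤ N ^ δ * N ^ (m + 1) / 2 := by
        gcongr
        exact le_self_pow₀ one_le_two hm
    _ = N ^ δ / 2 * N ^ (m + 1) := by ring

lemma div_mul_log_two_mul_rpow_le {a C x : ℝ} (ha : 0 ≤ a) (hC : 2 ≤ C) (hx : 2 ≤ x) :
    a / (C * Real.log (2 * x) ^ C) ≤ a / 2 := by
  have hlog : 1 ≤ Real.log (2 * x) := by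
    rw [Real.le_log_iff_exp_le (by linarith)]
    linarith [Real.exp_one_lt_three]
  have hpow : 1 ≤ Real.log (2 * x) ^ C := Real.one_le_rpow hlog (by linarith)
  gcongr
  exact hC.trans (le_mul_of_one_le_right (by linarith) hpow)

section RepresentationCounts

open Finset

lemma sum_le_card_filter_mul_add_card_mul {α R : Type*} [Semiring R] [LinearOrder R]
    [IsOrderedRing R] (s : Finset α) {f : α → R} {M t : R} (hM : ∀ x ∈ s, f x ≤ M) (ht : 0 ≤ t) :
    ∑ x ∈ s, f x ≤ #{x ∈ s | t ≤ f x} * M + #s * t := by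
  rw [← sum_filter_add_sum_filter_not s (t ≤ f ·)]
  refine add_le_add ?_ ?_
  · rw [← nsmul_eq_mul]
    exact sum_le_card_nsmul _ _ _ fun x hx ↦ hM x (mem_filter.1 hx).1
  · calc ∑ x ∈ s with ¬ t ≤ f x, f x
        ≤ #{x ∈ s | ¬ t ≤ f x} • t :=
          sum_le_card_nsmul _ _ _ fun x hx ↦ (not_le.1 (mem_filter.1 hx).2).le
      _ ≤ #s * t := by
          rw [nsmul_eq_mul]
          gcongr
          exact filter_subset _ _

variable {G : Type*} [AddCommGroup G]

lemma rsubAP_eq_card_filter [DecidableEq G] (A P : Finset G) (x : G) :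
    rsubAP A P x = #{q ∈ P | x + q ∈ A} := by
  rw [rsubAP, ← Set.ncard_coe_finset]
  symm
  refine Set.ncard_congr (fun q _ ↦ (x + q, q)) ?_ ?_ ?_
  · intro q hq
    simp_all
  · intro q q' _ _ h
    exact (Prod.ext_iff.1 h).2
  · rintro ⟨a, q⟩ ⟨ha, hq, rfl⟩
    exact ⟨q, by simpa using ⟨hq, ha⟩, by simp⟩

lemma rsubAP_le_card_right (A P : Finset G) (x : G) : rsubAP A P x ≤ #P := by
  classical
  rw [rsubAP_eq_card_filter]
  exact card_filter_le _ _

lemma rsubAP_le_card_left (A P : Finset G) (x : G) : rsubAP A P x ≤ #A := by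
  classical
  rw [rsubAP_eq_card_filter]
  exact card_le_card_of_injOn (x + ·) (fun q hq ↦ (mem_filter.1 hq).2) (add_right_injective x).injOn

lemma sum_rsubAP_comm (A B P : Finset G) :
    ∑ x ∈ B, rsubAP A P x = ∑ q ∈ P, rsubAP A B q := by
  classical
  simp only [rsubAP_eq_card_filter, card_filter]
  rw [sum_comm]
  simp only [add_comm]

lemma sum_rsubAP_le_card_mul_card (A B S : Finset G) :
    ∑ x ∈ S, rsubAP A B x ≤ #A * #B := by
  rw [sum_rsubAP_comm, mul_comm]
  exact sum_le_card_nsmul _ _ _ fun q _ ↦ rsubAP_le_card_left A S q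

lemma mul_card_le_card_filter_rsubAP {A B P : Finset G} (hP : P.Nonempty) {t : ℝ} (ht : 0 ≤ t)
    (h : ∀ q ∈ P, 2 * t * #B ≤ rsubAP A B q) :
    t * #B ≤ #{x ∈ B | t * #P ≤ rsubAP A P x} := by
  have hP0 : (0 : ℝ) < #P := by exact_mod_cast hP.card_pos
  have lower : #P * (2 * t * #B) ≤ ∑ x ∈ B, (rsubAP A P x : ℝ) := by
    rw [← Nat.cast_sum, sum_rsubAP_comm, Nat.cast_sum, ← nsmul_eq_mul]
    exact card_nsmul_le_sum _ _ _ h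
  have upper := sum_le_card_filter_mul_add_card_mul B (f := fun x ↦ (rsubAP A P x : ℝ))
    (fun x _ ↦ Nat.cast_le.2 (rsubAP_le_card_right A P x)) (mul_nonneg ht hP0.le)
  refine le_of_mul_le_mul_left ?_ hP0
  linarith

variable [DecidableEq G]

/-- The differences of `A` with at least `D` representations. The threshold is real so that it can
be a real power of the size of `A`. -/
noncomputable def popularDifferences (A : Finset G) (D : ℝ) : Finset G :=
  {x ∈ A - A | D ≤ rsubAP A A x}

lemma Ek_succ_le_card_popularDifferences_mul_add (A : Finset G) (m : ℕ) {D : ℝ} (hD : 0 ≤ D) :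
    (Ek (m + 1) A : ℝ) ≤ #(popularDifferences A D) * (#A : ℝ) ^ (m + 1) + D ^ m * (#A : ℝ) ^ 2 := by
  rw [Ek, Nat.cast_sum, ← sum_filter_add_sum_filter_not (A - A) (D ≤ rsubAP A A ·)]
  refine add_le_add ?_ ?_
  · rw [← nsmul_eq_mul]
    refine sum_le_card_nsmul _ _ _ fun x _ ↦ ?_
    exact_mod_cast Nat.pow_le_pow_left (rsubAP_le_card_left A A x) (m + 1)
  · set U : Finset G := {x ∈ A - A | ¬ D ≤ rsubAP A A x}
    have hU : ∑ x ∈ U, (rsubAP A A x : ℝ) ≤ (#A : ℝ) ^ 2 := by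
      rw [sq]
      exact_mod_cast sum_rsubAP_le_card_mul_card A A U
    calc ∑ x ∈ U, ((rsubAP A A x ^ (m + 1) : ℕ) : ℝ)
        ≤ ∑ x ∈ U, D ^ m * (rsubAP A A x : ℝ) := by
          refine sum_le_sum fun x hx ↦ ?_
          have hxD : (rsubAP A A x : ℝ) ≤ D := (not_le.1 (mem_filter.1 hx).2).le
          rw [Nat.cast_pow, pow_succ]
          gcongr
      _ = D ^ m * ∑ x ∈ U, (rsubAP A A x : ℝ) := (mul_sum ..).symm
      _ ≤ D ^ m * (#A : ℝ) ^ 2 := by gcongr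

lemma half_rpow_lt_card_popularDifferences {A : Finset G} (hA : A.Nonempty) {δ ε : ℝ} {m : ℕ}
    (hm : m ≠ 0) (hδε : 1 - δ ≤ m * ε)
    (hE : (#A : ℝ) ^ (((m + 1 : ℕ) : ℝ) + δ) < Ek (m + 1) A) :
    (#A : ℝ) ^ δ / 2 < #(popularDifferences A ((#A : ℝ) ^ (1 - ε) / 2)) := by
  have hN : (1 : ℝ) ≤ #A := by exact_mod_cast hA.card_pos
  have hN0 : (0 : ℝ) < #A := zero_lt_one.trans_le hN
  have split := Ek_succ_le_card_popularDifferences_mul_add A m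
    (D := (#A : ℝ) ^ (1 - ε) / 2) (by positivity)
  have unpopular := half_rpow_pow_mul_sq_le hN hm hδε
  rw [Real.rpow_add hN0, Real.rpow_natCast] at hE
  refine lt_of_mul_lt_mul_right ?_ (pow_nonneg hN0.le (m + 1))
  linarith

theorem Ek_succ_le_or_exists_rsubAP_ge {A : Finset G} (hA : A.Nonempty) {δ ε : ℝ} {m : ℕ}
    (hm : m ≠ 0) (hδε : 1 - δ ≤ m * ε) :
    (Ek (m + 1) A : ℝ) ≤ (#A : ℝ) ^ (((m + 1 : ℕ) : ℝ) + δ) ∨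
      ∃ A' ⊆ A, 1 / 4 * (#A : ℝ) ^ (1 - ε) ≤ #A' ∧ ∃ P : Finset G, (#A : ℝ) ^ δ / 2 ≤ #P ∧
        ∀ x ∈ A', 1 / 4 * #P * (#A : ℝ) ^ (-ε) ≤ rsubAP A P x := by
  refine or_iff_not_imp_left.2 fun hE ↦ ?_
  set P := popularDifferences A ((#A : ℝ) ^ (1 - ε) / 2)
  set t : ℝ := 1 / 4 * (#A : ℝ) ^ (-ε) with ht
  have hN0 : (0 : ℝ) < #A := by exact_mod_cast hA.card_pos
  have card_P : (#A : ℝ) ^ δ / 2 < #P :=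
    half_rpow_lt_card_popularDifferences hA hm hδε (not_le.1 hE)
  have hP : P.Nonempty := card_pos.1 <| by
    exact_mod_cast (by positivity : 0 ≤ (#A : ℝ) ^ δ / 2).trans_lt card_P
  have t_mul_card : t * #A = 1 / 4 * (#A : ℝ) ^ (1 - ε) := by
    rw [ht, mul_assoc, ← Real.rpow_add_one hN0.ne', neg_add_eq_sub]
  have popular : ∀ q ∈ P, 2 * t * #A ≤ rsubAP A A q := fun q hq ↦ by
    have := (mem_filter.1 hq).2
    linarith
  refine ⟨{x ∈ A | t * #P ≤ rsubAP A P x}, filter_subset _ _, ?_, P, card_P.le, fun x hx ↦ ?_⟩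
  · exact t_mul_card ▸ mul_card_le_card_filter_rsubAP hP (by positivity) popular
  · have := (mem_filter.1 hx).2
    rwa [mul_right_comm]

end RepresentationCounts

theorem stmt18_general {G : Type*} [AddCommGroup G] [DecidableEq G] {A : Finset G}
    (hA : A.Nonempty) {δ ε : ℝ} (hδ : 0 ≤ δ) (hε : 0 < ε) (hε1 : ε ≤ 1) :
    (∃ k : ℕ, 2 ≤ k ∧ (k : ℝ) ≤ 3 / ε ∧ (Ek k A : ℝ) ≤ (A.card : ℝ) ^ ((k : ℝ) + δ)) ∨
      ∃ A' ⊆ A, 1 / 4 * (A.card : ℝ) ^ (1 - ε) ≤ A'.card ∧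
        ∃ P : Finset G, (A.card : ℝ) ^ δ / 2 ≤ P.card ∧
          ∀ x ∈ A', 1 / 4 * P.card * (A.card : ℝ) ^ (-ε) ≤ rsubAP A P x := by
  set m := ⌈1 / ε⌉₊
  have hm : 0 < m := Nat.ceil_pos.2 (by positivity)
  have hmε : 1 ≤ m * ε := (div_le_iff₀ hε).1 (Nat.le_ceil _)
  have hk : ((m + 1 : ℕ) : ℝ) ≤ 3 / ε := by
    have hm_lt : (m : ℝ) < 1 / ε + 1 := Nat.ceil_lt_add_one (by positivity)
    have h_one : 1 ≤ 1 / ε := one_le_one_div hε hε1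
    rw [Nat.cast_succ, ← mul_one_div]
    linarith
  exact (Ek_succ_le_or_exists_rsubAP_ge hA hm.ne' (by linarith)).imp_left
    fun hE ↦ ⟨m + 1, by lia, hk, hE⟩

theorem stmt18 :
    ∃ C c : ℝ, 1 ≤ C ∧ 0 < c ∧
      ∀ (G : Type) [AddCommGroup G] [DecidableEq G],
        ∀ A : Finset G, 2 ≤ A.card →
          ∀ δ ε : ℝ, 0 < δ → δ ≤ 1 → 0 < ε → ε ≤ δ →
            (∃ k : ℕ, 2 ≤ k ∧ (k : ℝ) ≤ C / ε ∧
              (Ek k A : ℝ) ≤ (A.card : ℝ) ^ ((k : ℝ) + δ)) ∨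
            (∃ A' : Finset G, A' ⊆ A ∧ c * (A.card : ℝ) ^ ((1 : ℝ) - ε) ≤ A'.card ∧
              ∃ P : Finset G,
                (A.card : ℝ) ^ δ / (C * Real.log (2 * A.card) ^ C) ≤ P.card ∧
                ∀ x ∈ A', c * P.card * (A.card : ℝ) ^ (-ε) ≤ (rsubAP A P x : ℝ)) := by
  refine ⟨3, 1 / 4, by norm_num, by norm_num, fun G _ _ A hA δ ε hδ hδ1 hε hεδ ↦
    (stmt18_general (Finset.card_pos.1 (by lia)) hδ.le hε (hεδ.trans hδ1)).imp_right ?_⟩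
  rintro ⟨A', hA', hcard, P, hP, h⟩
  exact ⟨A', hA', hcard, P, (div_mul_log_two_mul_rpow_le (by positivity) (by norm_num)
    (by exact_mod_cast hA)).trans hP, h⟩
end

section
/- There exist absolute constants C1, C2 > 0 with the following property. Let G be a finite directed multigraph on a vertex set V with |V| ≥ 2 in which every vertex has out-degree k and in-degree k (k ≥ 1), and which is strongly connected. Let P be the simple random walk on G (from a vertex v, move along a uniformly random outgoing edge of v), and let h(G) = min{ e(S, S^c) / (k·|S|) : S ⊆ V, 1 ≤ |S| ≤ |V|/2 }, where e(S, S^c) is the number of edges from S to V∖S. Consider the lazy chain (X_n) with transition 'stay put with probability 1/2, otherwise take one step of P', started from an arbitrary fixed X_0 ∈ V. Then for every c > 0 and every integer n ≥ c·h(G)^{−2}·log|V|, one has max_{A ⊆ V} | P(X_n ∈ A) − |A|/|V| | ≤ C1·e^{−C2·c}. -/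
open scoped BigOperators

/-- The distribution of the Markov chain after `n` steps: the `n`-fold bind of
`step` applied to the point mass at `x0`. -/
noncomputable def walkDist {S : Type*} (step : S → PMF S) (x0 : S) : ℕ → PMF S :=
  fun n => (fun μ : PMF S => μ.bind step)^[n] (PMF.pure x0)

/-!
The chain is compared with the uniform distribution in `ℓ²`. Let `P` be doubly stochastic with
conductance `h`. Cheeger's inequality gives `h ^ 2 / 2 * ∑ f ^ 2 ≤ 𝓔(f)` for every `f` of mean zero,
and by Jensen and the parallelogram identity the lazy step `(1 + P) / 2` diminishes `∑ f ^ 2` by at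
least `𝓔(f) / 2`, even though `P` need not be reversible. Hence the squared `ℓ²` distance to
uniform after `n` steps is at most `(1 - h ^ 2 / 4) ^ n ≤ exp (-h ^ 2 * n / 4)`, and Cauchy–Schwarz
turns this into a total variation bound at the price of a factor `|V|`.
-/

open Finset Matrix MeasureTheory

/-! ### Conductance -/

section Conductance

variable {V : Type*} [Fintype V] [DecidableEq V]

/-- The total weight `P(S, Sᶜ)` that a weight matrix `P` sends from `S` to its complement. -/
def cutWeight (P : Matrix V V ℝ) (S : Finset V) : ℝ :=
  ∑ x ∈ S, ∑ y ∈ Sᶜ, P x y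

/-- The conductance (bottleneck ratio) of a weight matrix with respect to the counting measure: the
least value of `P(S, Sᶜ) / |S|` over the nonempty `S` holding at most half of the vertices. When `V`
has fewer than two points no such `S` exists, and the value is the junk value `0`. -/
noncomputable def conductance (P : Matrix V V ℝ) : ℝ :=
  sInf {r : ℝ | ∃ S : Finset V, S.Nonempty ∧ 2 * #S ≤ Fintype.card V ∧ r = cutWeight P S / #S}

lemma cutWeight_nonneg {P : Matrix V V ℝ} (hP : ∀ x y, 0 ≤ P x y) (S : Finset V) :
    0 ≤ cutWeight P S :=
  sum_nonneg fun x _ => sum_nonneg fun y _ => hP x y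

lemma cutWeight_eq_sum_ite (P : Matrix V V ℝ) (S : Finset V) :
    cutWeight P S = ∑ x, ∑ y, P x y * if x ∈ S ∧ y ∉ S then 1 else 0 := by
  simp only [cutWeight, ite_and, mul_ite, mul_one, mul_zero, ← mem_compl, sum_ite_irrel,
    sum_ite_mem, univ_inter, sum_const_zero]

lemma finite_cutWeight_div_card (P : Matrix V V ℝ) :
    {r : ℝ | ∃ S : Finset V,
      S.Nonempty ∧ 2 * #S ≤ Fintype.card V ∧ r = cutWeight P S / #S}.Finite :=
  (Set.finite_range fun S : Finset V => cutWeight P S / #S).subset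
    fun _ ⟨S, _, _, hr⟩ => ⟨S, hr.symm⟩

lemma conductance_nonneg {P : Matrix V V ℝ} (hP : ∀ x y, 0 ≤ P x y) : 0 ≤ conductance P :=
  Real.sInf_nonneg fun _ ⟨S, _, _, hr⟩ =>
    hr ▸ div_nonneg (cutWeight_nonneg hP S) (Nat.cast_nonneg _)

lemma conductance_mul_card_le_cutWeight (P : Matrix V V ℝ) {S : Finset V}
    (hS : 2 * #S ≤ Fintype.card V) : conductance P * #S ≤ cutWeight P S := by
  rcases S.eq_empty_or_nonempty with rfl | hne
  · simp [cutWeight]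
  · rw [← le_div_iff₀ (Nat.cast_pos.2 hne.card_pos)]
    exact csInf_le (finite_cutWeight_div_card P).bddBelow ⟨S, hne, hS, rfl⟩

lemma exists_conductance_eq [Nontrivial V] (P : Matrix V V ℝ) :
    ∃ S : Finset V, S.Nonempty ∧ 2 * #S ≤ Fintype.card V ∧ conductance P = cutWeight P S / #S := by
  obtain ⟨v⟩ : Nonempty V := inferInstance
  have hcard : 2 * #{v} ≤ Fintype.card V := by
    simpa using Nat.succ_le_of_lt (Fintype.one_lt_card (α := V))
  have hne : {r : ℝ | ∃ S : Finset V,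
      S.Nonempty ∧ 2 * #S ≤ Fintype.card V ∧ r = cutWeight P S / #S}.Nonempty :=
    ⟨_, {v}, singleton_nonempty v, hcard, rfl⟩
  exact hne.csInf_mem (finite_cutWeight_div_card P)

lemma exists_rel_mem_notMem_of_reflTransGen {α : Type*} {r : α → α → Prop} {s : Set α} {u v : α}
    (h : Relation.ReflTransGen r u v) (hu : u ∈ s) (hv : v ∉ s) : ∃ a ∈ s, ∃ b ∉ s, r a b := by
  induction h with
  | refl => exact absurd hu hv
  | @tail b c _ hbc ih =>
    by_cases hb : b ∈ s
    · exact ⟨b, hb, c, hv, hbc⟩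
    · exact ih hb

lemma conductance_pos [Nontrivial V] {P : Matrix V V ℝ} (hP : ∀ x y, 0 ≤ P x y)
    (hconn : ∀ u v, Relation.ReflTransGen (fun a b => 0 < P a b) u v) : 0 < conductance P := by
  obtain ⟨S, ⟨u, hu⟩, hS, hcond⟩ := exists_conductance_eq P
  have hcard : 0 < #S := card_pos.2 ⟨u, hu⟩
  obtain ⟨v, hv⟩ : ∃ v, v ∉ S := by
    by_contra! hall
    rw [eq_univ_of_forall hall, card_univ] at hS hcard
    omega
  obtain ⟨a, ha, b, hb, hab⟩ :=
    exists_rel_mem_notMem_of_reflTransGen (s := (S : Set V)) (hconn u v) hu hv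
  have hcut : 0 < cutWeight P S :=
    sum_pos' (fun x _ => sum_nonneg fun y _ => hP x y)
      ⟨a, ha, sum_pos' (fun y _ => hP a y) ⟨b, mem_compl.2 hb, hab⟩⟩
  rw [hcond]
  positivity

end Conductance

/-! ### The co-area inequality -/

section Coarea

lemma integrable_indicator_Ico_one (a b : ℝ) :
    Integrable ((Set.Ico a b).indicator (1 : ℝ → ℝ)) :=
  (integrable_indicator_iff measurableSet_Ico).2 (integrableOn_const (by simp))

lemma integral_indicator_Ico_one (a b : ℝ) :
    ∫ t, (Set.Ico a b).indicator (1 : ℝ → ℝ) t = (b - a)⁺ := by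
  rw [integral_indicator_one measurableSet_Ico, Real.volume_real_Ico, posPart_def]

variable {V : Type*} [Fintype V] [DecidableEq V]

lemma conductance_mul_sum_indicator_le (P : Matrix V V ℝ) {f : V → ℝ} (hf : ∀ x, 0 ≤ f x)
    (hsupp : 2 * #{x | 0 < f x} ≤ Fintype.card V) (t : ℝ) :
    conductance P * ∑ x, (Set.Ico 0 (f x)).indicator (1 : ℝ → ℝ) t ≤
      ∑ x, ∑ y, P x y * (Set.Ico (f y) (f x)).indicator (1 : ℝ → ℝ) t := by
  rcases lt_or_ge t 0 with ht | ht
  · have hlt : ∀ x, ¬ f x ≤ t := fun x => not_le.2 (ht.trans_le (hf x))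
    simp [hlt, ht.not_ge]
  · have hS : 2 * #{x | t < f x} ≤ Fintype.card V :=
      (Nat.mul_le_mul_left 2 (card_le_card
        (monotone_filter_right _ fun x _ hx => ht.trans_lt hx))).trans hsupp
    convert conductance_mul_card_le_cutWeight P hS using 1
    · simp [Set.indicator_apply, ht]
    · simp [cutWeight_eq_sum_ite, Set.indicator_apply, and_comm]

-- Integrate the cut inequality for the level sets `{f > t}` over `t`.
lemma conductance_mul_sum_le_sum_posPart (P : Matrix V V ℝ) {f : V → ℝ} (hf : ∀ x, 0 ≤ f x)
    (hsupp : 2 * #{x | 0 < f x} ≤ Fintype.card V) :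
    conductance P * ∑ x, f x ≤ ∑ x, ∑ y, P x y * (f x - f y)⁺ := by
  have hcut : ∀ x y, Integrable fun t =>
      P x y * (Set.Ico (f y) (f x)).indicator (1 : ℝ → ℝ) t :=
    fun x y => (integrable_indicator_Ico_one _ _).const_mul _
  have hlevel : ∀ x, Integrable fun t => (Set.Ico 0 (f x)).indicator (1 : ℝ → ℝ) t :=
    fun x => integrable_indicator_Ico_one _ _
  calc conductance P * ∑ x, f x
      = ∫ t, conductance P * ∑ x, (Set.Ico 0 (f x)).indicator (1 : ℝ → ℝ) t := by
        rw [integral_const_mul, integral_finsetSum _ fun x _ => hlevel x]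
        simp only [integral_indicator_Ico_one, sub_zero, posPart_of_nonneg (hf _)]
    _ ≤ ∫ t, ∑ x, ∑ y, P x y * (Set.Ico (f y) (f x)).indicator (1 : ℝ → ℝ) t :=
        integral_mono ((integrable_finsetSum _ fun x _ => hlevel x).const_mul _)
          (integrable_finsetSum _ fun x _ => integrable_finsetSum _ fun y _ => hcut x y)
          (conductance_mul_sum_indicator_le P hf hsupp)
    _ = ∑ x, ∑ y, P x y * (f x - f y)⁺ := by
        rw [integral_finsetSum _ fun x _ => integrable_finsetSum _ fun y _ => hcut x y]
        simp_rw [integral_finsetSum _ fun y _ => hcut _ y, integral_const_mul,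
          integral_indicator_Ico_one]

end Coarea

/-! ### The Dirichlet form -/

section DirichletForm

variable {V : Type*} [Fintype V]

/-- The Dirichlet form `𝓔(f) = ½ ∑ P(x, y) (f(x) - f(y))²` of a weight matrix. -/
noncomputable def dirichletForm (P : Matrix V V ℝ) (f : V → ℝ) : ℝ :=
  1 / 2 * ∑ x, ∑ y, P x y * (f x - f y) ^ 2

lemma dirichletForm_nonneg {P : Matrix V V ℝ} (hP : ∀ x y, 0 ≤ P x y) (f : V → ℝ) :
    0 ≤ dirichletForm P f :=
  mul_nonneg (by norm_num) <|
    sum_nonneg fun x _ => sum_nonneg fun y _ => mul_nonneg (hP x y) (sq_nonneg _)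

lemma dirichletForm_sub_const (P : Matrix V V ℝ) (f : V → ℝ) (c : ℝ) :
    dirichletForm P (fun x => f x - c) = dirichletForm P f := by
  simp only [dirichletForm, sub_sub_sub_cancel_right]

lemma sq_posPart_sub_add_sq_negPart_sub_le (a b : ℝ) :
    (a⁺ - b⁺) ^ 2 + (a⁻ - b⁻) ^ 2 ≤ (a - b) ^ 2 := by
  have hdecomp : a - b = (a⁺ - b⁺) - (a⁻ - b⁻) := by
    linarith [posPart_sub_negPart a, posPart_sub_negPart b]
  have hdisj : ∀ r : ℝ, r⁺ * r⁻ = 0 := fun r => by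
    rcases le_total 0 r with hr | hr <;> simp [hr]
  have hcross : (a⁺ - b⁺) * (a⁻ - b⁻) ≤ 0 := by
    linarith [hdisj a, hdisj b, mul_nonneg (posPart_nonneg a) (negPart_nonneg b),
      mul_nonneg (posPart_nonneg b) (negPart_nonneg a)]
  rw [hdecomp, sub_sq]
  linarith

lemma dirichletForm_posPart_add_negPart_le {P : Matrix V V ℝ} (hP : ∀ x y, 0 ≤ P x y)
    (f : V → ℝ) :
    dirichletForm P (fun x => (f x)⁺) + dirichletForm P (fun x => (f x)⁻) ≤
      dirichletForm P f := by
  simp only [dirichletForm, ← mul_add, ← sum_add_distrib]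
  gcongr with x _ y _
  · exact hP x y
  · exact sq_posPart_sub_add_sq_negPart_sub_le (f x) (f y)

variable {P : Matrix V V ℝ}

lemma sum_sum_mul_fst (hrow : ∀ x, ∑ y, P x y = 1) (g : V → ℝ) :
    ∑ x, ∑ y, P x y * g x = ∑ x, g x := by
  simp only [← sum_mul, hrow, one_mul]

lemma sum_sum_mul_snd (hcol : ∀ y, ∑ x, P x y = 1) (g : V → ℝ) :
    ∑ x, ∑ y, P x y * g y = ∑ y, g y := by
  rw [sum_comm]
  simp only [← sum_mul, hcol, one_mul]

-- The antisymmetric part `∑ P x y * (g x - g y)` vanishes, as `P` preserves the counting measure.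
lemma sum_sum_mul_abs_sub (hrow : ∀ x, ∑ y, P x y = 1) (hcol : ∀ y, ∑ x, P x y = 1)
    (g : V → ℝ) :
    ∑ x, ∑ y, P x y * |g x - g y| = 2 * ∑ x, ∑ y, P x y * (g x - g y)⁺ := by
  have habs : ∀ x y, P x y * |g x - g y| =
      2 * (P x y * (g x - g y)⁺) - (P x y * g x - P x y * g y) := fun x y => by
    have h := abs_add_eq_two_nsmul_posPart (g x - g y)
    rw [two_nsmul] at h
    linear_combination P x y * h
  simp only [habs, sum_sub_distrib, ← mul_sum, sum_sum_mul_fst hrow, sum_sum_mul_snd hcol, sub_self,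
    sub_zero]

lemma sum_sum_mul_add_sq (hrow : ∀ x, ∑ y, P x y = 1) (hcol : ∀ y, ∑ x, P x y = 1)
    (f : V → ℝ) :
    ∑ x, ∑ y, P x y * (f x + f y) ^ 2 = 4 * ∑ x, f x ^ 2 - 2 * dirichletForm P f := by
  have hparallelogram : ∀ x y, P x y * (f x + f y) ^ 2 =
      2 * (P x y * f x ^ 2) + 2 * (P x y * f y ^ 2) - P x y * (f x - f y) ^ 2 :=
    fun x y => by ring
  simp only [hparallelogram, sum_sub_distrib, sum_add_distrib, ← mul_sum,
    sum_sum_mul_fst hrow fun x => f x ^ 2, sum_sum_mul_snd hcol fun y => f y ^ 2, dirichletForm]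
  ring

variable [DecidableEq V]

lemma sum_sq_vecMul_lazy_le (hP : P ∈ doublyStochastic ℝ V) (f : V → ℝ) :
    ∑ y, (f ᵥ* ((1 / 2 : ℝ) • (1 + P))) y ^ 2 ≤ ∑ x, f x ^ 2 - dirichletForm P f / 2 := by
  have hmid : ∀ y, (f ᵥ* ((1 / 2 : ℝ) • (1 + P))) y = ∑ x, P x y * ((f x + f y) / 2) := fun y =>
    calc (f ᵥ* ((1 / 2 : ℝ) • (1 + P))) y
        = (∑ x, P x y * f x + (∑ x, P x y) * f y) / 2 := by
          rw [vecMul_smul, vecMul_add, vecMul_one, sum_col_of_mem_doublyStochastic hP]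
          simp only [Pi.smul_apply, Pi.add_apply, vecMul_eq_sum, Finset.sum_apply, smul_eq_mul,
            mul_comm (P _ y)]
          ring
      _ = ∑ x, P x y * ((f x + f y) / 2) := by
          rw [sum_mul, ← sum_add_distrib, sum_div]
          exact sum_congr rfl fun x _ => by ring
  calc ∑ y, (f ᵥ* ((1 / 2 : ℝ) • (1 + P))) y ^ 2
      ≤ ∑ y, ∑ x, P x y * ((f x + f y) / 2) ^ 2 := by
        refine sum_le_sum fun y _ => (hmid y).symm ▸ ?_
        exact Real.pow_arith_mean_le_arith_mean_pow_of_even _ _ _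
          (fun x _ => nonneg_of_mem_doublyStochastic hP) (sum_col_of_mem_doublyStochastic hP y)
          even_two
    _ = 1 / 4 * ∑ x, ∑ y, P x y * (f x + f y) ^ 2 := by
        rw [sum_comm]
        simp only [mul_sum]
        exact sum_congr rfl fun x _ => sum_congr rfl fun y _ => by ring
    _ = ∑ x, f x ^ 2 - dirichletForm P f / 2 := by
        rw [sum_sum_mul_add_sq (sum_row_of_mem_doublyStochastic hP)
          (sum_col_of_mem_doublyStochastic hP)]
        ring

end DirichletForm

/-! ### Cheeger's inequality -/

section Cheeger

variable {V : Type*} [Fintype V]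

lemma sum_sq_le_sum_sub_sq {f : V → ℝ} (hf : ∑ x, f x = 0) (c : ℝ) :
    ∑ x, f x ^ 2 ≤ ∑ x, (f x - c) ^ 2 := by
  have hexpand : ∑ x, (f x - c) ^ 2 = ∑ x, f x ^ 2 + ∑ _x : V, c ^ 2 := by
    simp only [sub_sq, sum_add_distrib, sum_sub_distrib, ← mul_sum, ← sum_mul, hf]
    ring
  rw [hexpand]
  exact le_add_of_nonneg_right (sum_nonneg fun _ _ => sq_nonneg c)

lemma exists_median {α : Type*} [LinearOrder α] [Nonempty V] (f : V → α) :
    ∃ m, 2 * #{x | m < f x} ≤ Fintype.card V ∧ 2 * #{x | f x < m} ≤ Fintype.card V := by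
  let W : Finset V := {v | 2 * #{x | f v < f x} ≤ Fintype.card V}
  have hW : W.Nonempty := by
    obtain ⟨a, ha⟩ := Finite.exists_max f
    exact ⟨a, by simp [W, filter_eq_empty_iff.2 fun x _ => not_lt.2 (ha x)]⟩
  obtain ⟨a, haW, ha⟩ := W.exists_min_image f hW
  refine ⟨f a, (mem_filter.1 haW).2, ?_⟩
  by_contra! hlow
  obtain ⟨b, hb, hbmax⟩ : ∃ b ∈ ({x | f x < f a} : Finset V), ∀ x ∈ ({x | f x < f a} : Finset V),
      f x ≤ f b := exists_max_image _ f (card_pos.1 (by omega))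
  have hsub : ({x | f b < f x} : Finset V) ⊆ ({x | ¬ f x < f a} : Finset V) :=
    monotone_filter_right _ fun x _ hbx hxa =>
      (hbmax x (mem_filter.2 ⟨mem_univ x, hxa⟩)).not_gt hbx
  have hbW : b ∈ W := by
    have hsplit := card_filter_add_card_filter_not (s := univ) (fun x => f x < f a)
    have hle := card_le_card hsub
    rw [card_univ] at hsplit
    exact mem_filter.2 ⟨mem_univ b, by omega⟩
  exact (ha b hbW).not_gt (mem_filter.1 hb).2

variable [DecidableEq V] {P : Matrix V V ℝ}

lemma sq_sum_sum_mul_abs_sq_sub_sq_le (hP : P ∈ doublyStochastic ℝ V) (f : V → ℝ) :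
    (∑ x, ∑ y, P x y * |f x ^ 2 - f y ^ 2|) ^ 2 ≤
      2 * dirichletForm P f * (4 * ∑ x, f x ^ 2 - 2 * dirichletForm P f) := by
  have hnonneg : ∀ x y, 0 ≤ P x y := fun _ _ => nonneg_of_mem_doublyStochastic hP
  have hform : 2 * dirichletForm P f = ∑ z : V × V, P z.1 z.2 * (f z.1 - f z.2) ^ 2 := by
    rw [dirichletForm, ← Fintype.sum_prod_type']
    ring
  rw [← sum_sum_mul_add_sq (sum_row_of_mem_doublyStochastic hP)
    (sum_col_of_mem_doublyStochastic hP), hform, ← Fintype.sum_prod_type', ← Fintype.sum_prod_type']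
  refine sum_sq_le_sum_mul_sum_of_sq_le_mul _ (fun z _ => mul_nonneg (hnonneg _ _) (sq_nonneg _))
    (fun z _ => mul_nonneg (hnonneg _ _) (sq_nonneg _)) fun z _ => ?_
  rw [mul_pow, sq_abs]
  exact le_of_eq (by ring)

lemma sq_conductance_div_two_mul_sum_sq_le_of_nonneg (hP : P ∈ doublyStochastic ℝ V) {f : V → ℝ}
    (hf : ∀ x, 0 ≤ f x) (hsupp : 2 * #{x | 0 < f x} ≤ Fintype.card V) :
    conductance P ^ 2 / 2 * ∑ x, f x ^ 2 ≤ dirichletForm P f := by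
  have hnonneg : ∀ x y, 0 ≤ P x y := fun _ _ => nonneg_of_mem_doublyStochastic hP
  have hsq : #{x | 0 < f x ^ 2} = #{x | 0 < f x} := by
    simp only [(sq_nonneg _).lt_iff_ne', (hf _).lt_iff_ne', ne_eq, sq_eq_zero_iff]
  have hcoarea : 2 * (conductance P * ∑ x, f x ^ 2) ≤ ∑ x, ∑ y, P x y * |f x ^ 2 - f y ^ 2| := by
    rw [sum_sum_mul_abs_sub (sum_row_of_mem_doublyStochastic hP)
      (sum_col_of_mem_doublyStochastic hP) fun x => f x ^ 2]
    gcongr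
    exact conductance_mul_sum_le_sum_posPart P (fun x => sq_nonneg (f x)) (hsq ▸ hsupp)
  have hsum_nonneg : 0 ≤ ∑ x, f x ^ 2 := sum_nonneg fun x _ => sq_nonneg (f x)
  have hlhs_nonneg : 0 ≤ 2 * (conductance P * ∑ x, f x ^ 2) :=
    mul_nonneg zero_le_two (mul_nonneg (conductance_nonneg hnonneg) hsum_nonneg)
  have hsquared := (pow_le_pow_left₀ hlhs_nonneg hcoarea 2).trans
    (sq_sum_sum_mul_abs_sq_sub_sq_le hP f)
  rcases hsum_nonneg.eq_or_lt with hzero | hpos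
  · rw [← hzero, mul_zero]
    exact dirichletForm_nonneg hnonneg f
  · refine le_of_mul_le_mul_right ?_ hpos
    linarith [sq_nonneg (dirichletForm P f)]

theorem sq_conductance_div_two_mul_sum_sq_le_dirichletForm (hP : P ∈ doublyStochastic ℝ V)
    {f : V → ℝ} (hf : ∑ x, f x = 0) :
    conductance P ^ 2 / 2 * ∑ x, f x ^ 2 ≤ dirichletForm P f := by
  rcases isEmpty_or_nonempty V with _ | _
  · simp [dirichletForm]
  obtain ⟨m, habove, hbelow⟩ := exists_median f
  have hsplit : ∀ r : ℝ, r ^ 2 = r⁺ ^ 2 + r⁻ ^ 2 := fun r => by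
    rcases le_total 0 r with hr | hr <;> simp [hr]
  calc conductance P ^ 2 / 2 * ∑ x, f x ^ 2
      ≤ conductance P ^ 2 / 2 * ∑ x, (f x - m) ^ 2 := by
        exact mul_le_mul_of_nonneg_left (sum_sq_le_sum_sub_sq hf m) (by positivity)
    _ = conductance P ^ 2 / 2 * ∑ x, (f x - m)⁺ ^ 2 +
          conductance P ^ 2 / 2 * ∑ x, (f x - m)⁻ ^ 2 := by
        simp only [hsplit (f _ - m), sum_add_distrib, mul_add]
    _ ≤ dirichletForm P (fun x => (f x - m)⁺) + dirichletForm P (fun x => (f x - m)⁻) :=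
        add_le_add
          (sq_conductance_div_two_mul_sum_sq_le_of_nonneg hP (fun x => posPart_nonneg _)
            (by simpa only [posPart_pos_iff, sub_pos] using habove))
          (sq_conductance_div_two_mul_sum_sq_le_of_nonneg hP (fun x => negPart_nonneg _)
            (by simpa only [negPart_pos_iff, sub_neg] using hbelow))
    _ ≤ dirichletForm P (fun x => f x - m) :=
        dirichletForm_posPart_add_negPart_le (fun _ _ => nonneg_of_mem_doublyStochastic hP) _
    _ = dirichletForm P f := dirichletForm_sub_const P f m

lemma sum_sq_vecMul_lazy_le_of_sum_eq_zero (hP : P ∈ doublyStochastic ℝ V) {f : V → ℝ}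
    (hf : ∑ x, f x = 0) :
    ∑ y, (f ᵥ* ((1 / 2 : ℝ) • (1 + P))) y ^ 2 ≤ (1 - conductance P ^ 2 / 4) * ∑ x, f x ^ 2 := by
  linarith [sum_sq_vecMul_lazy_le hP f, sq_conductance_div_two_mul_sum_sq_le_dirichletForm hP hf]

end Cheeger

/-! ### Transition matrices and the lazy chain -/

section Transition

variable {V : Type*}

/-- The matrix `P(v, u) = P(X₁ = u | X₀ = v)` of a transition map, with real entries. -/
noncomputable def transitionMatrix (step : V → PMF V) : Matrix V V ℝ :=
  Matrix.of fun v u => (step v u).toReal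

/-- The lazy version of a transition map: a fair coin decides between staying put and moving. -/
noncomputable def lazyStep (step : V → PMF V) : V → PMF V := fun v =>
  (PMF.uniformOfFintype Bool).bind fun b => if b then PMF.pure v else step v

lemma transitionMatrix_apply (step : V → PMF V) (v u : V) :
    transitionMatrix step v u = (step v u).toReal := rfl

lemma transitionMatrix_nonneg (step : V → PMF V) (v u : V) : 0 ≤ transitionMatrix step v u :=
  ENNReal.toReal_nonneg

lemma walkDist_succ (step : V → PMF V) (X0 : V) (n : ℕ) :
    walkDist step X0 (n + 1) = (walkDist step X0 n).bind step :=
  Function.iterate_succ_apply' _ _ _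

lemma transitionMatrix_lazyStep [DecidableEq V] (step : V → PMF V) :
    transitionMatrix (lazyStep step) = (1 / 2 : ℝ) • (1 + transitionMatrix step) := by
  ext v u
  have hbind : lazyStep step v u = 2⁻¹ * PMF.pure v u + 2⁻¹ * step v u := by
    simp [lazyStep, PMF.bind_apply, tsum_fintype]
  rw [transitionMatrix_apply, hbind, ENNReal.toReal_add
    (ENNReal.mul_ne_top (by simp) (PMF.apply_ne_top _ _))
    (ENNReal.mul_ne_top (by simp) (PMF.apply_ne_top _ _))]
  simp only [ENNReal.toReal_mul, ENNReal.toReal_inv, ENNReal.toReal_ofNat, PMF.pure_apply,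
    Matrix.smul_apply, Matrix.add_apply, one_apply, transitionMatrix_apply, smul_eq_mul,
    eq_comm (a := u)]
  split_ifs <;> simp [mul_add]

variable [Fintype V]

lemma sum_toReal_pmf (p : PMF V) : ∑ x, (p x).toReal = 1 := by
  rw [← ENNReal.toReal_sum fun x _ => p.apply_ne_top x, ← tsum_fintype (L := .unconditional V),
    p.tsum_coe, ENNReal.toReal_one]

lemma toReal_bind_apply (p : PMF V) (step : V → PMF V) (y : V) :
    (p.bind step y).toReal = ((fun x => (p x).toReal) ᵥ* transitionMatrix step) y := by
  rw [PMF.bind_apply, tsum_fintype, ENNReal.toReal_sum fun x _ =>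
    ENNReal.mul_ne_top (PMF.apply_ne_top _ _) (PMF.apply_ne_top _ _)]
  simp only [ENNReal.toReal_mul, vecMul, dotProduct, transitionMatrix_apply]

lemma toReal_bind_sub_const {step : V → PMF V}
    (hstep : 1 ᵥ* transitionMatrix step = 1) (p : PMF V) (a : ℝ) :
    (fun y => (p.bind step y).toReal - a) =
      (fun x => (p x).toReal - a) ᵥ* transitionMatrix step := by
  have hsub : (fun x => (p x).toReal - a) = (fun x => (p x).toReal) - a • (1 : V → ℝ) := by
    ext x
    simp
  ext y
  rw [hsub, sub_vecMul, smul_vecMul, hstep, toReal_bind_apply]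
  simp

lemma sum_toReal_pmf_sub_inv_card (p : PMF V) :
    ∑ x, ((p x).toReal - (Fintype.card V : ℝ)⁻¹) = 0 := by
  have : Nonempty V := p.support_nonempty.nonempty
  simp [sum_sub_distrib, sum_toReal_pmf]

lemma sum_sq_toReal_pmf_sub_inv_card_le_one (p : PMF V) :
    ∑ x, ((p x).toReal - (Fintype.card V : ℝ)⁻¹) ^ 2 ≤ 1 :=
  calc ∑ x, ((p x).toReal - (Fintype.card V : ℝ)⁻¹) ^ 2
      ≤ ∑ x, ((p x).toReal - (Fintype.card V : ℝ)⁻¹ + (Fintype.card V : ℝ)⁻¹) ^ 2 := by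
        simpa only [sub_neg_eq_add] using
          sum_sq_le_sum_sub_sq (sum_toReal_pmf_sub_inv_card p) (-(Fintype.card V : ℝ)⁻¹)
    _ ≤ ∑ x, (p x).toReal := by
        simp only [sub_add_cancel]
        gcongr with x
        exact pow_le_of_le_one ENNReal.toReal_nonneg
          (ENNReal.toReal_mono ENNReal.one_ne_top (p.coe_le_one x)) two_ne_zero
    _ = 1 := sum_toReal_pmf p

lemma abs_sum_toReal_pmf_sub_le_one (p : PMF V) (A : Finset V) :
    |∑ x ∈ A, (p x).toReal - (#A : ℝ) / Fintype.card V| ≤ 1 := by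
  have hmass : ∑ x ∈ A, (p x).toReal ≤ 1 :=
    (sum_le_univ_sum_of_nonneg fun x => ENNReal.toReal_nonneg).trans_eq (sum_toReal_pmf p)
  have hdensity : (#A : ℝ) / Fintype.card V ≤ 1 :=
    div_le_one_of_le₀ (Nat.cast_le.2 (card_le_univ A)) (Nat.cast_nonneg _)
  exact abs_sub_le_of_nonneg_of_le (sum_nonneg fun x _ => ENNReal.toReal_nonneg) hmass
    (by positivity) hdensity

lemma sq_sum_toReal_pmf_sub_le (p : PMF V) (A : Finset V) :
    (∑ x ∈ A, (p x).toReal - (#A : ℝ) / Fintype.card V) ^ 2 ≤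
      Fintype.card V * ∑ x, ((p x).toReal - (Fintype.card V : ℝ)⁻¹) ^ 2 := by
  have hsum : ∑ x ∈ A, (p x).toReal - (#A : ℝ) / Fintype.card V =
      ∑ x ∈ A, ((p x).toReal - (Fintype.card V : ℝ)⁻¹) := by
    rw [sum_sub_distrib, sum_const, nsmul_eq_mul, div_eq_mul_inv]
  rw [hsum]
  refine sq_sum_le_card_mul_sum_sq.trans ?_
  gcongr
  · exact card_le_univ A
  · exact subset_univ A

variable [DecidableEq V]

lemma transitionMatrix_mem_doublyStochastic {step : V → PMF V} (hstep : ∀ u, ∑ v, step v u = 1) :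
    transitionMatrix step ∈ doublyStochastic ℝ V := by
  refine mem_doublyStochastic_iff_sum.2
    ⟨transitionMatrix_nonneg step, fun v => sum_toReal_pmf (step v), fun u => ?_⟩
  simp only [transitionMatrix_apply]
  rw [← ENNReal.toReal_sum fun v _ => PMF.apply_ne_top _ u, hstep, ENNReal.toReal_one]

lemma lazy_mem_doublyStochastic {P : Matrix V V ℝ} (hP : P ∈ doublyStochastic ℝ V) :
    (1 / 2 : ℝ) • (1 + P) ∈ doublyStochastic ℝ V := by
  rw [smul_add]
  exact convex_doublyStochastic (one_mem (doublyStochastic ℝ V)) hP (by norm_num) (by norm_num)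
    (by norm_num)

end Transition

/-! ### Mixing of the lazy chain -/

section Mixing

variable {V : Type*} [Fintype V] [DecidableEq V] {step : V → PMF V}

lemma sum_sq_walkDist_lazyStep_sub_le (hstep : ∀ u, ∑ v, step v u = 1) (X0 : V)
    (n : ℕ) :
    ∑ x, ((walkDist (lazyStep step) X0 n x).toReal - (Fintype.card V : ℝ)⁻¹) ^ 2 ≤
      Real.exp (-(conductance (transitionMatrix step) ^ 2 / 4) * n) := by
  have hP := transitionMatrix_mem_doublyStochastic hstep
  have hlazy : 1 ᵥ* transitionMatrix (lazyStep step) = 1 :=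
    transitionMatrix_lazyStep step ▸
      one_vecMul_of_mem_doublyStochastic (lazy_mem_doublyStochastic hP)
  set δ := conductance (transitionMatrix step) ^ 2 / 4
  induction n with
  | zero => simpa using sum_sq_toReal_pmf_sub_inv_card_le_one (walkDist (lazyStep step) X0 0)
  | succ n ih =>
    set μ := walkDist (lazyStep step) X0 n
    calc ∑ y, ((walkDist (lazyStep step) X0 (n + 1) y).toReal - (Fintype.card V : ℝ)⁻¹) ^ 2
        = ∑ y, ((fun x => (μ x).toReal - (Fintype.card V : ℝ)⁻¹) ᵥ*
            ((1 / 2 : ℝ) • (1 + transitionMatrix step))) y ^ 2 := by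
          rw [walkDist_succ, ← transitionMatrix_lazyStep, ← toReal_bind_sub_const hlazy]
      _ ≤ (1 - δ) * ∑ x, ((μ x).toReal - (Fintype.card V : ℝ)⁻¹) ^ 2 :=
          sum_sq_vecMul_lazy_le_of_sum_eq_zero hP (sum_toReal_pmf_sub_inv_card μ)
      _ ≤ Real.exp (-δ) * Real.exp (-δ * n) := by
          gcongr
          exact Real.one_sub_le_exp_neg δ
      _ = Real.exp (-δ * (n + 1 : ℕ)) := by
          rw [← Real.exp_add]
          push_cast
          ring_nf

-- For `c ≥ 4` the squared deviation is at most `|V| ^ ((4 - c) / 4)`, which is largest at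
-- `|V| = 2`; for `c ≤ 4` the claimed bound is at least `1`.
theorem stmt19_general [Nontrivial V] (hstep : ∀ u, ∑ v, step v u = 1) (X0 : V) {c : ℝ} {n : ℕ}
    (hn : c * Real.log (Fintype.card V) ≤ conductance (transitionMatrix step) ^ 2 * n)
    (A : Finset V) :
    |∑ x ∈ A, (walkDist (lazyStep step) X0 n x).toReal - (#A : ℝ) / Fintype.card V| ≤
      √2 * Real.exp (-(Real.log 2 / 8) * c) := by
  have hbound : √2 * Real.exp (-(Real.log 2 / 8) * c) = Real.exp ((4 - c) / 8 * Real.log 2) := by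
    rw [Real.sqrt_eq_rpow, Real.rpow_def_of_pos two_pos, ← Real.exp_add]
    ring_nf
  have hlog_two : 0 < Real.log 2 := Real.log_pos one_lt_two
  rw [hbound]
  rcases le_total c 4 with hc | hc
  · exact (abs_sum_toReal_pmf_sub_le_one _ A).trans
      (Real.one_le_exp (mul_nonneg (by linarith) hlog_two.le))
  have hcard : (2 : ℝ) ≤ Fintype.card V := mod_cast Fintype.one_lt_card (α := V)
  have hlog_card : Real.log 2 ≤ Real.log (Fintype.card V) := Real.log_le_log two_pos hcard
  refine abs_le_of_sq_le_sq ?_ (Real.exp_pos _).le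
  calc (∑ x ∈ A, (walkDist (lazyStep step) X0 n x).toReal - (#A : ℝ) / Fintype.card V) ^ 2
      ≤ Fintype.card V * Real.exp (-(conductance (transitionMatrix step) ^ 2 / 4) * n) := by
        refine (sq_sum_toReal_pmf_sub_le _ A).trans ?_
        gcongr
        exact sum_sq_walkDist_lazyStep_sub_le hstep X0 n
    _ = Real.exp (Real.log (Fintype.card V) -
          conductance (transitionMatrix step) ^ 2 * n / 4) := by
        rw [sub_eq_add_neg, Real.exp_add, Real.exp_log (two_pos.trans_le hcard)]
        ring_nf
    _ ≤ Real.exp ((4 - c) / 4 * Real.log 2) := by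
        gcongr
        linarith [mul_le_mul_of_nonneg_left hlog_card (sub_nonneg.2 hc)]
    _ = Real.exp ((4 - c) / 8 * Real.log 2) ^ 2 := by
        rw [← Real.exp_nat_mul]
        push_cast
        ring_nf

end Mixing

/-! ### Regular multigraphs -/

section RegularMultigraph

variable {V : Type*} {E : V × V → ℕ} {k : ℕ} {step : V → PMF V}

lemma transitionMatrix_apply_eq_div (hstep : ∀ v u, step v u = (E (v, u) : ENNReal) / k) (v u : V) :
    transitionMatrix step v u = (E (v, u) : ℝ) / k := by
  simp [transitionMatrix_apply, hstep]

variable [Fintype V]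

lemma sum_step_eq_one_of_regular (hk : k ≠ 0) (hin : ∀ v, ∑ u, E (u, v) = k)
    (hstep : ∀ v u, step v u = (E (v, u) : ENNReal) / k) (u : V) : ∑ v, step v u = 1 := by
  simp only [hstep, div_eq_mul_inv, ← sum_mul]
  rw [← Nat.cast_sum, hin,
    ENNReal.mul_inv_cancel (Nat.cast_ne_zero.2 hk) (ENNReal.natCast_ne_top k)]

variable [DecidableEq V]

lemma conductance_transitionMatrix_eq_sInf
    (hstep : ∀ v u, step v u = (E (v, u) : ENNReal) / k) :
    conductance (transitionMatrix step) =
      sInf {x : ℝ | ∃ S : Finset V, S.Nonempty ∧ 2 * #S ≤ Fintype.card V ∧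
        x = (∑ v ∈ S, ∑ u ∈ Sᶜ, (E (v, u) : ℝ)) / ((k : ℝ) * #S)} := by
  simp only [conductance, cutWeight, transitionMatrix_apply_eq_div hstep, ← sum_div, div_div]

lemma conductance_transitionMatrix_pos [Nontrivial V] (hk : 0 < k)
    (hconn : ∀ u v, Relation.ReflTransGen (fun a b => 0 < E (a, b)) u v)
    (hstep : ∀ v u, step v u = (E (v, u) : ENNReal) / k) :
    0 < conductance (transitionMatrix step) := by
  refine conductance_pos (transitionMatrix_nonneg step) fun u v =>
    Relation.ReflTransGen.mono (fun a b hab => ?_) _ _ (hconn u v)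
  rw [transitionMatrix_apply_eq_div hstep]
  positivity

end RegularMultigraph

theorem stmt19 :
    ∃ C1 C2 : ℝ, 0 < C1 ∧ 0 < C2 ∧
      ∀ (V : Type) [Fintype V] [DecidableEq V] [Nonempty V], 2 ≤ Fintype.card V →
        ∀ E : V × V → ℕ, ∀ k : ℕ, 1 ≤ k →
          (∀ v : V, ∑ u : V, E (v, u) = k) →
          (∀ v : V, ∑ u : V, E (u, v) = k) →
          (∀ u v : V, Relation.ReflTransGen (fun a b => 0 < E (a, b)) u v) →
          ∀ step : V → PMF V, (∀ v u : V, step v u = (E (v, u) : ENNReal) / k) →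
            ∀ hG : ℝ,
              hG = sInf {x : ℝ | ∃ S : Finset V, S.Nonempty ∧
                  2 * S.card ≤ Fintype.card V ∧
                  x = (∑ v ∈ S, ∑ u ∈ Sᶜ, (E (v, u) : ℝ)) / ((k : ℝ) * S.card)} →
              ∀ lazystep : V → PMF V,
                lazystep = (fun v => (PMF.uniformOfFintype Bool).bind
                  (fun b => if b then PMF.pure v else step v)) →
                ∀ X0 : V, ∀ c : ℝ, 0 < c →
                  ∀ n : ℕ, c / hG ^ 2 * Real.log (Fintype.card V) ≤ n →
                    ∀ A : Finset V,
                      |(∑ x ∈ A, (walkDist lazystep X0 n x).toReal)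
                          - (A.card : ℝ) / (Fintype.card V : ℝ)|
                        ≤ C1 * Real.exp (-C2 * c) := by
  refine ⟨√2, Real.log 2 / 8, by positivity, by positivity, ?_⟩
  rintro V _ _ _ hV E k hk - hin hconn step hstep _ rfl _ rfl X0 c - n hn A
  have : Nontrivial V := Fintype.one_lt_card_iff_nontrivial.1 hV
  rw [← conductance_transitionMatrix_eq_sInf hstep, div_mul_eq_mul_div,
    div_le_iff₀' (pow_pos (conductance_transitionMatrix_pos hk hconn hstep) 2)] at hn
  exact stmt19_general (sum_step_eq_one_of_regular (by omega) hin hstep) X0 hn A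
end
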